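/- arXiv:2003.07810 — 3 statements merged into one kernel-verified Lean document; each statement's English description precedes it below -/
import Mathlib

section
/- There exists n₀ ∈ ℕ such that the following holds for all n ≥ n₀. Let v_1, …, v_m ∈ ℝ^n and x ∈ [0,1]^m satisfy Σ_{i=1}^m x_i v_i v_iᵀ = I_n, let ε ∈ (0, 1/4), and let c ∈ ℝ_+^m. Then there exists z ∈ {0,1}^m such that Σ_{i=1}^m z_i v_i v_iᵀ ⪰ I_n and ⟨c, z⟩ ≤ (1 + 6ε)·⟨c, x⟩ + 15·n·c_∞/ε. (Existential form of the one-sided spectral rounding theorem.) -/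
open Matrix BigOperators

/-!
The rounding is produced by one minimization, with no randomness. Put `κ = 6ε` and
`yᵢ = min 1 ((1 + κ) xᵢ)`, and let `B = {i | yᵢ = 1}`. Every admissible set contains `B`, so
with `N = I - ∑_{i ∈ B} xᵢ vᵢ vᵢᵀ` the remaining coordinates carry `(1 + κ) N` under `y`, whereas
covering `N` is enough: this gives a slack of `κ N`.

For a barrier `L` slightly below `I` and a positive definite `D` slightly above `N`, take a set
`S ⊇ B` minimizing `c(S) + λ tr (D (Z_S - L)⁻¹)` among those with `Z_S = ∑_{i ∈ S} vᵢ vᵢᵀ ≻ L`.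
Feasibility is then automatic, and only the cost has to be bounded. Let `M = (Z_S - L)⁻¹`,
`qᵢ = vᵢᵀ M vᵢ` and `pᵢ = vᵢᵀ M D M vᵢ`. By the Sherman-Morrison formula, optimality against
inserting or deleting one element says `λ pᵢ ≤ cᵢ (1 + qᵢ)` for `i ∉ S` and
`cᵢ (1 - qᵢ) ≤ λ pᵢ` for `i ∈ S \ B`. Weighting these by `yᵢ` and `1 - yᵢ` and adding them yields,
with `C = c_∞`,
`c(S) ≤ c(y) + n C + ((2 + κ) C + λ) tr (D M) - λ κ tr (M D M D)`.
Since `tr (M D M D) ≥ (tr (D M))² / n`, the right side is at most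
`c(y) + n C + ((2 + κ) C + λ)² n / (4 λ κ)` (`barrier_rounding`); `λ = 4 C` gives the claim up to an
arbitrarily small error in `L`, which disappears because there are only finitely many sets `S`.
-/

theorem trace_mul_nonneg_of_posSemidef {n : ℕ} {P Q : Matrix (Fin n) (Fin n) ℝ}
    (hP : P.PosSemidef) (hQ : Q.PosSemidef) : 0 ≤ trace (P * Q) := by
  obtain ⟨k, w, rfl⟩ := Matrix.posSemidef_iff_eq_sum_vecMulVec.1 hQ
  rw [Finset.mul_sum, trace_sum]
  refine Finset.sum_nonneg fun i _ => ?_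
  rw [mul_vecMulVec, trace_vecMulVec, dotProduct_comm]
  exact hP.dotProduct_mulVec_nonneg (w i)

theorem trace_mul_le_trace_mul {n : ℕ} {P Q R : Matrix (Fin n) (Fin n) ℝ}
    (hP : P.PosSemidef) (hQ : (R - Q).PosSemidef) : trace (P * Q) ≤ trace (P * R) := by
  have := trace_mul_nonneg_of_posSemidef hP hQ
  rw [Matrix.mul_sub, trace_sub] at this
  linarith

/-- The inequality `tr (W⁻¹ D W⁻¹ D) ≥ (tr (D W⁻¹))² / n`, linearized at slope `s`. It expresses
`tr (W⁻¹ H W⁻¹ H) ≥ 0` for `H = D - s W`, which avoids matrix square roots. -/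
theorem trace_sq_ge {n : ℕ} {W D : Matrix (Fin n) (Fin n) ℝ} (hW : W.PosDef)
    (hD : D.IsHermitian) (s : ℝ) :
    2 * s * trace (D * W⁻¹) - s ^ 2 * n ≤ trace (W⁻¹ * D * W⁻¹ * D) := by
  have hu : IsUnit W.det := (Matrix.isUnit_iff_isUnit_det W).1 hW.isUnit
  have hH : (D - s • W)ᴴ = D - s • W := by
    rw [conjTranspose_sub, conjTranspose_smul, hD.eq, hW.isHermitian.eq]; simp
  have h1 : ((D - s • W) * W⁻¹ * (D - s • W)).PosSemidef := by
    have := hW.inv.posSemidef.mul_mul_conjTranspose_same (D - s • W)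
    rwa [hH] at this
  have h := trace_mul_nonneg_of_posSemidef hW.inv.posSemidef h1
  have e : W⁻¹ * ((D - s • W) * W⁻¹ * (D - s • W)) =
      W⁻¹ * D * W⁻¹ * D - (2 * s) • (W⁻¹ * D) + (s ^ 2) • (1 : Matrix (Fin n) (Fin n) ℝ) := by
    have a : W⁻¹ * (D - s • W) = W⁻¹ * D - s • 1 := by
      rw [Matrix.mul_sub, Matrix.mul_smul, nonsing_inv_mul _ hu]
    rw [← Matrix.mul_assoc, ← Matrix.mul_assoc, a, Matrix.mul_assoc, a]
    simp only [Matrix.mul_sub, Matrix.sub_mul, Matrix.mul_smul, Matrix.smul_mul, Matrix.mul_one,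
      Matrix.one_mul, Matrix.mul_assoc]
    module
  rw [e] at h
  simp only [trace_add, trace_sub, trace_smul, trace_one, smul_eq_mul, Fintype.card_fin] at h
  rw [trace_mul_comm D]
  linarith

/-- The Sherman-Morrison formula for a symmetric rank-one update. -/
theorem rank_one_update_inv {n : ℕ} {W : Matrix (Fin n) (Fin n) ℝ} (hW : W.PosDef)
    (v : Fin n → ℝ) (s : ℝ) (hs : 1 + s * (v ⬝ᵥ (W⁻¹ *ᵥ v)) ≠ 0) :
    (W + s • vecMulVec v v)⁻¹ =
      W⁻¹ - (s / (1 + s * (v ⬝ᵥ (W⁻¹ *ᵥ v)))) • (W⁻¹ * vecMulVec v v * W⁻¹) := by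
  have hu : IsUnit W.det := (Matrix.isUnit_iff_isUnit_det W).1 hW.isUnit
  apply inv_eq_right_inv
  set q := v ⬝ᵥ (W⁻¹ *ᵥ v) with hq
  have hV : vecMulVec v v * W⁻¹ * vecMulVec v v = q • vecMulVec v v := by
    rw [Matrix.mul_assoc, mul_vecMulVec, vecMulVec_mul_vecMulVec, vecMulVec_smul]
  have h1 : W * (W⁻¹ * vecMulVec v v * W⁻¹) = vecMulVec v v * W⁻¹ := by
    rw [← Matrix.mul_assoc, ← Matrix.mul_assoc, mul_nonsing_inv _ hu, Matrix.one_mul]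
  have h2 : vecMulVec v v * (W⁻¹ * vecMulVec v v * W⁻¹) = q • (vecMulVec v v * W⁻¹) := by
    rw [← Matrix.mul_assoc, ← Matrix.mul_assoc, hV, Matrix.smul_mul]
  simp only [Matrix.mul_sub, Matrix.add_mul, Matrix.smul_mul, Matrix.mul_smul, h1, h2,
    mul_nonsing_inv _ hu, smul_smul, smul_add]
  rw [add_sub_assoc]
  have : s • (vecMulVec v v * W⁻¹) - ((s / (1 + s * q)) • (vecMulVec v v * W⁻¹) +
      (s / (1 + s * q) * (s * q)) • (vecMulVec v v * W⁻¹)) = 0 := by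
    rw [← add_smul, ← sub_smul]
    have : s - (s / (1 + s * q) + s / (1 + s * q) * (s * q)) = 0 := by
      field_simp; ring
    rw [this, zero_smul]
  rw [this, add_zero]

theorem posDef_sub_vecMulVec {n : ℕ} {W : Matrix (Fin n) (Fin n) ℝ} (hW : W.PosDef)
    (v : Fin n → ℝ) (hq : v ⬝ᵥ (W⁻¹ *ᵥ v) < 1) : (W - vecMulVec v v).PosDef := by
  have hu : IsUnit W.det := (Matrix.isUnit_iff_isUnit_det W).1 hW.isUnit
  have hV := posSemidef_vecMulVec_self_star v
  simp only [star_trivial] at hV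
  refine .of_dotProduct_mulVec_pos (hW.isHermitian.sub hV.isHermitian) fun u hu0 => ?_
  have h0 := hW.dotProduct_mulVec_pos hu0
  have hsymm : Wᵀ = W := by simpa using hW.isHermitian.eq
  set t := v ⬝ᵥ u with ht
  -- Expanding this gives `uᵀ W u ≥ t² (2 - q)` with `q = vᵀ W⁻¹ v < 1`.
  have h1 := hW.posSemidef.dotProduct_mulVec_nonneg (u - t • (W⁻¹ *ᵥ v))
  have e1 : W *ᵥ (W⁻¹ *ᵥ v) = v := by rw [mulVec_mulVec, mul_nonsing_inv _ hu, one_mulVec]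
  have e2 : (W⁻¹ *ᵥ v) ⬝ᵥ (W *ᵥ u) = t := by
    rw [dotProduct_mulVec, ← mulVec_transpose, hsymm, e1]
  simp only [star_trivial] at *
  rw [mulVec_sub, mulVec_smul, e1] at h1
  simp only [sub_dotProduct, dotProduct_sub, smul_dotProduct, dotProduct_smul, e2,
    smul_eq_mul] at h1
  rw [dotProduct_comm u v, ← ht, dotProduct_comm _ v] at h1
  rw [sub_mulVec, dotProduct_sub, vecMulVec_mulVec, ← ht, op_smul_eq_smul, dotProduct_smul,
    dotProduct_comm u v, ← ht, smul_eq_mul]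
  by_cases h : t = 0
  · simpa [h] using h0
  · have := mul_pos_iff.2 (Or.inl ⟨mul_self_pos.2 h, sub_pos.2 hq⟩)
    nlinarith

/-- Effect of a rank-one update of `W` on the potential `tr (D W⁻¹)`. -/
theorem trace_mul_update {n : ℕ} {W D : Matrix (Fin n) (Fin n) ℝ} (hW : W.PosDef)
    (v : Fin n → ℝ) (s : ℝ) (hs : 1 + s * trace (W⁻¹ * vecMulVec v v) ≠ 0) :
    trace (D * (W + s • vecMulVec v v)⁻¹) = trace (D * W⁻¹) -
      s * trace (W⁻¹ * D * W⁻¹ * vecMulVec v v) / (1 + s * trace (W⁻¹ * vecMulVec v v)) := by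
  have hq : trace (W⁻¹ * vecMulVec v v) = v ⬝ᵥ (W⁻¹ *ᵥ v) := by
    rw [mul_vecMulVec, trace_vecMulVec, dotProduct_comm]
  rw [hq] at hs ⊢
  rw [rank_one_update_inv hW v s hs, Matrix.mul_sub, trace_sub, Matrix.mul_smul, trace_smul,
    smul_eq_mul]
  have : trace (D * (W⁻¹ * vecMulVec v v * W⁻¹)) = trace (W⁻¹ * D * W⁻¹ * vecMulVec v v) := by
    rw [← Matrix.mul_assoc, trace_mul_comm]
    simp only [Matrix.mul_assoc]
  rw [this]
  ring

theorem sum_mul_trace {n m : ℕ} (P : Matrix (Fin n) (Fin n) ℝ)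
    (V : Fin m → Matrix (Fin n) (Fin n) ℝ) (a : Fin m → ℝ) :
    ∑ i, a i * trace (P * V i) = trace (P * ∑ i, a i • V i) := by
  simp [Finset.mul_sum, trace_sum, trace_smul]

/-- The minimizer of `c(S) + lam * tr (D (Z_S - L)⁻¹)` over the sets `S ⊇ {i | y i = 1}` with
`Z_S ≻ L` is cheap, whenever `y` beats the barrier `L` by `κ D` while `D` controls both what `L`
leaves uncovered by the forced elements and the fractional part of `y`. -/
theorem barrier_rounding {n m : ℕ} (v : Fin m → Fin n → ℝ) (y c : Fin m → ℝ)
    (L D : Matrix (Fin n) (Fin n) ℝ) (κ C lam : ℝ)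
    (hy : ∀ i, 0 ≤ y i ∧ y i ≤ 1) (hc : ∀ i, 0 ≤ c i ∧ c i ≤ C)
    (hκ : 0 < κ) (hC : 0 < C) (hlam : 0 < lam) (hD : D.PosDef)
    (hY : ((∑ i, y i • vecMulVec (v i) (v i)) - L - κ • D).PosSemidef)
    (hB : (D - (L - ∑ i, (if y i = 1 then (1 : ℝ) else 0) • vecMulVec (v i) (v i))).PosSemidef)
    (hF : ((1 + κ) • D -
      ∑ i, (if y i = 1 then (0 : ℝ) else y i) • vecMulVec (v i) (v i)).PosSemidef) :
    ∃ S : Finset (Fin m), ((∑ i ∈ S, vecMulVec (v i) (v i)) - L).PosDef ∧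
      ∑ i ∈ S, c i ≤ ∑ i, c i * y i + n * C + ((2 + κ) * C + lam) ^ 2 * n / (4 * lam * κ) := by
  classical
  set V : Fin m → Matrix (Fin n) (Fin n) ℝ := fun i => vecMulVec (v i) (v i) with hVdef
  have hV : ∀ i, (V i).PosSemidef := fun i => by
    simpa using posSemidef_vecMulVec_self_star (v i)
  let F : Finset (Finset (Fin m)) := Finset.univ.filter fun S =>
    (∀ i, y i = 1 → i ∈ S) ∧ ((∑ i ∈ S, V i) - L).PosDef
  have hne : F.Nonempty := by
    refine ⟨Finset.univ, Finset.mem_filter.2 ⟨Finset.mem_univ _, by simp, ?_⟩⟩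
    have e : (∑ i, V i) - L = κ • D + (((∑ i, y i • V i) - L - κ • D) +
        ∑ i, (1 - y i) • V i) := by
      simp only [sub_smul, one_smul, Finset.sum_sub_distrib]
      abel
    rw [e]
    exact (hD.smul hκ).add_posSemidef (hY.add (posSemidef_sum _ fun i _ =>
      (hV i).smul (sub_nonneg.2 (hy i).2)))
  obtain ⟨S, hSF, hmin⟩ := F.exists_min_image
    (fun S => ∑ i ∈ S, c i + lam * trace (D * ((∑ i ∈ S, V i) - L)⁻¹)) hne
  obtain ⟨hSB, hW⟩ := (Finset.mem_filter.1 hSF).2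
  refine ⟨S, hW, ?_⟩
  set W := (∑ i ∈ S, V i) - L with hWdef
  have hu : IsUnit W.det := (Matrix.isUnit_iff_isUnit_det W).1 hW.isUnit
  set M := W⁻¹ with hM
  have hMp : M.PosSemidef := hW.inv.posSemidef
  have hMDM : (M * D * M).PosSemidef := by
    have := hD.posSemidef.mul_mul_conjTranspose_same M
    rwa [hMp.isHermitian.eq] at this
  have hq : ∀ i, 0 ≤ trace (M * V i) := fun i => trace_mul_nonneg_of_posSemidef hMp (hV i)
  have hp : ∀ i, 0 ≤ trace (M * D * M * V i) := fun i =>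
    trace_mul_nonneg_of_posSemidef hMDM (hV i)
  have hadd : ∀ i, i ∉ S → lam * trace (M * D * M * V i) ≤ c i * (1 + trace (M * V i)) := by
    intro i hi
    have hW' : (∑ j ∈ insert i S, V j) - L = W + (1 : ℝ) • V i := by
      rw [Finset.sum_insert hi, one_smul, hWdef]; abel
    have hmem : insert i S ∈ F := by
      refine Finset.mem_filter.2 ⟨Finset.mem_univ _, fun j hj =>
        Finset.mem_insert_of_mem (hSB j hj), ?_⟩
      rw [hW', one_smul]
      exact hW.add_posSemidef (hV i)
    have h := hmin _ hmem
    have hpos : 0 < 1 + trace (M * V i) := by linarith [hq i]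
    beta_reduce at h
    rw [hW', Finset.sum_insert hi] at h
    rw [trace_mul_update hW (v i) 1 (by rw [one_mul]; exact hpos.ne'), one_mul, one_mul] at h
    have h2 : lam * (trace (M * D * M * V i) / (1 + trace (M * V i))) ≤ c i := by
      linarith
    rwa [← mul_div_assoc, div_le_iff₀ hpos] at h2
  have hrem : ∀ i, i ∈ S → y i ≠ 1 →
      c i * (1 - trace (M * V i)) ≤ lam * trace (M * D * M * V i) := by
    intro i hi hyi
    -- If `q ≥ 1`, deleting `i` may leave the domain of the barrier, but then the left side is `≤ 0`.
    rcases le_or_gt 1 (trace (M * V i)) with h1 | h1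
    · have := mul_nonneg (hc i).1 (sub_nonneg.2 h1)
      have := mul_nonneg hlam.le (hp i)
      linarith
    have hs : ∑ j ∈ S, V j = V i + ∑ j ∈ S.erase i, V j := (Finset.add_sum_erase _ _ hi).symm
    have hsc : ∑ j ∈ S, c j = c i + ∑ j ∈ S.erase i, c j := (Finset.add_sum_erase _ _ hi).symm
    have hW' : (∑ j ∈ S.erase i, V j) - L = W + (-1 : ℝ) • V i := by
      rw [hWdef, hs, neg_smul, one_smul]; abel
    have hmem : S.erase i ∈ F := by
      refine Finset.mem_filter.2 ⟨Finset.mem_univ _, fun j hj =>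
        Finset.mem_erase.2 ⟨fun h => hyi (h ▸ hj), hSB j hj⟩, ?_⟩
      rw [hW', neg_smul, one_smul, ← sub_eq_add_neg]
      refine posDef_sub_vecMulVec hW (v i) ?_
      rwa [hVdef, mul_vecMulVec, trace_vecMulVec, dotProduct_comm] at h1
    have h := hmin _ hmem
    have hpos : 0 < 1 - trace (M * V i) := by linarith
    beta_reduce at h
    rw [hW', hsc] at h
    rw [trace_mul_update hW (v i) (-1) (by
      have : 1 + -1 * trace (M * V i) ≠ 0 := by linarith
      exact this)] at h
    have h2 : c i ≤ lam * (trace (M * D * M * V i) / (1 - trace (M * V i))) := by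
      have e : -1 * trace (M * D * M * V i) / (1 + -1 * trace (M * V i)) =
          -(trace (M * D * M * V i) / (1 - trace (M * V i))) := by
        rw [neg_one_mul, neg_one_mul, ← sub_eq_add_neg, neg_div]
      rw [e] at h
      linarith
    rwa [← mul_div_assoc, le_div_iff₀ hpos] at h2
  -- Indicator of `S`, indicator of the forced elements, and the fractional part of `y`.
  let z : Fin m → ℝ := fun i => if i ∈ S then 1 else 0
  let b : Fin m → ℝ := fun i => if y i = 1 then 1 else 0
  let f : Fin m → ℝ := fun i => if y i = 1 then 0 else y i
  have hpt : ∀ i, z i * c i - c i * y i ≤ lam * ((z i - y i) * trace (M * D * M * V i)) +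
      C * ((z i - b i + f i) * trace (M * V i)) := by
    intro i
    have hCq := mul_nonneg (sub_nonneg.2 (hc i).2) (hq i)
    have hCq' := mul_nonneg hC.le (hq i)
    obtain ⟨hy0, hy1⟩ := hy i
    by_cases hi : i ∈ S
    · by_cases hyi : y i = 1
      · simp [z, b, f, hi, hyi]
      · simp only [z, b, f, hi, hyi, if_true, if_false]
        have h1 := mul_le_mul_of_nonneg_left (hrem i hi hyi) (sub_nonneg.2 hy1)
        have h2 := mul_nonneg (sub_nonneg.2 hy1) hCq
        have h3 := mul_nonneg hy0 hCq'
        nlinarith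
    · have hyi : y i ≠ 1 := fun h => hi (hSB i h)
      simp only [z, b, f, hi, hyi, if_false]
      have h1 := mul_le_mul_of_nonneg_left (hadd i hi) hy0
      have h2 := mul_nonneg hy0 hCq
      nlinarith
  have hsum := Finset.sum_le_sum fun i (_ : i ∈ Finset.univ) => hpt i
  rw [Finset.sum_sub_distrib, Finset.sum_add_distrib, ← Finset.mul_sum, ← Finset.mul_sum,
    sum_mul_trace, sum_mul_trace] at hsum
  have hzc : ∑ i, z i * c i = ∑ i ∈ S, c i := by simp [z, Finset.sum_ite_mem]
  have hzV : ∑ i, z i • V i = W + L := by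
    simp [z, ite_smul, Finset.sum_ite_mem, hWdef]
  have e1 : ∑ i, (z i - y i) • V i = W - ((∑ i, y i • V i) - L) := by
    simp only [sub_smul, Finset.sum_sub_distrib, hzV]; abel
  have e2 : ∑ i, (z i - b i + f i) • V i =
      W + (L - ∑ i, b i • V i) + ∑ i, f i • V i := by
    simp only [add_smul, sub_smul, Finset.sum_sub_distrib, Finset.sum_add_distrib, hzV]; abel
  have t1 : trace (M * D * M * W) = trace (D * M) := by
    rw [Matrix.mul_assoc _ M W, nonsing_inv_mul _ hu, Matrix.mul_one, trace_mul_comm]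
  have t2 : trace (M * W) = n := by
    rw [nonsing_inv_mul _ hu, trace_one, Fintype.card_fin]
  have i1 : trace (M * D * M * (κ • D)) ≤ trace (M * D * M * ((∑ i, y i • V i) - L)) :=
    trace_mul_le_trace_mul hMDM hY
  have i2 : trace (M * (L - ∑ i, b i • V i)) ≤ trace (M * D) := trace_mul_le_trace_mul hMp hB
  have i3 : trace (M * ∑ i, f i • V i) ≤ trace (M * ((1 + κ) • D)) :=
    trace_mul_le_trace_mul hMp hF
  -- With this slope, `lam κ` times the bound cancels the coefficient `(2 + κ) C + lam` of `tr (D M)`.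
  have i4 := trace_sq_ge hW hD.isHermitian (((2 + κ) * C + lam) / (2 * lam * κ))
  rw [hzc, e1, e2, Matrix.mul_sub, trace_sub, t1, Matrix.mul_add, Matrix.mul_add, trace_add,
    trace_add, t2] at hsum
  rw [Matrix.mul_smul, trace_smul, smul_eq_mul] at i1 i3
  rw [trace_mul_comm M D] at i2 i3
  set φ := trace (D * M)
  set K := (2 + κ) * C + lam with hK
  have j1 := mul_le_mul_of_nonneg_left i1 hlam.le
  have j2 := mul_le_mul_of_nonneg_left i2 hC.le
  have j3 := mul_le_mul_of_nonneg_left i3 hC.le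
  have j4 := mul_le_mul_of_nonneg_left i4 (mul_pos hlam hκ).le
  have e3 : lam * κ * (2 * (K / (2 * lam * κ)) * φ - (K / (2 * lam * κ)) ^ 2 * n) =
      K * φ - K ^ 2 * n / (4 * lam * κ) := by
    field_simp; ring
  rw [e3] at j4
  have e4 : K * φ = (2 + κ) * C * φ + lam * φ := by rw [hK]; ring
  linarith

/-- For a property monotone in `η` over a finite type, a single witness serves all `η > 0`. -/
theorem exists_forall_of_forall_exists {α : Type*} [Fintype α] [Nonempty α] {P : α → ℝ → Prop}
    (hmono : ∀ a η η', η ≤ η' → P a η → P a η') (h : ∀ η > 0, ∃ a, P a η) :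
    ∃ a, ∀ η > 0, P a η := by
  by_contra! hcon
  choose g hg0 hg using hcon
  obtain ⟨a₀, -, ha₀⟩ := Finset.exists_min_image Finset.univ g Finset.univ_nonempty
  obtain ⟨a, ha⟩ := h (g a₀) (hg0 a₀)
  exact hg a (hmono a _ _ (ha₀ a (Finset.mem_univ a)) ha)

/-- Rounding with the target relaxed to `(1 - η) I`; the cost bound does not depend on `η`. The
relaxation keeps `D` positive definite even when the fractional part of `x` does not span. -/
theorem approximate_rounding {n m : ℕ} (v : Fin m → Fin n → ℝ) (x c : Fin m → ℝ) (κ C lam η : ℝ)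
    (hx : ∀ i, 0 ≤ x i ∧ x i ≤ 1)
    (hX : (∑ i, x i • vecMulVec (v i) (v i)) = (1 : Matrix (Fin n) (Fin n) ℝ))
    (hc : ∀ i, 0 ≤ c i ∧ c i ≤ C)
    (hκ : 0 < κ) (hC : 0 < C) (hlam : 0 < lam) (hη : 0 < η) :
    ∃ S : Finset (Fin m),
      ((∑ i ∈ S, vecMulVec (v i) (v i)) - (1 - η) • (1 : Matrix (Fin n) (Fin n) ℝ)).PosSemidef ∧
      ∑ i ∈ S, c i ≤ (1 + κ) * ∑ i, c i * x i + n * C +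
        ((2 + κ) * C + lam) ^ 2 * n / (4 * lam * κ) := by
  set V : Fin m → Matrix (Fin n) (Fin n) ℝ := fun i => vecMulVec (v i) (v i) with hVdef
  have hV : ∀ i, (V i).PosSemidef := fun i => by
    simpa using posSemidef_vecMulVec_self_star (v i)
  let y : Fin m → ℝ := fun i => min 1 ((1 + κ) * x i)
  have hy1 : ∀ i, y i ≠ 1 → y i = (1 + κ) * x i := fun i h =>
    (min_choice _ _).resolve_left h
  have hy : ∀ i, 0 ≤ y i ∧ y i ≤ 1 := fun i =>
    ⟨le_min zero_le_one (mul_nonneg (by linarith) (hx i).1), min_le_left _ _⟩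
  let r : Fin m → ℝ := fun i => if y i = 1 then 0 else x i
  let D : Matrix (Fin n) (Fin n) ℝ := (∑ i, r i • V i) + (η / κ) • 1
  have hD : D.PosDef := by
    refine Matrix.PosDef.posSemidef_add (posSemidef_sum _ fun i _ => (hV i).smul ?_)
      (Matrix.PosDef.one.smul (div_pos hη hκ))
    simp only [r]
    split_ifs
    exacts [le_rfl, (hx i).1]
  have hI : ∀ {t : ℝ}, 0 ≤ t → (t • (1 : Matrix (Fin n) (Fin n) ℝ)).PosSemidef :=
    fun ht => Matrix.PosSemidef.one.smul ht
  have hκD : κ • D = κ • (∑ i, r i • V i) + η • 1 := by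
    simp only [D, smul_add, smul_smul, mul_div_cancel₀ η hκ.ne']
  obtain ⟨S, hS, hcS⟩ := barrier_rounding v y c ((1 - η) • 1) D κ C lam hy hc hκ hC hlam hD
    (by
      have e : (∑ i, y i • V i) - (1 - η) • (1 : Matrix (Fin n) (Fin n) ℝ) - κ • D =
          ∑ i, (y i - x i - κ * r i) • V i := by
        rw [hκD]
        simp only [sub_smul, mul_smul, Finset.sum_sub_distrib, ← Finset.smul_sum, one_smul]
        rw [hX]
        abel
      change ((∑ i, y i • V i) - (1 - η) • (1 : Matrix (Fin n) (Fin n) ℝ) - κ • D).PosSemidef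
      rw [e]
      refine posSemidef_sum _ fun i _ => (hV i).smul ?_
      by_cases h : y i = 1
      · simp only [r, h, if_true]; linarith [(hx i).2]
      · simp only [r, h, if_false]; linarith [hy1 i h])
    (by
      have e : D - ((1 - η) • (1 : Matrix (Fin n) (Fin n) ℝ) -
            ∑ i, (if y i = 1 then (1 : ℝ) else 0) • V i) =
          (η + η / κ) • 1 + ∑ i, (r i - x i + (if y i = 1 then (1 : ℝ) else 0)) • V i := by
        simp only [D, sub_smul, add_smul, Finset.sum_sub_distrib, Finset.sum_add_distrib, one_smul]
        rw [hX]
        abel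
      change (D - ((1 - η) • (1 : Matrix (Fin n) (Fin n) ℝ) -
            ∑ i, (if y i = 1 then (1 : ℝ) else 0) • V i)).PosSemidef
      rw [e]
      refine (hI (by positivity)).add (posSemidef_sum _ fun i _ => (hV i).smul ?_)
      by_cases h : y i = 1
      · simp only [r, h, if_true]; linarith [(hx i).2]
      · simp [r, h])
    (by
      have e : (1 + κ) • D - ∑ i, (if y i = 1 then (0 : ℝ) else y i) • V i =
          (η + η / κ) • 1 + ∑ i, ((1 + κ) * r i - (if y i = 1 then (0 : ℝ) else y i)) • V i := by
        rw [add_smul, hκD]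
        simp only [D, sub_smul, add_smul, add_mul, mul_smul, Finset.sum_sub_distrib,
          Finset.sum_add_distrib, one_smul, ← Finset.smul_sum, one_mul]
        abel
      change ((1 + κ) • D - ∑ i, (if y i = 1 then (0 : ℝ) else y i) • V i).PosSemidef
      rw [e]
      refine (hI (by positivity)).add (posSemidef_sum _ fun i _ => (hV i).smul ?_)
      by_cases h : y i = 1
      · simp [r, h]
      · simp only [r, h, if_false]; linarith [hy1 i h])
  refine ⟨S, hS.posSemidef, hcS.trans ?_⟩
  have : ∑ i, c i * y i ≤ (1 + κ) * ∑ i, c i * x i := by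
    rw [Finset.mul_sum]
    refine Finset.sum_le_sum fun i _ => ?_
    have := mul_le_mul_of_nonneg_left (min_le_right 1 ((1 + κ) * x i)) (hc i).1
    simp only [y]
    linarith
  linarith

/-- **One-sided spectral rounding (existential form).**
There exists `n₀` such that for all `n ≥ n₀`: given vectors `v₁, …, v_m ∈ ℝⁿ` and
`x ∈ [0,1]^m` with `∑ xᵢ vᵢ vᵢᵀ = Iₙ`, `ε ∈ (0, 1/4)` and nonnegative costs `c`,
there is `z ∈ {0,1}^m` with `∑ zᵢ vᵢ vᵢᵀ ⪰ Iₙ` and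
`⟨c, z⟩ ≤ (1 + 6ε) ⟨c, x⟩ + 15 n c_∞ / ε`. -/
theorem one_sided_spectral_rounding_exists :
    ∃ n₀ : ℕ, ∀ n : ℕ, n₀ ≤ n →
      ∀ (m : ℕ) (v : Fin m → Fin n → ℝ) (x c : Fin m → ℝ) (ε : ℝ),
        (∀ i, 0 ≤ x i ∧ x i ≤ 1) →
        (∑ i, x i • vecMulVec (v i) (v i)) = (1 : Matrix (Fin n) (Fin n) ℝ) →
        0 < ε → ε < 1/4 →
        (∀ i, 0 ≤ c i) →
        ∃ z : Fin m → ℝ, (∀ i, z i = 0 ∨ z i = 1) ∧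
          ((∑ i, z i • vecMulVec (v i) (v i)) - (1 : Matrix (Fin n) (Fin n) ℝ)).PosSemidef ∧
          (∑ i, c i * z i) ≤ (1 + 6*ε) * (∑ i, c i * x i) + 15 * n * (⨆ i, c i) / ε := by
  refine ⟨0, fun n _ m v x c ε hx hX hε hε4 hc => ?_⟩
  have hV : ∀ i, (vecMulVec (v i) (v i)).PosSemidef := fun i => by
    simpa using posSemidef_vecMulVec_self_star (v i)
  have hle : ∀ i, c i ≤ ⨆ i, c i := le_ciSup (Set.finite_range c).bddAbove
  have hC0 : 0 ≤ ⨆ i, c i := Real.iSup_nonneg hc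
  set C := ⨆ i, c i
  rcases hC0.eq_or_lt with hC | hC
  · have hc0 : ∀ i, c i = 0 := fun i => le_antisymm (hC ▸ hle i) (hc i)
    refine ⟨fun _ => 1, fun _ => Or.inr rfl, ?_, by simp [hc0, ← hC]⟩
    rw [← hX, ← Finset.sum_sub_distrib]
    simp only [← sub_smul]
    exact posSemidef_sum _ fun i _ => (hV i).smul (sub_nonneg.2 (hx i).2)
  obtain ⟨S, hS⟩ := exists_forall_of_forall_exists
    (P := fun (S : Finset (Fin m)) (η : ℝ) =>
      ((∑ i ∈ S, vecMulVec (v i) (v i)) - (1 - η) • (1 : Matrix (Fin n) (Fin n) ℝ)).PosSemidef ∧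
      ∑ i ∈ S, c i ≤ (1 + 6 * ε) * ∑ i, c i * x i + n * C +
        ((2 + 6 * ε) * C + 4 * C) ^ 2 * n / (4 * (4 * C) * (6 * ε)))
    (fun S η η' hη h => by
      refine ⟨?_, h.2⟩
      have e : (∑ i ∈ S, vecMulVec (v i) (v i)) - (1 - η') • (1 : Matrix (Fin n) (Fin n) ℝ) =
          ((∑ i ∈ S, vecMulVec (v i) (v i)) - (1 - η) • (1 : Matrix (Fin n) (Fin n) ℝ)) +
            (η' - η) • 1 := by
        simp only [sub_smul]; abel
      rw [e]
      exact h.1.add (Matrix.PosSemidef.one.smul (sub_nonneg.2 hη)))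
    (fun η hη => approximate_rounding v x c (6 * ε) C (4 * C) η hx hX
      (fun i => ⟨hc i, hle i⟩) (by positivity) hC (by positivity) hη)
  refine ⟨fun i => if i ∈ S then 1 else 0, fun i => by by_cases h : i ∈ S <;> simp [h], ?_, ?_⟩
  · have e : ∑ i, (if i ∈ S then (1 : ℝ) else 0) • vecMulVec (v i) (v i) =
        ∑ i ∈ S, vecMulVec (v i) (v i) := by simp [ite_smul, Finset.sum_ite_mem]
    rw [e]
    refine .of_dotProduct_mulVec_nonneg
      ((posSemidef_sum S fun i _ => hV i).isHermitian.sub isHermitian_one) fun u => ?_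
    refine le_of_forall_pos_le_add fun δ hδ => ?_
    have huu : 0 ≤ u ⬝ᵥ u := by simpa using dotProduct_star_self_nonneg u
    have h := (hS (δ / (u ⬝ᵥ u + 1)) (by positivity)).1.dotProduct_mulVec_nonneg u
    have h2 : δ / (u ⬝ᵥ u + 1) * (u ⬝ᵥ u) ≤ δ := by
      rw [div_mul_eq_mul_div, div_le_iff₀ (by positivity)]
      nlinarith
    simp only [star_trivial, sub_mulVec, dotProduct_sub, smul_mulVec, one_mulVec,
      dotProduct_smul, smul_eq_mul] at h ⊢
    linarith
  · have hcost := (hS 1 one_pos).2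
    have e : ∑ i, c i * (if i ∈ S then (1 : ℝ) else 0) = ∑ i ∈ S, c i := by
      simp [Finset.sum_ite_mem]
    rw [e]
    refine hcost.trans ?_
    have hn : (0 : ℝ) ≤ n := n.cast_nonneg
    have e2 : ((2 + 6 * ε) * C + 4 * C) ^ 2 * n / (4 * (4 * C) * (6 * ε)) =
        (3 / 8 * (1 + ε) ^ 2) * (n * C / ε) := by
      field_simp; ring
    have e3 : 15 * n * C / ε = 15 * (n * C / ε) := by ring
    have hT : 0 ≤ n * C / ε := by positivity
    have e4 : n * C = ε * (n * C / ε) := by field_simp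
    have hco : ε + 3 / 8 * (1 + ε) ^ 2 ≤ 15 := by nlinarith
    have := mul_le_mul_of_nonneg_right hco hT
    rw [e2, e3]
    linarith
end

section
/- Let v_1, …, v_m ∈ ℝ^n, x ∈ [0,1]^m, and c ∈ ℝ_+^m. Suppose Σ_{i=1}^m x_i v_i v_iᵀ = I_n, that ‖v_i‖ ≤ ε < 1/8 for all i ∈ [m], and that c_∞ ≤ ε²·⟨c, x⟩. Then there exists z ∈ {0,1}^m such that (1 − 8ε)·I_n ⪯ Σ_{i=1}^m z_i v_i v_iᵀ ⪯ (1 + 8ε)·I_n and (1 − 8ε)·⟨c, x⟩ ≤ ⟨c, z⟩ ≤ (1 + 8ε)·⟨c, x⟩. -/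
/-!
The proof follows the method of interlacing polynomials, in the form that bounds a symmetric
deviation from both sides by means of the variances `x_i (1 - x_i)`.

The cost constraint is absorbed by giving each `v_i` the extra coordinate `√(c_i / S)`, where
`S = ⟨c, x⟩`. The new vectors `u_i` satisfy `|u_i|² ≤ 2 ε²` and `∑ x_i u_i u_iᵀ ⪯ 2 I`, and it suffices
to find `z` for which `M = ∑ (z_i - x_i) u_i u_iᵀ` has all its eigenvalues in `(-8ε, 8ε)`, that is, for
which `det (t - M) det (t + M)` has no root `t ≥ 8ε`.

If the `z_i` are independent Bernoulli variables with means `x_i`, the expectation of this polynomial is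
obtained from `det X det Y` at `X = Y = t I` by applying the operators `1 - κ_i ∂_X ∂_Y`, where
`κ_i = x_i (1 - x_i)` and the derivatives are taken along `u_i u_iᵀ` (`mixed`, `mixed_sub_add`). The
argument rests on three points.

* Stability (`mixed_ne_zero`): `mixed` does not vanish on matrices with positive definite imaginary part.
  Consequently all conditional expectations are real-rooted (`expPoly_real_rooted`), and some choice
  of `z` has no root above a bound for the roots of the full expectation (`no_root_choice`,
  `exists_rounding`).
* Barrier (`barrier`): the logarithmic derivative of `mixed` along `w wᵀ` at `X = Y = H` is at most
  `2 |w|² / λ` as long as `H - λ I` exceeds the sum of `4 κ_i |u_i|² / λ • u_i u_iᵀ`. Each operator is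
  paid for by one such summand; this rests on a one-variable inequality (`barrier_step`) whose
  convexity input is the positivity of a Bézout form (`bezout_mixed`), again a form of stability.
* With `λ = 4ε` the sum is at most `4ε I`, so the expected polynomial is positive for `t ≥ 8ε`
  (`balanced_rounding`).
-/

open Matrix BigOperators

set_option linter.unusedSectionVars false

namespace SpectralRounding

/-! ### Mixed characteristic functions of rank-one directions -/

section

variable {ι : Type*} [Fintype ι] [DecidableEq ι]

/-- The rank-one matrix `u uᵀ`, with entries in an `ℝ`-algebra `K`. -/
def rankOne (K : Type*) [CommRing K] [Algebra ℝ K] (u : ι → ℝ) : Matrix ι ι K :=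
  vecMulVec (fun i => algebraMap ℝ K (u i)) (fun i => algebraMap ℝ K (u i))

/-- The function obtained from `det X * det Y` by applying, for each `(κ, u)` in the list, the operator
`f ↦ f - κ ∂_X ∂_Y f`, where `∂_X` and `∂_Y` are the derivatives of `f` in the direction `u uᵀ` in
the first and in the second argument. As `f` is affine along `u uᵀ` in each argument
(`mixed_add_smul_left`, `mixed_add_smul_right`), the mixed derivative is a mixed second difference,
which makes sense over any commutative `ℝ`-algebra `K`; below `K` is `ℝ`, `ℂ` or `ℝ[X]`. -/
def mixed (K : Type*) [CommRing K] [Algebra ℝ K] :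
    List (ℝ × (ι → ℝ)) → Matrix ι ι K → Matrix ι ι K → K
  | [], X, Y => X.det * Y.det
  | p :: L, X, Y => mixed K L X Y - algebraMap ℝ K p.1 *
      (mixed K L (X + rankOne K p.2) (Y + rankOne K p.2) - mixed K L (X + rankOne K p.2) Y
        - mixed K L X (Y + rankOne K p.2) + mixed K L X Y)

variable {K : Type*} [CommRing K] [Algebra ℝ K]

/-- The coefficient of `z` in the quadratic polynomial `mixed K L (X + z u uᵀ) (Y + z u uᵀ)`
(see `mixed_add_smul`), that is, the derivative along `u uᵀ` in both arguments at once. -/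
def linCoeff (L : List (ℝ × (ι → ℝ))) (u : ι → ℝ) (X Y : Matrix ι ι K) : K :=
  mixed K L (X + rankOne K u) Y + mixed K L X (Y + rankOne K u) - 2 * mixed K L X Y

/-- The coefficient of `z ^ 2` in `mixed K L (X + z u uᵀ) (Y + z u uᵀ)` (see `mixed_add_smul`), which
is the mixed second difference in the recursion defining `mixed`. -/
def quadCoeff (L : List (ℝ × (ι → ℝ))) (u : ι → ℝ) (X Y : Matrix ι ι K) : K :=
  mixed K L (X + rankOne K u) (Y + rankOne K u) - mixed K L (X + rankOne K u) Y
    - mixed K L X (Y + rankOne K u) + mixed K L X Y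

lemma mixed_cons (p : ℝ × (ι → ℝ)) (L : List (ℝ × (ι → ℝ))) (X Y : Matrix ι ι K) :
    mixed K (p :: L) X Y = mixed K L X Y - algebraMap ℝ K p.1 * quadCoeff L p.2 X Y := rfl

/-- The determinant is affine along a rank-one direction: by a Schur complement, `det (X + y u vᵀ)` is
a determinant in which only one column depends on `y`, and it does so affinely. -/
lemma det_add_smul_vecMulVec {K : Type*} [CommRing K] (X : Matrix ι ι K) (u v : ι → K) (y : K) :
    (X + y • vecMulVec u v).det = (1 - y) * X.det + y * (X + vecMulVec u v).det := by
  have key : ∀ y : K, (X + y • vecMulVec u v).det =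
      ((fromBlocks X 0 (replicateRow Unit v) (1 : Matrix Unit Unit K)).updateCol (Sum.inr ())
        (Sum.elim (-y • u) 1)).det := by
    intro y
    have : (fromBlocks X 0 (replicateRow Unit v) (1 : Matrix Unit Unit K)).updateCol (Sum.inr ())
        (Sum.elim (-y • u) 1) =
        fromBlocks X (replicateCol Unit (-y • u)) (replicateRow Unit v) 1 := by
      ext i j
      rcases i with i | i <;> rcases j with j | j <;> simp
    rw [this, det_fromBlocks_one₂₂]
    congr 1
    ext i j
    simp [vecMulVec_apply, Matrix.mul_apply, mul_assoc]
  have k1 := key 1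
  rw [one_smul] at k1
  have k0 := key 0
  rw [zero_smul, add_zero] at k0
  rw [key y, k0, k1, ← det_updateCol_smul, ← det_updateCol_smul, ← det_updateCol_add]
  congr 2
  ext i
  rcases i with i | i <;> simp

lemma mixed_add_smul_left (L : List (ℝ × (ι → ℝ))) (u : ι → ℝ) (X Y : Matrix ι ι K) (y : K) :
    mixed K L (X + y • rankOne K u) Y =
      (1 - y) * mixed K L X Y + y * mixed K L (X + rankOne K u) Y := by
  induction L generalizing X Y with
  | nil =>
    simp only [mixed, rankOne]
    rw [det_add_smul_vecMulVec]; ring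
  | cons p L ih =>
    simp only [mixed]
    rw [add_right_comm X (y • rankOne K u), add_right_comm X (rankOne K u)]
    simp only [ih]
    ring

lemma mixed_add_smul_right (L : List (ℝ × (ι → ℝ))) (u : ι → ℝ) (X Y : Matrix ι ι K) (y : K) :
    mixed K L X (Y + y • rankOne K u) =
      (1 - y) * mixed K L X Y + y * mixed K L X (Y + rankOne K u) := by
  induction L generalizing X Y with
  | nil =>
    simp only [mixed, rankOne]
    rw [det_add_smul_vecMulVec]; ring
  | cons p L ih =>
    simp only [mixed]
    rw [add_right_comm Y (y • rankOne K u), add_right_comm Y (rankOne K u)]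
    simp only [ih]
    ring

lemma mixed_add_smul (L : List (ℝ × (ι → ℝ))) (u : ι → ℝ) (X Y : Matrix ι ι K) (z : K) :
    mixed K L (X + z • rankOne K u) (Y + z • rankOne K u) =
      mixed K L X Y + linCoeff L u X Y * z + quadCoeff L u X Y * z ^ 2 := by
  simp only [mixed_add_smul_left, mixed_add_smul_right, linCoeff, quadCoeff]
  ring

lemma linCoeff_add_smul_self (L : List (ℝ × (ι → ℝ))) (u : ι → ℝ) (X Y : Matrix ι ι K) (z : K) :
    linCoeff L u (X + z • rankOne K u) (Y + z • rankOne K u) =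
      linCoeff L u X Y + 2 * quadCoeff L u X Y * z := by
  have h1 : ∀ X : Matrix ι ι K, X + z • rankOne K u + rankOne K u = X + (z + 1) • rankOne K u := by
    intro X; rw [add_smul, one_smul, add_assoc]
  simp only [linCoeff, quadCoeff, h1]
  simp only [mixed_add_smul_left, mixed_add_smul_right]
  ring

/-- The derivative of `mixed` along `w wᵀ` is again a quadratic polynomial in a shift along `u uᵀ`. Its
coefficients are those occurring in `linCoeff_cons`. -/
lemma linCoeff_add_smul (L : List (ℝ × (ι → ℝ))) (u w : ι → ℝ) (X Y : Matrix ι ι K) (z : K) :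
    linCoeff L w (X + z • rankOne K u) (Y + z • rankOne K u) =
      linCoeff L w X Y
      + (linCoeff L u (X + rankOne K w) Y + linCoeff L u X (Y + rankOne K w)
          - 2 * linCoeff L u X Y) * z
      + (quadCoeff L u (X + rankOne K w) Y + quadCoeff L u X (Y + rankOne K w)
          - 2 * quadCoeff L u X Y) * z ^ 2 := by
  rw [linCoeff, add_right_comm X, add_right_comm Y]
  simp only [mixed_add_smul]
  rw [show linCoeff L w X Y = mixed K L (X + rankOne K w) Y + mixed K L X (Y + rankOne K w)
    - 2 * mixed K L X Y from rfl]
  ring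

lemma linCoeff_cons (p : ℝ × (ι → ℝ)) (L : List (ℝ × (ι → ℝ))) (w : ι → ℝ) (X Y : Matrix ι ι K) :
    linCoeff (p :: L) w X Y = linCoeff L w X Y - algebraMap ℝ K p.1 *
      (quadCoeff L p.2 (X + rankOne K w) Y + quadCoeff L p.2 X (Y + rankOne K w)
          - 2 * quadCoeff L p.2 X Y) := by
  simp only [linCoeff, mixed_cons]
  ring

/-- The expectation identity. If `ξ` is Bernoulli with mean `θ`, the average of
`mixed K L (X - (ξ - a) u uᵀ) (Y + (ξ - a) u uᵀ)` is obtained by shifting by the mean `θ - a` and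
prepending `(θ (1 - θ), u)`, the variance of `ξ`, to the list. -/
lemma mixed_sub_add (L : List (ℝ × (ι → ℝ))) (u : ι → ℝ) (X Y : Matrix ι ι K) (θ a : ℝ) :
    algebraMap ℝ K (1 - θ) * mixed K L (X - algebraMap ℝ K (-a) • rankOne K u)
        (Y + algebraMap ℝ K (-a) • rankOne K u) +
      algebraMap ℝ K θ * mixed K L (X - algebraMap ℝ K (1 - a) • rankOne K u)
        (Y + algebraMap ℝ K (1 - a) • rankOne K u) =
    mixed K ((θ * (1 - θ), u) :: L) (X - algebraMap ℝ K (θ - a) • rankOne K u)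
        (Y + algebraMap ℝ K (θ - a) • rankOne K u) := by
  simp only [mixed, sub_eq_add_neg X, ← neg_smul, add_right_comm _ _ (rankOne K u)]
  simp only [mixed_add_smul_left, mixed_add_smul_right, map_sub, map_neg, map_mul, map_one]
  have h3 : ∀ X : Matrix ι ι K, X + rankOne K u + rankOne K u = X + (2 : K) • rankOne K u := by
    intro X; rw [two_smul, add_assoc]
  simp only [h3, mixed_add_smul_left, mixed_add_smul_right]
  ring

lemma rankOne_map {K' : Type*} [CommRing K'] [Algebra ℝ K'] (φ : K →ₐ[ℝ] K') (u : ι → ℝ) :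
    (rankOne K u).map φ = rankOne K' u := by
  ext i j; simp [rankOne, vecMulVec_apply]

lemma map_mixed {K' : Type*} [CommRing K'] [Algebra ℝ K'] (φ : K →ₐ[ℝ] K')
    (L : List (ℝ × (ι → ℝ))) (X Y : Matrix ι ι K) :
    φ (mixed K L X Y) = mixed K' L (X.map φ) (Y.map φ) := by
  induction L generalizing X Y with
  | nil => simp [mixed, AlgHom.map_det, AlgHom.mapMatrix_apply]
  | cons p L ih =>
    simp only [mixed, map_sub, map_add, map_mul, ih, AlgHom.commutes,
      Matrix.map_add φ (map_add φ), rankOne_map]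

end

/-! ### Quadratics without zeros in the upper half-plane -/

section

lemma exists_root (a b c : ℂ) (hc : c ≠ 0) : ∃ z : ℂ, a + b * z + c * z ^ 2 = 0 := by
  obtain ⟨s, hs⟩ := IsAlgClosed.exists_pow_nat_eq (b ^ 2 - 4 * c * a) (n := 2) (by norm_num)
  refine ⟨(-b + s) / (2 * c), ?_⟩
  field_simp
  linear_combination hs

/-- If `a + b z + c z²` has no zero in the closed upper half-plane, then `a ≠ κ c` for all `κ ≥ 0`:
the product of the two roots, both in the open lower half-plane, is never a nonnegative real. -/
lemma sub_mul_ne_zero_of_stable {a b c : ℂ} (h : ∀ z : ℂ, 0 ≤ z.im → a + b * z + c * z ^ 2 ≠ 0)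
    {κ : ℝ} (hκ : 0 ≤ κ) : a - κ * c ≠ 0 := by
  have ha : a ≠ 0 := by simpa using h 0 le_rfl
  intro h0
  by_cases hc : c = 0
  · simp [hc] at h0; exact ha h0
  obtain ⟨z, hz⟩ := exists_root a b c hc
  have hzim : z.im < 0 := by
    by_contra hcon
    exact h z (not_lt.mp hcon) hz
  have hz0 : z ≠ 0 := by
    rintro rfl; simp at hzim
  -- the product of the two roots is `a / c = κ`, so the other root is `κ / z`
  refine h (κ / z) ?_ ?_
  · rw [Complex.div_im]
    have : 0 < Complex.normSq z := Complex.normSq_pos.mpr hz0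
    simp only [Complex.ofReal_im, Complex.ofReal_re, zero_mul, zero_div, zero_sub]
    rw [neg_nonneg]
    exact div_nonpos_of_nonpos_of_nonneg (mul_nonpos_of_nonneg_of_nonpos hκ hzim.le) this.le
  · have h1 : a = κ * c := sub_eq_zero.mp h0
    field_simp
    rw [h1] at hz ⊢
    linear_combination (κ : ℂ) * hz

/-- If `a + b z + c z²` has no zero in the closed upper half-plane, then `b / a`, which is minus the sum
of the inverses of the roots, has nonpositive imaginary part. -/
lemma im_mul_conj_nonpos_of_stable {a b c : ℂ}
    (h : ∀ z : ℂ, 0 ≤ z.im → a + b * z + c * z ^ 2 ≠ 0) :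
    (b * (starRingEnd ℂ) a).im ≤ 0 := by
  by_cases hc : c = 0
  · subst hc
    by_cases hb : b = 0
    · simp [hb]
    have hz : (-a / b).im < 0 := by
      by_contra hcon
      refine h (-a / b) (not_lt.mp hcon) ?_
      field_simp
      ring
    rw [Complex.div_im] at hz
    have hb' : 0 < Complex.normSq b := Complex.normSq_pos.mpr hb
    rw [← sub_div, div_neg_iff] at hz
    simp only [Complex.neg_im, Complex.neg_re] at hz
    simp only [Complex.mul_im, Complex.conj_im, Complex.conj_re]
    rcases hz with hz | hz <;> linarith [hz.1, hz.2]
  · obtain ⟨r, hr⟩ := exists_root a b c hc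
    set t := -b / c - r with ht
    have hb : b = -c * (r + t) := by rw [ht]; field_simp; ring
    have ha : a = c * (r * t) := by
      rw [hb] at hr; linear_combination hr
    have hrim : r.im < 0 := by
      by_contra hcon
      exact h r (not_lt.mp hcon) hr
    have htim : t.im < 0 := by
      by_contra hcon
      refine h t (not_lt.mp hcon) ?_
      rw [ha, hb]; ring
    have e : b * (starRingEnd ℂ) a = -((Complex.normSq c : ℂ) *
        (Complex.normSq r * (starRingEnd ℂ) t + Complex.normSq t * (starRingEnd ℂ) r)) := by
      rw [Complex.normSq_eq_conj_mul_self, Complex.normSq_eq_conj_mul_self,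
        Complex.normSq_eq_conj_mul_self, ha, hb]
      simp only [map_mul]
      ring
    rw [e]
    simp only [Complex.neg_im, Complex.im_ofReal_mul, Complex.add_im, Complex.conj_im]
    have h1 := Complex.normSq_nonneg c
    have h2 := Complex.normSq_nonneg r
    have h3 := Complex.normSq_nonneg t
    have : Complex.normSq r * -t.im + Complex.normSq t * -r.im ≥ 0 := by
      have := mul_nonneg h2 (neg_nonneg.mpr htim.le)
      have := mul_nonneg h3 (neg_nonneg.mpr hrim.le)
      linarith
    nlinarith [mul_nonneg h1 this]

/-- If `p'(s) / p(s)` has nonpositive imaginary part on the upper half-plane, for the real quadratics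
`p = A + B s + C s²` and `p' = A' + B' s + C' s²`, then the Bézout form of the two is positive
semidefinite. It is the `2 × 2` form with entries the minors `D0`, `D1`, `D2`, and it appears because
`Im (p'(s) * conj p(s)) = - Im s * (D0 + 2 Re(s) D1 + |s|² D2)`. -/
lemma bezout_of_im {A B C A' B' C' : ℝ}
    (h : ∀ s : ℂ, 0 ≤ s.im → (((A' : ℂ) + B' * s + C' * s ^ 2) *
      (starRingEnd ℂ) ((A : ℂ) + B * s + C * s ^ 2)).im ≤ 0) :
    0 ≤ A' * B - B' * A ∧ 0 ≤ B' * C - C' * B ∧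
      (A' * C - C' * A) ^ 2 ≤ (A' * B - B' * A) * (B' * C - C' * B) := by
  set D0 := A' * B - B' * A with hD0
  set D1 := A' * C - C' * A with hD1
  set D2 := B' * C - C' * B with hD2
  have h1 : ∀ a b : ℝ, 0 < b → 0 ≤ D0 + 2 * a * D1 + (a ^ 2 + b ^ 2) * D2 := by
    intro a b hb
    have := h ⟨a, b⟩ hb.le
    have e : (((A' : ℂ) + B' * (⟨a, b⟩ : ℂ) + C' * (⟨a, b⟩ : ℂ) ^ 2) *
      (starRingEnd ℂ) ((A : ℂ) + B * (⟨a, b⟩ : ℂ) + C * (⟨a, b⟩ : ℂ) ^ 2)).im =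
        - (b * (D0 + 2 * a * D1 + (a ^ 2 + b ^ 2) * D2)) := by
      simp [pow_two, Complex.mul_im, Complex.mul_re]
      rw [hD0, hD1, hD2]
      ring
    rw [e] at this
    by_contra hcon
    push Not at hcon
    nlinarith [mul_neg_of_pos_of_neg hb hcon]
  have h2 : ∀ a : ℝ, 0 ≤ D2 * (a * a) + (2 * D1) * a + D0 := by
    intro a
    have lim : Filter.Tendsto (fun b : ℝ => D0 + 2 * a * D1 + (a ^ 2 + b ^ 2) * D2)
        (nhdsWithin 0 (Set.Ioi 0)) (nhds (D0 + 2 * a * D1 + (a ^ 2 + 0 ^ 2) * D2)) := by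
      apply tendsto_nhdsWithin_of_tendsto_nhds
      apply Continuous.tendsto
      fun_prop
    have := ge_of_tendsto lim (b := 0)
      (Filter.eventually_of_mem self_mem_nhdsWithin fun b hb => h1 a b hb)
    linarith
  have hd := discrim_le_zero h2
  rw [discrim] at hd
  refine ⟨by simpa using h2 0, ?_, by linarith⟩
  by_contra hneg
  push Not at hneg
  have hD0' : 0 ≤ D0 := by simpa using h2 0
  have hD1' : D1 = 0 := by nlinarith [sq_nonneg D1, mul_nonneg hD0' (neg_nonneg.mpr hneg.le)]
  have := h2 ((D0 + 1) / (-D2) + 1)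
  rw [hD1'] at this
  have hq : 0 ≤ (D0 + 1) / (-D2) := div_nonneg (by linarith) (by linarith)
  have hq2 : (D0 + 1) / (-D2) * (-D2) = D0 + 1 := div_mul_cancel₀ _ (by linarith)
  nlinarith [mul_nonneg hq (neg_nonneg.mpr hneg.le),
    mul_nonneg (mul_nonneg hq hq) (neg_nonneg.mpr hneg.le)]

/-- The inequality behind `barrier_step`, in terms of the Bézout minors `D0`, `D1`, `D2` of the pair of
quadratics. The relation `syz` turns `D1² ≤ D0 D2` into the statement that `A + B s + C s²` is
nonpositive at `s = -D0 / D1`. -/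
lemma barrier_convexity {A B C D0 D1 D2 δ κ : ℝ}
    (hg : ∀ s, -δ ≤ s → 0 < A + B * s + C * s ^ 2) (hA : 0 < A) (hC : 0 ≤ C) (hδ0 : 0 ≤ δ)
    (hκ : 0 ≤ κ) (hg0 : 0 < A - B * δ + C * δ ^ 2) (hh : 0 < A - κ * C)
    (h8 : κ * B ≤ δ * (A - κ * C)) (hD0 : 0 ≤ D0) (hD1 : D1 ^ 2 ≤ D0 * D2)
    (syz : A * D2 - B * D1 + C * D0 = 0) :
    κ * D1 * (A - B * δ + C * δ ^ 2) ≤ (δ * D0 - δ ^ 2 * D1) * (A - κ * C) := by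
  rcases hD0.eq_or_lt with h0 | hpos
  · have : D1 = 0 := by
      rw [← h0, zero_mul] at hD1
      exact pow_eq_zero_iff two_ne_zero |>.mp (le_antisymm hD1 (sq_nonneg _))
    rw [← h0, this]; simp
  have quad : A * D1 ^ 2 - B * D0 * D1 + C * D0 ^ 2 ≤ 0 := by
    have h11 := mul_le_mul_of_nonneg_left hD1 hA.le
    have h12 : A * (D0 * D2) = D0 * (B * D1 - C * D0) := by linear_combination D0 * syz
    linarith
  rcases le_or_gt D1 0 with hn | hp
  · have h13 : κ * D1 * (A - B * δ + C * δ ^ 2) ≤ 0 :=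
      mul_nonpos_of_nonpos_of_nonneg (mul_nonpos_of_nonneg_of_nonpos hκ hn) hg0.le
    have h14 : 0 ≤ (δ * D0 - δ ^ 2 * D1) * (A - κ * C) := by
      apply mul_nonneg _ hh.le
      have := mul_nonneg hδ0 hpos.le
      have := mul_nonneg (sq_nonneg δ) (neg_nonneg.mpr hn)
      linarith
    linarith
  -- `-D0 / D1` is a point where `A + B s + C s² ≤ 0`, hence lies to the left of `-δ`
  have hlt : δ * D1 < D0 := by
    by_contra hcon
    push Not at hcon
    have h15 := hg (-D0 / D1) (by rw [le_div_iff₀ hp]; linarith)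
    have e : A + B * (-D0 / D1) + C * (-D0 / D1) ^ 2 =
        (A * D1 ^ 2 - B * D0 * D1 + C * D0 ^ 2) / D1 ^ 2 := by
      field_simp
      ring
    rw [e, div_pos_iff_of_pos_right (by positivity)] at h15
    linarith
  have c1 : A * D1 ≤ D0 * (B - C * δ) := by
    have h16 : D1 * (A * D1) ≤ D1 * (D0 * (B - C * δ)) := by
      linarith [mul_nonneg (mul_nonneg hC hpos.le) (sub_nonneg.mpr hlt.le)]
    exact le_of_mul_le_mul_left h16 hp
  have c2 : A * D1 ≤ D0 * B := by
    linarith [mul_nonneg (mul_nonneg hpos.le hC) hδ0]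
  have c3 : A * (κ * D1) ≤ D0 * δ * (A - κ * C) := by
    have h17 := mul_le_mul_of_nonneg_left c2 hκ
    have h18 := mul_le_mul_of_nonneg_left h8 hpos.le
    linarith
  have c4 : D0 * δ * (A - B * δ + C * δ ^ 2) ≤ A * (δ * D0 - δ ^ 2 * D1) := by
    linarith [mul_le_mul_of_nonneg_left c1 (sq_nonneg δ)]
  have c5 := mul_le_mul_of_nonneg_right c3 hg0.le
  have c6 := mul_le_mul_of_nonneg_right c4 hh.le
  refine le_of_mul_le_mul_left ?_ hA
  linarith

/-- One step of the barrier argument, for a base value `g(s) = A + B s + C s²` and a derivative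
`h(s) = A' + B' s + C' s²` along another direction, both restricted to a line. The operator
`1 - κ ∂_X ∂_Y` replaces `g(0)` by `A - κ C` and `h(0)` by `A' - κ C'`. The new value is positive, and
the new ratio of the two is at most the old ratio at `s = -δ`, hence at most `ψ`: the effect of the
operator on the barrier function is offset by a shift of length `δ = 2 κ φ`. -/
lemma barrier_step {A B C A' B' C' δ κ φ ψ : ℝ}
    (hg : ∀ s, -δ ≤ s → 0 < A + B * s + C * s ^ 2)
    (hD0 : 0 ≤ A' * B - B' * A) (hD2 : 0 ≤ B' * C - C' * B)
    (hD1 : (A' * C - C' * A) ^ 2 ≤ (A' * B - B' * A) * (B' * C - C' * B))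
    (hdisc : C ≠ 0 → 4 * A * C ≤ B ^ 2)
    (hφ : B ≤ φ * A) (hφ0 : 0 ≤ φ) (hκ : 0 ≤ κ) (hκφ : κ * φ ^ 2 ≤ 2) (hδ : δ = 2 * κ * φ)
    (hψ : A' - B' * δ + C' * δ ^ 2 ≤ ψ * (A - B * δ + C * δ ^ 2)) :
    0 < A - κ * C ∧ A' - κ * C' ≤ ψ * (A - κ * C) := by
  have hδ0 : 0 ≤ δ := by rw [hδ]; positivity
  have hA : 0 < A := by simpa using hg 0 (by linarith)
  have hg0 : 0 < A - B * δ + C * δ ^ 2 := by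
    have := hg (-δ) le_rfl; nlinarith
  -- positivity on a half-line forces the leading coefficient to be nonnegative
  have hC : 0 ≤ C := by
    by_contra hneg
    push Not at hneg
    set s := (A + |B| + 1) / (-C) + 1 with hs
    have hq : 0 ≤ (A + |B| + 1) / (-C) := div_nonneg (by positivity) (by linarith)
    have h1 : 1 ≤ s := by rw [hs]; linarith
    have hCs : C * s = -(A + |B| + 1) + C := by
      rw [hs]; field_simp [hneg.ne]
    have := hg s (by linarith)
    have e : A + B * s + C * s ^ 2 = A + (B + C * s) * s := by ring
    rw [e, hCs] at this
    nlinarith [le_abs_self B]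
  -- a quadratic with real roots, positive on `[0, ∞)`, is increasing there
  have hB : 0 ≤ B := by
    by_contra hneg
    push Not at hneg
    rcases hC.eq_or_lt with h0 | hpos
    · subst h0
      have := hg (A / -B) (by have := div_nonneg hA.le (neg_nonneg.mpr hneg.le); linarith)
      rw [div_neg, mul_neg, mul_div_cancel₀ _ hneg.ne] at this
      simp at this
    · have hd := hdisc hpos.ne'
      have := hg (-B / (2 * C))
        (by have := div_nonneg (neg_nonneg.mpr hneg.le) (by positivity : 0 ≤ 2 * C); linarith)
      have e : A + B * (-B / (2 * C)) + C * (-B / (2 * C)) ^ 2 = (4 * A * C - B ^ 2) / (4 * C) := by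
        field_simp; ring
      rw [e, div_pos_iff_of_pos_right (by positivity)] at this
      linarith
  have hAC : 4 * A * C ≤ B ^ 2 := by
    by_cases h0 : C = 0
    · rw [h0]; simp; positivity
    · exact hdisc h0
  have h4 : 4 * C ≤ φ ^ 2 * A := by
    have : B ^ 2 ≤ (φ * A) ^ 2 := pow_le_pow_left₀ hB hφ 2
    have : A * (4 * C) ≤ A * (φ ^ 2 * A) := by nlinarith
    exact le_of_mul_le_mul_left this hA
  have h5 : 2 * (κ * C) ≤ A := by
    have h6 := mul_le_mul_of_nonneg_left h4 hκ
    have h7 := mul_le_mul_of_nonneg_right hκφ hA.le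
    nlinarith
  have hh : 0 < A - κ * C := by linarith
  have h8 : κ * B ≤ δ * (A - κ * C) := by
    have h9 : κ * B ≤ κ * (φ * A) := mul_le_mul_of_nonneg_left hφ hκ
    have h10 : 0 ≤ κ * φ * (A - 2 * (κ * C)) := mul_nonneg (by positivity) (by linarith)
    rw [hδ]; nlinarith
  refine ⟨hh, ?_⟩
  set D0 := A' * B - B' * A with eD0
  set D1 := A' * C - C' * A with eD1
  set D2 := B' * C - C' * B with eD2
  have syz : A * D2 - B * D1 + C * D0 = 0 := by rw [eD0, eD1, eD2]; ring
  have main : κ * D1 * (A - B * δ + C * δ ^ 2) ≤ (δ * D0 - δ ^ 2 * D1) * (A - κ * C) :=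
    barrier_convexity hg hA hC hδ0 hκ hg0 hh h8 hD0 hD1 syz
  have e1 : A * ((A' - κ * C') * (A - B * δ + C * δ ^ 2) - (A' - B' * δ + C' * δ ^ 2) * (A - κ * C))
      = κ * D1 * (A - B * δ + C * δ ^ 2) - (δ * D0 - δ ^ 2 * D1) * (A - κ * C) := by
    rw [eD0, eD1]; ring
  have e2 : (A' - κ * C') * (A - B * δ + C * δ ^ 2) ≤ (A' - B' * δ + C' * δ ^ 2) * (A - κ * C) := by
    have : A * ((A' - κ * C') * (A - B * δ + C * δ ^ 2)
        - (A' - B' * δ + C' * δ ^ 2) * (A - κ * C)) ≤ 0 := by rw [e1]; linarith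
    by_contra hcon
    push Not at hcon
    nlinarith [mul_pos hA (sub_pos.mpr hcon)]
  have e3 := mul_le_mul_of_nonneg_right hψ hh.le
  have e4 : (A' - κ * C') * (A - B * δ + C * δ ^ 2) ≤
      (ψ * (A - κ * C)) * (A - B * δ + C * δ ^ 2) := by linarith
  exact le_of_mul_le_mul_right e4 hg0

end

/-! ### Stability -/

section

variable {ι : Type*} [Fintype ι] [DecidableEq ι]

/-- The imaginary part `(X - Xᴴ) / 2i` of `X` is positive definite; equivalently, the quadratic form
of `X` takes nonzero vectors to the open upper half-plane. -/
def ImPD (X : Matrix ι ι ℂ) : Prop :=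
  ∀ v : ι → ℂ, v ≠ 0 → 0 < (star v ⬝ᵥ X *ᵥ v).im

lemma star_dotProduct_rankOne (u : ι → ℝ) (v : ι → ℂ) :
    star v ⬝ᵥ rankOne ℂ u *ᵥ v = (Complex.normSq (∑ i, (u i : ℂ) * v i) : ℂ) := by
  have h1 : rankOne ℂ u *ᵥ v = (∑ i, (u i : ℂ) * v i) • fun i => (u i : ℂ) := by
    ext i
    simp only [rankOne, mulVec, dotProduct, vecMulVec_apply, Pi.smul_apply, smul_eq_mul,
      Finset.sum_mul, Complex.coe_algebraMap]
    refine Finset.sum_congr rfl fun j _ => by ring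
  rw [h1, dotProduct_smul, Complex.normSq_eq_conj_mul_self, smul_eq_mul, mul_comm]
  congr 1
  simp [dotProduct, map_sum, mul_comm]

lemma ImPD.add_smul_rankOne {X : Matrix ι ι ℂ} (hX : ImPD X) (u : ι → ℝ) {z : ℂ} (hz : 0 ≤ z.im) :
    ImPD (X + z • rankOne ℂ u) := by
  intro v hv
  rw [add_mulVec, smul_mulVec, dotProduct_add, dotProduct_smul, star_dotProduct_rankOne,
    Complex.add_im, smul_eq_mul, Complex.im_mul_ofReal]
  have := hX v hv
  have := mul_nonneg hz (Complex.normSq_nonneg (∑ i, (u i : ℂ) * v i))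
  linarith

lemma ImPD.det_ne_zero {X : Matrix ι ι ℂ} (hX : ImPD X) : X.det ≠ 0 := by
  intro h
  obtain ⟨v, hv, h0⟩ := exists_mulVec_eq_zero_iff.mpr h
  have := hX v hv
  simp [h0] at this

lemma im_star_dotProduct_symm {H : Matrix ι ι ℝ} (hH : H.IsSymm) (v : ι → ℂ) :
    (star v ⬝ᵥ H.map (algebraMap ℝ ℂ) *ᵥ v).im = 0 := by
  rw [← Complex.conj_eq_iff_im]
  have h1 : (starRingEnd ℂ) (star v ⬝ᵥ H.map (algebraMap ℝ ℂ) *ᵥ v) =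
      star (star v ⬝ᵥ H.map (algebraMap ℝ ℂ) *ᵥ v) := rfl
  rw [h1, ← star_dotProduct_star, star_star, star_mulVec, ← dotProduct_mulVec]
  congr 2
  ext i j
  simp [conjTranspose_apply, hH.apply]

lemma ImPD.symm_add {H : Matrix ι ι ℝ} (hH : H.IsSymm) {z : ℂ} (hz : 0 < z.im) :
    ImPD (H.map (algebraMap ℝ ℂ) + z • (1 : Matrix ι ι ℂ)) := by
  intro v hv
  rw [add_mulVec, dotProduct_add, Complex.add_im, im_star_dotProduct_symm hH, zero_add,
    smul_mulVec, one_mulVec, dotProduct_smul]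
  have h1 : star v ⬝ᵥ v = ((∑ i, Complex.normSq (v i) : ℝ) : ℂ) := by
    simp [dotProduct, Complex.normSq_eq_conj_mul_self]
  rw [h1, smul_eq_mul, Complex.im_mul_ofReal]
  apply mul_pos hz
  obtain ⟨i, hi⟩ := Function.ne_iff.mp hv
  exact Finset.sum_pos' (fun j _ => Complex.normSq_nonneg _)
    ⟨i, Finset.mem_univ _, Complex.normSq_pos.mpr hi⟩

/-- Stability of `mixed`: the operators in its definition preserve the absence of zeros on pairs of
matrices with positive definite imaginary part, because `mixed` at `(X + z u uᵀ, Y + z u uᵀ)` is a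
quadratic in `z` without zeros in the closed upper half-plane. -/
theorem mixed_ne_zero (L : List (ℝ × (ι → ℝ))) (hL : ∀ p ∈ L, 0 ≤ p.1) {X Y : Matrix ι ι ℂ}
    (hX : ImPD X) (hY : ImPD Y) : mixed ℂ L X Y ≠ 0 := by
  induction L generalizing X Y with
  | nil => exact mul_ne_zero hX.det_ne_zero hY.det_ne_zero
  | cons p L ih =>
    rw [mixed_cons]
    refine sub_mul_ne_zero_of_stable (b := linCoeff L p.2 X Y) (fun z hz => ?_)
      (hL p List.mem_cons_self)
    rw [← mixed_add_smul]
    exact ih (fun q hq => hL q (List.mem_cons_of_mem _ hq)) (hX.add_smul_rankOne _ hz)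
      (hY.add_smul_rankOne _ hz)

lemma continuous_mixed (L : List (ℝ × (ι → ℝ))) {f g : ℝ → Matrix ι ι ℂ} (hf : Continuous f)
    (hg : Continuous g) : Continuous fun t => mixed ℂ L (f t) (g t) := by
  induction L generalizing f g with
  | nil => exact hf.matrix_det.mul hg.matrix_det
  | cons p L ih =>
    have hf' : Continuous fun t => f t + rankOne ℂ p.2 := hf.add continuous_const
    have hg' : Continuous fun t => g t + rankOne ℂ p.2 := hg.add continuous_const
    exact (ih hf hg).sub (continuous_const.mul
      ((((ih hf' hg').sub (ih hf' hg)).sub (ih hf hg')).add (ih hf hg)))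

/-- On the line `H + s u uᵀ`, `Im s ≥ 0`, the logarithmic derivative of `mixed` along `w wᵀ` has
nonpositive imaginary part. For arguments with positive definite imaginary part this is stability;
the real symmetric `H` is the limit of `H + iη` as `η` decreases to `0`. -/
lemma im_linCoeff_mul_conj_nonpos (L : List (ℝ × (ι → ℝ))) (hL : ∀ p ∈ L, 0 ≤ p.1)
    {H : Matrix ι ι ℝ} (hH : H.IsSymm) (u w : ι → ℝ) {s : ℂ} (hs : 0 ≤ s.im) :
    (linCoeff L w (H.map (algebraMap ℝ ℂ) + s • rankOne ℂ u)
        (H.map (algebraMap ℝ ℂ) + s • rankOne ℂ u) *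
      (starRingEnd ℂ) (mixed ℂ L (H.map (algebraMap ℝ ℂ) + s • rankOne ℂ u)
        (H.map (algebraMap ℝ ℂ) + s • rankOne ℂ u))).im ≤ 0 := by
  set X : ℝ → Matrix ι ι ℂ := fun η =>
    H.map (algebraMap ℝ ℂ) + (η * Complex.I) • (1 : Matrix ι ι ℂ) + s • rankOne ℂ u with hX
  have hX0 : H.map (algebraMap ℝ ℂ) + s • rankOne ℂ u = X 0 := by simp [hX]
  have hXc : Continuous X := by rw [hX]; fun_prop
  have hXW : Continuous fun η => X η + rankOne ℂ w := hXc.add continuous_const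
  rw [hX0]
  have hcont : Continuous fun η => (linCoeff L w (X η) (X η) *
      (starRingEnd ℂ) (mixed ℂ L (X η) (X η))).im := by
    refine Complex.continuous_im.comp (Continuous.mul ?_
      (Complex.continuous_conj.comp (continuous_mixed L hXc hXc)))
    exact ((continuous_mixed L hXW hXc).add (continuous_mixed L hXc hXW)).sub
      (continuous_const.mul (continuous_mixed L hXc hXc))
  have lim := tendsto_nhdsWithin_of_tendsto_nhds (s := Set.Ioi 0) (hcont.tendsto 0)
  refine le_of_tendsto lim (Filter.eventually_of_mem self_mem_nhdsWithin fun η hη => ?_)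
  have hη' : 0 < ((η : ℂ) * Complex.I).im := by simpa using hη
  refine im_mul_conj_nonpos_of_stable (c := quadCoeff L w (X η) (X η)) fun z hz => ?_
  rw [← mixed_add_smul]
  have : ImPD (X η) := (ImPD.symm_add hH hη').add_smul_rankOne u hs
  exact mixed_ne_zero L hL (this.add_smul_rankOne w hz) (this.add_smul_rankOne w hz)

lemma ofReal_mixed (L : List (ℝ × (ι → ℝ))) (X Y : Matrix ι ι ℝ) :
    ((mixed ℝ L X Y : ℝ) : ℂ) = mixed ℂ L (X.map (algebraMap ℝ ℂ)) (Y.map (algebraMap ℝ ℂ)) :=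
  map_mixed (Algebra.ofId ℝ ℂ) L X Y

lemma map_add_rankOne (X : Matrix ι ι ℝ) (u : ι → ℝ) :
    (X + rankOne ℝ u).map (algebraMap ℝ ℂ) = X.map (algebraMap ℝ ℂ) + rankOne ℂ u := by
  ext i j; simp [rankOne, vecMulVec_apply]

lemma ofReal_linCoeff (L : List (ℝ × (ι → ℝ))) (u : ι → ℝ) (X Y : Matrix ι ι ℝ) :
    ((linCoeff L u X Y : ℝ) : ℂ) =
      linCoeff L u (X.map (algebraMap ℝ ℂ)) (Y.map (algebraMap ℝ ℂ)) := by
  simp only [linCoeff, Complex.ofReal_sub, Complex.ofReal_add, Complex.ofReal_mul, ofReal_mixed,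
    map_add_rankOne, Complex.ofReal_ofNat]

lemma ofReal_quadCoeff (L : List (ℝ × (ι → ℝ))) (u : ι → ℝ) (X Y : Matrix ι ι ℝ) :
    ((quadCoeff L u X Y : ℝ) : ℂ) =
      quadCoeff L u (X.map (algebraMap ℝ ℂ)) (Y.map (algebraMap ℝ ℂ)) := by
  simp only [quadCoeff, Complex.ofReal_sub, Complex.ofReal_add, ofReal_mixed, map_add_rankOne]

/-- The Bézout form of `mixed` and of its derivative along `w wᵀ`, as quadratics in a shift of both
arguments along `u uᵀ`, is positive semidefinite. -/
lemma bezout_mixed (L : List (ℝ × (ι → ℝ))) (hL : ∀ p ∈ L, 0 ≤ p.1)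
    {H : Matrix ι ι ℝ} (hH : H.IsSymm) (u w : ι → ℝ) {A B C A' B' C' : ℝ}
    (hA : A = mixed ℝ L H H) (hB : B = linCoeff L u H H) (hC : C = quadCoeff L u H H)
    (hA' : A' = linCoeff L w H H)
    (hB' : B' = linCoeff L u (H + rankOne ℝ w) H + linCoeff L u H (H + rankOne ℝ w)
      - 2 * linCoeff L u H H)
    (hC' : C' = quadCoeff L u (H + rankOne ℝ w) H + quadCoeff L u H (H + rankOne ℝ w)
      - 2 * quadCoeff L u H H) :
    0 ≤ A' * B - B' * A ∧ 0 ≤ B' * C - C' * B ∧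
      (A' * C - C' * A) ^ 2 ≤ (A' * B - B' * A) * (B' * C - C' * B) := by
  apply bezout_of_im
  intro s hs
  have := im_linCoeff_mul_conj_nonpos L hL hH u w hs
  rw [linCoeff_add_smul, mixed_add_smul] at this
  simpa only [hA, hB, hC, hA', hB', hC', Complex.ofReal_sub, Complex.ofReal_add, Complex.ofReal_mul,
    ofReal_mixed, ofReal_linCoeff, ofReal_quadCoeff, map_add_rankOne,
    Complex.ofReal_ofNat] using this

/-- The quadratic `mixed ℝ L (H + z u uᵀ) (H + z u uᵀ)` is real-rooted, by positivity of the Bézout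
form of the quadratic and its derivative. -/
lemma discrim_mixed (L : List (ℝ × (ι → ℝ))) (hL : ∀ p ∈ L, 0 ≤ p.1)
    {H : Matrix ι ι ℝ} (hH : H.IsSymm) (u : ι → ℝ) (hC : quadCoeff L u H H ≠ 0) :
    4 * mixed ℝ L H H * quadCoeff L u H H ≤ linCoeff L u H H ^ 2 := by
  have := bezout_of_im (A := mixed ℝ L H H) (B := linCoeff L u H H) (C := quadCoeff L u H H)
    (A' := linCoeff L u H H) (B' := 2 * quadCoeff L u H H) (C' := 0) (fun s hs => by
      have := im_linCoeff_mul_conj_nonpos L hL hH u u hs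
      rw [linCoeff_add_smul_self, mixed_add_smul] at this
      simpa only [Complex.ofReal_mul, ofReal_mixed, ofReal_linCoeff, ofReal_quadCoeff,
        Complex.ofReal_ofNat, Complex.ofReal_zero, zero_mul, add_zero] using this)
  obtain ⟨-, -, h⟩ := this
  set A := mixed ℝ L H H
  set B := linCoeff L u H H
  set C := quadCoeff L u H H
  have hC2 : 0 < C ^ 2 := by positivity
  have : C ^ 2 * (4 * A * C) ≤ C ^ 2 * B ^ 2 := by nlinarith
  exact le_of_mul_le_mul_left this hC2

end

/-! ### The barrier bound -/

section

variable {ι : Type*} [Fintype ι] [DecidableEq ι]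

lemma rankOne_real (u : ι → ℝ) : rankOne ℝ u = vecMulVec u u := rfl

lemma posSemidef_rankOne (u : ι → ℝ) : (rankOne ℝ u).PosSemidef := by
  simpa [rankOne_real] using posSemidef_vecMulVec_self_star u

lemma isSymm_rankOne (u : ι → ℝ) : (rankOne ℝ u).IsSymm := by
  ext i j; simp [rankOne, vecMulVec_apply, mul_comm]

/-- If `H ⪰ lam I`, the matrix determinant lemma and `wᵀ H⁻¹ w ≤ |w|² / lam` bound the growth of the
determinant along `w wᵀ`. -/
lemma det_add_rankOne_le {H : Matrix ι ι ℝ} {lam : ℝ} (hlam : 0 < lam)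
    (hH : (H - lam • (1 : Matrix ι ι ℝ)).PosSemidef) (w : ι → ℝ) :
    0 < H.det ∧ (H + rankOne ℝ w).det ≤ H.det * (1 + (w ⬝ᵥ w) / lam) := by
  have hPD : H.PosDef := by
    have : (lam • (1 : Matrix ι ι ℝ)).PosDef := PosDef.one.smul hlam
    simpa using this.posSemidef_add hH
  have hdet := hPD.det_pos
  refine ⟨hdet, ?_⟩
  have hu : IsUnit H.det := hdet.ne'.isUnit
  rw [rankOne_real, vecMulVec_eq Unit, det_add_replicateCol_mul_replicateRow hu]
  refine mul_le_mul_of_nonneg_left ?_ hdet.le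
  set y := H⁻¹ *ᵥ w with hy
  have hw : H *ᵥ y = w := by rw [hy, mulVec_mulVec, mul_nonsing_inv _ hu, one_mulVec]
  have e : (1 + replicateRow Unit w * H⁻¹ * replicateCol Unit w).det = 1 + w ⬝ᵥ y := by
    rw [det_unique, hy, dotProduct_mulVec]
    simp [Matrix.mul_apply, dotProduct, vecMul]
  rw [e]
  have h1 : lam * (y ⬝ᵥ y) ≤ w ⬝ᵥ y := by
    have := hH.dotProduct_mulVec_nonneg y
    rw [sub_mulVec, hw, smul_mulVec, one_mulVec, star_trivial, dotProduct_sub, dotProduct_smul,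
      smul_eq_mul, dotProduct_comm y w] at this
    linarith
  have h2 : (w ⬝ᵥ y) ^ 2 ≤ (w ⬝ᵥ w) * (y ⬝ᵥ y) := by
    have := Finset.sum_mul_sq_le_sq_mul_sq Finset.univ w y
    simpa [dotProduct, pow_two] using this
  have hyy : 0 ≤ y ⬝ᵥ y := by simpa using dotProduct_star_self_nonneg y
  have hww : 0 ≤ w ⬝ᵥ w := by simpa using dotProduct_star_self_nonneg w
  have hq : 0 ≤ w ⬝ᵥ y := le_trans (by positivity) h1
  have : w ⬝ᵥ y ≤ (w ⬝ᵥ w) / lam := by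
    rw [le_div_iff₀ hlam]
    rcases hq.eq_or_lt with h0 | hpos
    · rw [← h0]; simpa using hww
    · have h3 : (w ⬝ᵥ y) * (w ⬝ᵥ y * lam) ≤ (w ⬝ᵥ y) * (w ⬝ᵥ w) := by
        have := mul_le_mul_of_nonneg_left h1 hww
        have := mul_le_mul_of_nonneg_left h2 hlam.le
        nlinarith
      exact le_of_mul_le_mul_left h3 hpos
  linarith

/-- The total shift spent by the barrier argument: each `(κ, u)` in the list costs `δ u uᵀ` with
`δ = 2 κ φ`, where `φ = 2 |u|² / lam` bounds the logarithmic derivative of `mixed` along `u uᵀ`. -/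
noncomputable def totalShift (lam : ℝ) (L : List (ℝ × (ι → ℝ))) : Matrix ι ι ℝ :=
  (L.map fun p => (4 * p.1 * (p.2 ⬝ᵥ p.2) / lam) • rankOne ℝ p.2).sum

/-- The barrier bound: above `totalShift lam L + lam I` the function `mixed` on the diagonal is positive
and its logarithmic derivative along `w wᵀ` is at most `2 |w|² / lam`, its bound for the empty list. -/
theorem barrier (lam : ℝ) (hlam : 0 < lam) (L : List (ℝ × (ι → ℝ)))
    (hL : ∀ p ∈ L, 0 ≤ p.1 ∧ p.1 * (2 * (p.2 ⬝ᵥ p.2) / lam) ^ 2 ≤ 2)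
    (H : Matrix ι ι ℝ)
    (hpsd : (H - totalShift lam L - lam • (1 : Matrix ι ι ℝ)).PosSemidef) :
    0 < mixed ℝ L H H ∧
      ∀ w, linCoeff L w H H ≤ (2 * (w ⬝ᵥ w) / lam) * mixed ℝ L H H := by
  induction L generalizing H with
  | nil =>
    simp only [totalShift, List.map_nil, List.sum_nil, sub_zero] at hpsd
    have hd := (det_add_rankOne_le hlam hpsd 0).1
    refine ⟨mul_pos hd hd, fun w => ?_⟩
    have := (det_add_rankOne_le hlam hpsd w).2
    simp only [linCoeff, mixed]
    have h2 := mul_le_mul_of_nonneg_left this hd.le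
    have e : H.det * (H.det * (1 + w ⬝ᵥ w / lam)) =
        H.det * H.det + (2 * (w ⬝ᵥ w) / lam) * (H.det * H.det) / 2 := by ring
    linarith
  | cons p L ih =>
    have hL' := fun q hq => hL q (List.mem_cons_of_mem p hq)
    have hL0 : ∀ q ∈ L, 0 ≤ q.1 := fun q hq => (hL' q hq).1
    obtain ⟨hκ, hκφ⟩ := hL p List.mem_cons_self
    obtain ⟨κ, u⟩ := p
    simp only at hκ hκφ
    have huu : 0 ≤ u ⬝ᵥ u := by simpa using dotProduct_star_self_nonneg u
    set φ := 2 * (u ⬝ᵥ u) / lam with hφ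
    have hφ0 : 0 ≤ φ := by positivity
    set δ := 2 * κ * φ with hδ
    have hshift : totalShift lam ((κ, u) :: L) = δ • rankOne ℝ u + totalShift lam L := by
      simp only [totalShift, List.map_cons, List.sum_cons]
      congr 2
      rw [hδ, hφ]; ring
    have hmove : ∀ s, -δ ≤ s →
        (H + s • rankOne ℝ u - totalShift lam L - lam • (1 : Matrix ι ι ℝ)).PosSemidef := by
      intro s hs
      have := hpsd.add ((posSemidef_rankOne u).smul (a := s + δ) (by linarith))
      rw [hshift] at this
      convert this using 1
      rw [add_smul]; abel
    have hδ0 : 0 ≤ δ := by positivity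
    have hH0 := hmove 0 (by linarith)
    rw [zero_smul, add_zero] at hH0
    have hsymm : H.IsSymm := by
      have h1 : totalShift lam L = (totalShift lam L)ᵀ := by
        clear * -
        induction L with
        | nil => simp [totalShift]
        | cons q L ih =>
          simp only [totalShift, List.map_cons, List.sum_cons] at ih ⊢
          rw [transpose_add, ← ih, transpose_smul, isSymm_rankOne q.2]
      have h2 := hH0.isHermitian
      rw [IsHermitian, conjTranspose_eq_transpose_of_trivial, transpose_sub, transpose_sub,
        ← h1, transpose_smul, transpose_one, sub_left_inj, sub_left_inj] at h2
      exact h2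
    have hbase := ih hL' H hH0
    have key : ∀ w, _ := fun w => by
      obtain ⟨b0, b2, b1⟩ := bezout_mixed L hL0 hsymm u w rfl rfl rfl rfl rfl rfl
      refine barrier_step (δ := δ) (κ := κ) (φ := φ) (ψ := 2 * (w ⬝ᵥ w) / lam) ?_ b0 b2 b1
        (discrim_mixed L hL0 hsymm u) (hbase.2 u) hφ0 hκ hκφ hδ ?_
      · intro s hs
        rw [← mixed_add_smul]
        exact (ih hL' _ (hmove s hs)).1
      · have := (ih hL' _ (hmove (-δ) le_rfl)).2 w
        rw [linCoeff_add_smul, mixed_add_smul] at this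
        simpa [← sub_eq_add_neg] using this
    exact ⟨(key 0).1, fun w => by rw [linCoeff_cons]; exact (key w).2⟩

end

/-! ### Segments of real-rooted polynomials -/

section

open Polynomial

/-- A monic real-rooted polynomial without roots in `[β, ∞)` is a product of factors `(X - β) + (β - r)`
with `β - r > 0`, so its Taylor coefficients at `β` are positive. -/
lemma taylor_coeff_pos {f : ℝ[X]} (hf : f.Monic) (β : ℝ)
    (hreal : ∀ z : ℂ, aeval z f = 0 → z.im = 0) (hroot : ∀ x : ℝ, β ≤ x → f.eval x ≠ 0) :
    ∀ k ≤ f.natDegree, 0 < (taylor β f).coeff k := by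
  induction hd : f.natDegree generalizing f with
  | zero =>
    intro k hk
    rw [Nat.le_zero.mp hk, (hf.natDegree_eq_zero).mp hd]
    simp
  | succ d ih =>
    have hdeg : f.degree ≠ 0 := by
      intro h0
      rw [natDegree_eq_of_degree_eq_some h0] at hd
      exact Nat.succ_ne_zero d hd.symm
    obtain ⟨z, hz⟩ := IsAlgClosed.exists_aeval_eq_zero ℂ f hdeg
    have hzr : ((z.re : ℝ) : ℂ) = z := Complex.ext rfl (by simp [hreal z hz])
    set r := z.re
    have hr : f.eval r = 0 := by
      rw [← hzr, ← Complex.coe_algebraMap,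
        Polynomial.aeval_algebraMap_apply_eq_algebraMap_eval] at hz
      exact Complex.ofReal_eq_zero.mp hz
    obtain ⟨g, hg⟩ := dvd_iff_isRoot.mpr hr
    have hgm : g.Monic := by
      rw [hg] at hf
      exact (monic_X_sub_C r).of_mul_monic_left hf
    have hgd : g.natDegree = d := by
      rw [hg, (monic_X_sub_C r).natDegree_mul hgm, natDegree_X_sub_C] at hd
      omega
    have hrβ : 0 < β - r := by
      by_contra hcon
      exact hroot r (by linarith) hr
    have hpos := ih hgm (fun z hz => hreal z (by rw [hg, map_mul, hz, mul_zero]))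
      (fun x hx h0 => hroot x hx (by rw [hg, eval_mul, h0, mul_zero])) hgd
    have htop : ∀ k, 0 ≤ (taylor β g).coeff k := by
      intro k
      rcases le_or_gt k d with h | h
      · exact (hpos k h).le
      · rw [coeff_eq_zero_of_natDegree_lt (by rw [natDegree_taylor]; omega)]
    have e : taylor β f = X * taylor β g + C (β - r) * taylor β g := by
      rw [hg, taylor_mul, map_sub, taylor_X, taylor_C, C_sub]
      ring
    intro k hk
    rw [e, coeff_add, coeff_C_mul]
    cases k with
    | zero => simpa using mul_pos hrβ (hpos 0 (Nat.zero_le _))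
    | succ k =>
      rw [coeff_X_mul]
      exact add_pos_of_pos_of_nonneg (hpos k (by omega)) (mul_nonneg hrβ.le (htop _))

lemma no_root_of_taylor_coeff {f : ℝ[X]} {β : ℝ} (h0 : 0 < (taylor β f).coeff 0)
    (h : ∀ k, 0 ≤ (taylor β f).coeff k) : ∀ x : ℝ, β ≤ x → f.eval x ≠ 0 := by
  intro x hx
  have e : f.eval x = (taylor β f).eval (x - β) := by rw [taylor_eval]; simp
  rw [e, eval_eq_sum_range]
  apply ne_of_gt
  refine Finset.sum_pos' (fun k _ => mul_nonneg (h k) (pow_nonneg (sub_nonneg.mpr hx) k))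
    ⟨0, by simp, by simpa using h0⟩

/-- Along a segment of monic real-rooted polynomials, the absence of roots in `[β, ∞)` propagates from
`f θ₀` to `f 1` as soon as `f 1` is positive at `β`. Having no roots in `[β, ∞)` amounts to positivity
of the Taylor coefficients at `β`, an open condition. It cannot be lost, since a polynomial of the
segment with nonnegative Taylor coefficients and positive value at `β` satisfies it again. -/
lemma no_root_propagates {d : ℕ} {f : ℝ → ℝ[X]} {β θ₀ : ℝ} {f₀ f₁ : ℝ[X]}
    (hf : ∀ θ, f θ = C (1 - θ) * f₀ + C θ * f₁)
    (hm : ∀ θ, (f θ).Monic ∧ (f θ).natDegree = d)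
    (hreal : ∀ θ ∈ Set.Icc (0 : ℝ) 1, ∀ z : ℂ, aeval z (f θ) = 0 → z.im = 0)
    (hθ₀ : θ₀ ∈ Set.Icc (0 : ℝ) 1) (hroot : ∀ x : ℝ, β ≤ x → (f θ₀).eval x ≠ 0)
    (h1 : 0 < (f 1).eval β) : ∀ x : ℝ, β ≤ x → (f 1).eval x ≠ 0 := by
  have hcoeff : ∀ k θ, (taylor β (f θ)).coeff k =
      (1 - θ) * (taylor β f₀).coeff k + θ * (taylor β f₁).coeff k := by
    intro k θ
    rw [hf, map_add, taylor_mul, taylor_mul, taylor_C, taylor_C, coeff_add, coeff_C_mul,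
      coeff_C_mul]
  have hcont : ∀ k, Continuous fun θ => (taylor β (f θ)).coeff k := by
    intro k; simp only [hcoeff]; fun_prop
  have hzero : ∀ k θ, d < k → (taylor β (f θ)).coeff k = 0 := by
    intro k θ hk
    rw [coeff_eq_zero_of_natDegree_lt]
    rw [natDegree_taylor, (hm θ).2]; exact hk
  have hpos0 := taylor_coeff_pos (hm θ₀).1 β (hreal θ₀ hθ₀) hroot
  rw [(hm θ₀).2] at hpos0
  have hc0 : ∀ θ ∈ Set.Icc θ₀ 1, 0 < (taylor β (f θ)).coeff 0 := by
    intro θ hθ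
    have ha := hpos0 0 (Nat.zero_le _)
    rw [← taylor_coeff_zero] at h1
    rw [hcoeff] at ha h1 ⊢
    rcases hθ.2.eq_or_lt with rfl | hlt
    · exact h1
    have hpos : 0 < 1 - θ₀ := by linarith [hθ.1]
    have hcomb : (1 - θ₀) * ((1 - θ) * (taylor β f₀).coeff 0 + θ * (taylor β f₁).coeff 0) =
        (1 - θ) * ((1 - θ₀) * (taylor β f₀).coeff 0 + θ₀ * (taylor β f₁).coeff 0)
        + (θ - θ₀) * ((1 - 1) * (taylor β f₀).coeff 0 + 1 * (taylor β f₁).coeff 0) := by ring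
    have : 0 < (1 - θ₀) * ((1 - θ) * (taylor β f₀).coeff 0 + θ * (taylor β f₁).coeff 0) := by
      rw [hcomb]
      exact add_pos_of_pos_of_nonneg (mul_pos (by linarith) ha)
        (mul_nonneg (by linarith [hθ.1]) h1.le)
    exact (mul_pos_iff_of_pos_left hpos).mp this
  -- the set of parameters with nonnegative Taylor coefficients is closed, and open to the right
  set S : Set ℝ := {θ | ∀ k, 0 ≤ (taylor β (f θ)).coeff k} with hS
  have hSclosed : IsClosed S := by
    rw [hS, Set.ofPred_forall]
    exact isClosed_iInter fun k => isClosed_le continuous_const (hcont k)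
  have hsub : Set.Icc θ₀ 1 ⊆ S := by
    apply IsClosed.Icc_subset_of_forall_mem_nhdsWithin (hSclosed.inter isClosed_Icc)
    · intro k
      rcases le_or_gt k d with h | h
      · exact (hpos0 k h).le
      · exact (hzero k θ₀ h).ge
    · rintro θ ⟨hθS, hθ⟩
      have hθ01 : θ ∈ Set.Icc (0 : ℝ) 1 := ⟨hθ₀.1.trans hθ.1, hθ.2.le⟩
      have hp := taylor_coeff_pos (hm θ).1 β (hreal θ hθ01)
        (no_root_of_taylor_coeff (hc0 θ ⟨hθ.1, hθ.2.le⟩) hθS)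
      rw [(hm θ).2] at hp
      apply mem_nhdsWithin_of_mem_nhds
      have : ∀ᶠ t in nhds θ, ∀ k ∈ Finset.range (d + 1), 0 < (taylor β (f t)).coeff k := by
        rw [Filter.eventually_all_finset]
        intro k hk
        exact (hcont k).continuousAt.eventually_const_lt (hp k (by simpa [Nat.lt_succ_iff] using hk))
      filter_upwards [this] with t ht k
      rcases le_or_gt k d with h | h
      · exact (ht k (by simpa [Nat.lt_succ_iff] using h)).le
      · exact (hzero k t h).ge
  exact no_root_of_taylor_coeff (hc0 1 ⟨hθ₀.2, le_rfl⟩) (hsub ⟨hθ₀.2, le_rfl⟩)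

/-- The interlacing-families step: if all convex combinations of `f₀` and `f₁` are monic of the same degree
and real-rooted, and one of them has no root in `[β, ∞)`, then `f₀` or `f₁` has none. The endpoint to
take is one at which the value at `β` is positive. -/
lemma no_root_choice {d : ℕ} {β θ₀ : ℝ} {f₀ f₁ : ℝ[X]}
    (hm : ∀ θ : ℝ, (C (1 - θ) * f₀ + C θ * f₁).Monic ∧ (C (1 - θ) * f₀ + C θ * f₁).natDegree = d)
    (hreal : ∀ θ ∈ Set.Icc (0 : ℝ) 1, ∀ z : ℂ, aeval z (C (1 - θ) * f₀ + C θ * f₁) = 0 → z.im = 0)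
    (hθ₀ : θ₀ ∈ Set.Icc (0 : ℝ) 1)
    (hroot : ∀ x : ℝ, β ≤ x → (C (1 - θ₀) * f₀ + C θ₀ * f₁).eval x ≠ 0) :
    (∀ x : ℝ, β ≤ x → f₀.eval x ≠ 0) ∨ (∀ x : ℝ, β ≤ x → f₁.eval x ≠ 0) := by
  have hp := taylor_coeff_pos (hm θ₀).1 β (hreal θ₀ hθ₀) hroot 0 (Nat.zero_le _)
  rw [taylor_coeff_zero, eval_add, eval_C_mul, eval_C_mul] at hp
  by_cases h1 : 0 < f₁.eval β
  · right
    have := no_root_propagates (fun θ => rfl) hm hreal hθ₀ hroot (by simpa using h1)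
    simpa using this
  · left
    have h0 : 0 < f₀.eval β := by
      push Not at h1
      by_contra hcon
      push Not at hcon
      have := mul_nonpos_of_nonneg_of_nonpos (sub_nonneg.mpr hθ₀.2) hcon
      have := mul_nonpos_of_nonneg_of_nonpos hθ₀.1 h1
      linarith
    have hsw : ∀ θ : ℝ, C (1 - θ) * f₁ + C θ * f₀ = C (1 - (1 - θ)) * f₀ + C (1 - θ) * f₁ := by
      intro θ; rw [sub_sub_cancel, add_comm]
    have := no_root_propagates (d := d) (β := β) (θ₀ := 1 - θ₀)
      (f := fun θ => C (1 - θ) * f₁ + C θ * f₀) (fun θ => rfl)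
      (fun θ => by simp only [hsw]; exact hm _)
      (fun θ hθ => by simp only [hsw]; exact hreal _ ⟨by linarith [hθ.2], by linarith [hθ.1]⟩)
      ⟨by linarith [hθ₀.2], by linarith [hθ₀.1]⟩
      (by simp only [sub_sub_cancel, add_comm (C θ₀ * f₁)]; exact hroot) (by simpa using h0)
    simpa using this

end

/-! ### Expected characteristic polynomials -/

section

open Polynomial

variable {ι : Type*} [Fintype ι] [DecidableEq ι]

/-- The polynomial `mixed L (t I - M) (t I - N)` in `t`. For the empty list it is the product of the two
characteristic polynomials. With `N = -M` and the variances of independent Bernoulli variables `ξ_i`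
in the list, it is the expectation of the product of the characteristic polynomials of `± M'`, where
`M' = M + ∑ i, (ξ_i - E ξ_i) u_i u_iᵀ`. -/
noncomputable def expPoly (L : List (ℝ × (ι → ℝ))) (M N : Matrix ι ι ℝ) : ℝ[X] :=
  mixed ℝ[X] L (charmatrix M) (charmatrix N)

lemma charmatrix_add_smul_rankOne (M : Matrix ι ι ℝ) (u : ι → ℝ) (a : ℝ) :
    charmatrix M + algebraMap ℝ ℝ[X] a • rankOne ℝ[X] u = charmatrix (M - a • rankOne ℝ u) := by
  ext i j
  simp [charmatrix, rankOne, vecMulVec_apply, Polynomial.algebraMap_eq]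
  ring_nf

lemma charmatrix_add_rankOne (M : Matrix ι ι ℝ) (u : ι → ℝ) :
    charmatrix M + rankOne ℝ[X] u = charmatrix (M - rankOne ℝ u) := by
  simpa using charmatrix_add_smul_rankOne M u 1

lemma expPoly_degree (L : List (ℝ × (ι → ℝ))) (M N : Matrix ι ι ℝ) :
    (expPoly L M N).natDegree ≤ 2 * Fintype.card ι ∧
      (expPoly L M N).coeff (2 * Fintype.card ι) = 1 := by
  induction L generalizing M N with
  | nil =>
    have hM := M.charpoly_monic
    have hN := N.charpoly_monic
    have e : expPoly [] M N = M.charpoly * N.charpoly := rfl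
    have hd : (M.charpoly * N.charpoly).natDegree = 2 * Fintype.card ι := by
      rw [hM.natDegree_mul hN, M.charpoly_natDegree_eq_dim, N.charpoly_natDegree_eq_dim, two_mul]
    rw [e]
    refine ⟨hd.le, ?_⟩
    rw [← hd]
    exact hM.mul hN
  | cons p L ih =>
    have e : expPoly (p :: L) M N = expPoly L M N - C p.1 *
        (expPoly L (M - rankOne ℝ p.2) (N - rankOne ℝ p.2) - expPoly L (M - rankOne ℝ p.2) N
        - expPoly L M (N - rankOne ℝ p.2) + expPoly L M N) := by
      simp only [expPoly, mixed, charmatrix_add_rankOne, Polynomial.algebraMap_eq]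
    rw [e]
    constructor
    · refine (natDegree_sub_le _ _).trans (max_le (ih _ _).1 ((natDegree_C_mul_le _ _).trans ?_))
      refine (natDegree_add_le _ _).trans (max_le ?_ (ih _ _).1)
      refine (natDegree_sub_le _ _).trans (max_le ?_ (ih _ _).1)
      exact (natDegree_sub_le _ _).trans (max_le (ih _ _).1 (ih _ _).1)
    · simp [(ih _ _).2]

lemma expPoly_monic (L : List (ℝ × (ι → ℝ))) (M N : Matrix ι ι ℝ) :
    (expPoly L M N).Monic ∧ (expPoly L M N).natDegree = 2 * Fintype.card ι := by
  obtain ⟨h1, h2⟩ := expPoly_degree L M N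
  have h3 : (expPoly L M N).natDegree = 2 * Fintype.card ι :=
    le_antisymm h1 (le_natDegree_of_ne_zero (by rw [h2]; exact one_ne_zero))
  refine ⟨?_, h3⟩
  rw [Monic, leadingCoeff, h3, h2]

lemma map_charmatrix_aeval (M : Matrix ι ι ℝ) {K : Type*} [CommRing K] [Algebra ℝ K] (z : K) :
    (charmatrix M).map (aeval z : ℝ[X] →ₐ[ℝ] K) =
      (-M).map (algebraMap ℝ K) + z • (1 : Matrix ι ι K) := by
  ext i j
  by_cases h : i = j
  · subst h; simp [charmatrix_apply_eq]; ring
  · simp [h]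

lemma aeval_expPoly (L : List (ℝ × (ι → ℝ))) (M N : Matrix ι ι ℝ) {K : Type*} [CommRing K]
    [Algebra ℝ K] (z : K) : aeval z (expPoly L M N) =
      mixed K L ((-M).map (algebraMap ℝ K) + z • (1 : Matrix ι ι K))
        ((-N).map (algebraMap ℝ K) + z • (1 : Matrix ι ι K)) := by
  rw [expPoly, map_mixed, map_charmatrix_aeval, map_charmatrix_aeval]

lemma expPoly_real_rooted (L : List (ℝ × (ι → ℝ))) (hL : ∀ p ∈ L, 0 ≤ p.1) {M N : Matrix ι ι ℝ}
    (hM : M.IsSymm) (hN : N.IsSymm) (z : ℂ) (hz : aeval z (expPoly L M N) = 0) : z.im = 0 := by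
  have key : ∀ z : ℂ, 0 < z.im → aeval z (expPoly L M N) ≠ 0 := by
    intro z hz
    rw [aeval_expPoly]
    exact mixed_ne_zero L hL (ImPD.symm_add hM.neg hz) (ImPD.symm_add hN.neg hz)
  rcases lt_trichotomy z.im 0 with h | h | h
  · exfalso
    refine key ((starRingEnd ℂ) z) (by simpa using h) ?_
    rw [aeval_conj, hz, map_zero]
  · exact h
  · exact absurd hz (key z h)

lemma expPoly_convex (L : List (ℝ × (ι → ℝ))) (u : ι → ℝ) (M N : Matrix ι ι ℝ) (θ a : ℝ) :
    C (1 - θ) * expPoly L (M + (-a) • rankOne ℝ u) (N - (-a) • rankOne ℝ u) +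
      C θ * expPoly L (M + (1 - a) • rankOne ℝ u) (N - (1 - a) • rankOne ℝ u) =
    expPoly ((θ * (1 - θ), u) :: L) (M + (θ - a) • rankOne ℝ u) (N - (θ - a) • rankOne ℝ u) := by
  have h := mixed_sub_add L u (charmatrix M) (charmatrix N) θ a
  have hs : ∀ b : ℝ, charmatrix M - algebraMap ℝ ℝ[X] b • rankOne ℝ[X] u =
      charmatrix (M + b • rankOne ℝ u) := by
    intro b
    have := charmatrix_add_smul_rankOne M u (-b)
    rwa [map_neg, neg_smul, neg_smul, sub_neg_eq_add, ← sub_eq_add_neg] at this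
  simp only [hs, charmatrix_add_smul_rankOne] at h
  simpa only [expPoly, Polynomial.algebraMap_eq] using h

/-- The method of conditional expectations: if the expected polynomial has no root in `[β, ∞)`, the
Bernoulli variables can be fixed one after another without creating such a root. -/
theorem exists_rounding (β : ℝ) {m : ℕ} (p : Fin m → ℝ) (u : Fin m → ι → ℝ)
    (hp : ∀ i, 0 ≤ p i ∧ p i ≤ 1) (M : Matrix ι ι ℝ) (hM : M.IsSymm)
    (hroot : ∀ x : ℝ, β ≤ x →
      (expPoly (List.ofFn fun i => (p i * (1 - p i), u i)) M (-M)).eval x ≠ 0) :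
    ∃ z : Fin m → ℝ, (∀ i, z i = 0 ∨ z i = 1) ∧ ∀ x : ℝ, β ≤ x →
      (expPoly [] (M + ∑ i, (z i - p i) • rankOne ℝ (u i))
        (-(M + ∑ i, (z i - p i) • rankOne ℝ (u i)))).eval x ≠ 0 := by
  induction m generalizing M with
  | zero => exact ⟨0, fun i => i.elim0, by simpa using hroot⟩
  | succ m ih =>
    rw [List.ofFn_succ] at hroot
    set L := List.ofFn fun i : Fin m => (p i.succ * (1 - p i.succ), u i.succ) with hLdef
    have hL : ∀ q ∈ L, 0 ≤ q.1 := by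
      intro q hq
      rw [hLdef, List.mem_ofFn] at hq
      obtain ⟨i, rfl⟩ := hq
      exact mul_nonneg (hp _).1 (sub_nonneg.mpr (hp _).2)
    have hsy : ∀ b : ℝ, (M + b • rankOne ℝ (u 0)).IsSymm := fun b =>
      hM.add ((isSymm_rankOne (u 0)).smul b)
    have hneg : ∀ b : ℝ, -M - b • rankOne ℝ (u 0) = -(M + b • rankOne ℝ (u 0)) := by
      intro b; abel
    have hconv := fun θ => expPoly_convex L (u 0) M (-M) θ (p 0)
    simp only [hneg] at hconv
    have hchoice := no_root_choice (d := 2 * Fintype.card ι) (β := β) (θ₀ := p 0)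
      (f₀ := expPoly L (M + (-p 0) • rankOne ℝ (u 0)) (-(M + (-p 0) • rankOne ℝ (u 0))))
      (f₁ := expPoly L (M + (1 - p 0) • rankOne ℝ (u 0)) (-(M + (1 - p 0) • rankOne ℝ (u 0))))
      (fun θ => by rw [hconv]; exact expPoly_monic _ _ _)
      (fun θ hθ => by
        rw [hconv]
        refine expPoly_real_rooted _ ?_ (hsy _) (hsy _).neg
        intro q hq
        rcases List.mem_cons.mp hq with rfl | hq
        · exact mul_nonneg hθ.1 (sub_nonneg.mpr hθ.2)
        · exact hL q hq)
      (hp 0) (by rw [hconv]; simpa using hroot)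
    obtain ⟨b, hb, h⟩ : ∃ b : ℝ, (b = 0 ∨ b = 1) ∧ ∀ x : ℝ, β ≤ x →
        (expPoly L (M + (b - p 0) • rankOne ℝ (u 0))
          (-(M + (b - p 0) • rankOne ℝ (u 0)))).eval x ≠ 0 := by
      rcases hchoice with h | h
      · exact ⟨0, Or.inl rfl, by simpa only [zero_sub] using h⟩
      · exact ⟨1, Or.inr rfl, h⟩
    obtain ⟨z, hz, hzr⟩ := ih (fun i => p i.succ) (fun i => u i.succ) (fun i => hp _) _ (hsy _) h
    refine ⟨Fin.cons b z, ?_, ?_⟩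
    · intro i
      refine Fin.cases ?_ (fun j => ?_) i
      · simpa using hb
      · simpa using hz j
    · simpa only [Fin.sum_univ_succ, Fin.cons_zero, Fin.cons_succ, add_assoc] using hzr

lemma posSemidef_of_no_root {β : ℝ} {M : Matrix ι ι ℝ} (hM : M.IsSymm)
    (h : ∀ x : ℝ, β ≤ x → M.charpoly.eval x ≠ 0) :
    (β • (1 : Matrix ι ι ℝ) - M).PosSemidef := by
  have hH : (β • (1 : Matrix ι ι ℝ) - M).IsHermitian := by
    rw [IsHermitian, conjTranspose_eq_transpose_of_trivial]
    simp [hM.eq]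
  rw [hH.posSemidef_iff_eigenvalues_nonneg]
  intro i
  by_contra hneg
  rw [Pi.zero_apply, not_le] at hneg
  apply h (β - hH.eigenvalues i) (by linarith)
  rw [eval_charpoly, ← exists_mulVec_eq_zero_iff]
  refine ⟨hH.eigenvectorBasis i, ?_, ?_⟩
  · intro h0
    exact hH.eigenvectorBasis.orthonormal.ne_zero i (by ext j; exact congrFun h0 j)
  · have := hH.mulVec_eigenvectorBasis i
    rw [sub_mulVec, smul_mulVec, one_mulVec] at this
    have hs : scalar ι (β - hH.eigenvalues i) = (β - hH.eigenvalues i) • (1 : Matrix ι ι ℝ) := by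
      ext a b
      simp [Matrix.one_apply, Matrix.diagonal_apply]
    rw [hs, sub_mulVec, smul_mulVec, one_mulVec, sub_smul, sub_right_comm, this, sub_self]

end

/-! ### Rounding with small discrepancy -/

section

/-- Rounding of vectors `u i` with `|u i|² ≤ 2 ε²` and `∑ x_i u_i u_iᵀ ⪯ 2 I`, with discrepancy at most
`8 ε`. The barrier argument is run with `lam = 4 ε`: the total shift is then at most
`2 ε ∑ x_i u_i u_iᵀ ⪯ 4 ε I`, so the expected polynomial has no root in `[8 ε, ∞)`. -/
theorem balanced_rounding {ι : Type*} [Fintype ι] [DecidableEq ι] {m : ℕ} {ε : ℝ} (hε : 0 < ε)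
    (hε1 : ε ≤ 1) (x : Fin m → ℝ) (hx : ∀ i, 0 ≤ x i ∧ x i ≤ 1) (u : Fin m → ι → ℝ)
    (hu : ∀ i, u i ⬝ᵥ u i ≤ 2 * ε ^ 2)
    (hcov : ((2 : ℝ) • (1 : Matrix ι ι ℝ) - ∑ i, x i • rankOne ℝ (u i)).PosSemidef) :
    ∃ z : Fin m → ℝ, (∀ i, z i = 0 ∨ z i = 1) ∧
      ((8 * ε) • (1 : Matrix ι ι ℝ) - ∑ i, (z i - x i) • rankOne ℝ (u i)).PosSemidef ∧
      ((8 * ε) • (1 : Matrix ι ι ℝ) + ∑ i, (z i - x i) • rankOne ℝ (u i)).PosSemidef := by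
  have huu : ∀ i, 0 ≤ u i ⬝ᵥ u i := fun i => by simpa using dotProduct_star_self_nonneg (u i)
  have hκ : ∀ i, 0 ≤ x i * (1 - x i) := fun i => mul_nonneg (hx i).1 (sub_nonneg.mpr (hx i).2)
  have hκx : ∀ i, x i * (1 - x i) ≤ x i := fun i => by nlinarith [(hx i).1, (hx i).2]
  have hdiv : ∀ i, u i ⬝ᵥ u i / ε ≤ 2 * ε := fun i => by
    rw [div_le_iff₀ hε]; nlinarith [hu i]
  have hdiv0 : ∀ i, 0 ≤ u i ⬝ᵥ u i / ε := fun i => div_nonneg (huu i) hε.le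
  obtain ⟨z, hz, hroot⟩ := exists_rounding (8 * ε) x u hx (0 : Matrix ι ι ℝ) (by simp) (by
    intro t ht
    rw [← Polynomial.coe_aeval_eq_eval, aeval_expPoly]
    simp only [neg_zero, Matrix.map_zero _ (map_zero (algebraMap ℝ ℝ)), zero_add]
    refine (barrier (4 * ε) (by positivity) _ ?_ _ ?_).1.ne'
    · intro p hp
      rw [List.mem_ofFn] at hp
      obtain ⟨i, rfl⟩ := hp
      refine ⟨hκ i, ?_⟩
      have e : 2 * (u i ⬝ᵥ u i) / (4 * ε) = (u i ⬝ᵥ u i / ε) / 2 := by field_simp; ring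
      show x i * (1 - x i) * (2 * (u i ⬝ᵥ u i) / (4 * ε)) ^ 2 ≤ 2
      rw [e]
      have h1 : (u i ⬝ᵥ u i / ε / 2) ^ 2 ≤ 1 := by
        have := hdiv i
        have := hdiv0 i
        nlinarith
      have h2 : x i * (1 - x i) ≤ 1 := (hκx i).trans (hx i).2
      nlinarith [mul_le_one₀ h2 (sq_nonneg _) h1]
    · have hsplit : t • (1 : Matrix ι ι ℝ)
            - totalShift (4 * ε) (List.ofFn fun i => (x i * (1 - x i), u i))
            - (4 * ε) • (1 : Matrix ι ι ℝ) =
          (t - 8 * ε) • (1 : Matrix ι ι ℝ)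
            + (2 * ε) • ((2 : ℝ) • (1 : Matrix ι ι ℝ) - ∑ i, x i • rankOne ℝ (u i))
            + ∑ i, (2 * ε * x i - x i * (1 - x i) * (u i ⬝ᵥ u i / ε)) • rankOne ℝ (u i) := by
        have e : ∀ i, 4 * (x i * (1 - x i)) * (u i ⬝ᵥ u i) / (4 * ε) =
            x i * (1 - x i) * (u i ⬝ᵥ u i / ε) := fun i => by field_simp
        simp only [totalShift, List.map_ofFn, List.sum_ofFn, Function.comp_def, e, sub_smul,
          Finset.sum_sub_distrib, smul_sub, Finset.smul_sum, smul_smul]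
        have e3 : (8 * ε) • (1 : Matrix ι ι ℝ) = (2 * ε * 2) • 1 + (4 * ε) • 1 := by
          rw [← add_smul]; congr 1; ring
        rw [e3]
        abel
      rw [hsplit]
      refine ((PosSemidef.one.smul (by linarith)).add (hcov.smul (by positivity))).add
        (posSemidef_sum _ fun i _ => (posSemidef_rankOne (u i)).smul ?_)
      have := mul_le_mul (hκx i) (hdiv i) (hdiv0 i) (hx i).1
      linarith)
  rw [zero_add] at hroot
  set M := ∑ i, (z i - x i) • rankOne ℝ (u i) with hM
  have hsym : M.IsSymm := by
    rw [hM, IsSymm, transpose_sum]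
    exact Finset.sum_congr rfl fun i _ => by rw [transpose_smul, (isSymm_rankOne (u i)).eq]
  have hprod : ∀ t : ℝ, 8 * ε ≤ t → M.charpoly.eval t ≠ 0 ∧ (-M).charpoly.eval t ≠ 0 := by
    intro t ht
    have := hroot t ht
    rw [show expPoly [] M (-M) = M.charpoly * (-M).charpoly from rfl, Polynomial.eval_mul] at this
    exact ⟨left_ne_zero_of_mul this, right_ne_zero_of_mul this⟩
  refine ⟨z, hz, posSemidef_of_no_root hsym fun t ht => (hprod t ht).1, ?_⟩
  simpa using posSemidef_of_no_root hsym.neg fun t ht => (hprod t ht).2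

end

end SpectralRounding

open SpectralRounding

/-- **Two-sided spectral rounding with one nonnegative linear constraint.**
If `∑ xᵢ vᵢ vᵢᵀ = Iₙ`, all `‖vᵢ‖ ≤ ε < 1/8`, and `c_∞ ≤ ε² ⟨c, x⟩`, then there is
`z ∈ {0,1}^m` with `(1 - 8ε) Iₙ ⪯ ∑ zᵢ vᵢ vᵢᵀ ⪯ (1 + 8ε) Iₙ` and
`(1 - 8ε) ⟨c, x⟩ ≤ ⟨c, z⟩ ≤ (1 + 8ε) ⟨c, x⟩`. -/
theorem two_sided_spectral_rounding {n m : ℕ} (v : Fin m → Fin n → ℝ) (x c : Fin m → ℝ)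
    (ε : ℝ)
    (hx : ∀ i, 0 ≤ x i ∧ x i ≤ 1)
    (hc : ∀ i, 0 ≤ c i)
    (hsum : (∑ i, x i • vecMulVec (v i) (v i)) = (1 : Matrix (Fin n) (Fin n) ℝ))
    (hv : ∀ i, Real.sqrt (∑ j, v i j ^ 2) ≤ ε)
    (hε : ε < 1/8)
    (hcinf : ∀ i, c i ≤ ε^2 * ∑ j, c j * x j) :
    ∃ z : Fin m → ℝ, (∀ i, z i = 0 ∨ z i = 1) ∧
      ((∑ i, z i • vecMulVec (v i) (v i)) - (1 - 8*ε) • (1 : Matrix (Fin n) (Fin n) ℝ)).PosSemidef ∧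
      ((1 + 8*ε) • (1 : Matrix (Fin n) (Fin n) ℝ) - ∑ i, z i • vecMulVec (v i) (v i)).PosSemidef ∧
      (1 - 8*ε) * (∑ i, c i * x i) ≤ (∑ i, c i * z i) ∧
      (∑ i, c i * z i) ≤ (1 + 8*ε) * (∑ i, c i * x i) := by
  have hv2 : ∀ i, ∑ j, v i j ^ 2 ≤ ε ^ 2 := fun i =>
    (Real.sqrt_le_left ((Real.sqrt_nonneg _).trans (hv i))).mp (hv i)
  rcases le_or_gt ε 0 with hε0 | hε0
    -- With `ε ≤ 0`, every `v i` and every `c i` vanishes, so `1 = 0` and `z = 0` is a witness.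
  · have hεz : ∀ _ : Fin m, ε = 0 := fun i =>
      le_antisymm hε0 ((Real.sqrt_nonneg _).trans (hv i))
    have hv0 : ∀ i, v i = 0 := by
      intro i
      funext j
      have h := hv2 i
      rw [hεz i] at h
      have h' := (Finset.single_le_sum (f := fun j => v i j ^ 2) (fun j _ => sq_nonneg _)
        (Finset.mem_univ j)).trans h
      simpa using pow_eq_zero_iff (two_ne_zero) |>.mp (le_antisymm (by simpa using h') (sq_nonneg _))
    have hc0 : ∀ i, c i = 0 := fun i =>
      le_antisymm (by have := hcinf i; rw [hεz i] at this; simpa using this) (hc i)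
    have h10 : (1 : Matrix (Fin n) (Fin n) ℝ) = 0 := by
      rw [← hsum]; simp [hv0]
    refine ⟨0, fun i => Or.inl rfl, ?_, ?_, ?_, ?_⟩
    · rw [h10]; simpa using PosSemidef.zero
    · rw [h10]; simpa using PosSemidef.zero
    · simp [hc0]
    · simp [hc0]
    -- The cost constraint becomes one more coordinate, `√(c i / S)`, of each vector. If `S = 0`, then
    -- `c = 0`, and the convention `c i / 0 = 0` gives the right value.
  · set S := ∑ i, c i * x i with hS
    have hS0 : 0 ≤ S := Finset.sum_nonneg fun i _ => mul_nonneg (hc i) (hx i).1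
    set u : Fin m → (Fin n ⊕ Unit) → ℝ := fun i => Sum.elim (v i) fun _ => √(c i / S) with hu
    have hcS : ∀ i, √(c i / S) * √(c i / S) = c i / S := fun i =>
      Real.mul_self_sqrt (div_nonneg (hc i) hS0)
    have hcS' : ∀ i, c i / S ≤ ε ^ 2 := fun i =>
      div_le_of_le_mul₀ hS0 (sq_nonneg _) (hcinf i)
    have hunorm : ∀ i, u i ⬝ᵥ u i ≤ 2 * ε ^ 2 := by
      intro i
      have h1 := hv2 i
      have h2 := hcS' i
      simp only [dotProduct, hu, Fintype.sum_sum_type, Sum.elim_inl, Sum.elim_inr,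
        Finset.univ_unique, Finset.sum_singleton, ← pow_two]
      rw [Real.sq_sqrt (div_nonneg (hc i) hS0)]
      linarith
    have hcost : ∑ i, x i * (c i / S) ≤ 1 := by
      have : ∑ i, x i * (c i / S) = S / S := by
        rw [hS, Finset.sum_div]
        exact Finset.sum_congr rfl fun i _ => by ring
      rw [this]
      exact div_self_le_one S
    have hquad : ∀ (y : Fin n ⊕ Unit → ℝ),
        ∑ i, x i * (u i ⬝ᵥ y) ^ 2 ≤ 2 * (y ⬝ᵥ y) := by
      intro y
      set a : Fin n → ℝ := fun j => y (Sum.inl j) with ha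
      set b : ℝ := y (Sum.inr ()) with hb
      have hy : y ⬝ᵥ y = a ⬝ᵥ a + b ^ 2 := by
        simp [dotProduct, Fintype.sum_sum_type, ha, hb, pow_two]
      have huy : ∀ i, u i ⬝ᵥ y = v i ⬝ᵥ a + √(c i / S) * b := fun i => by
        simp [dotProduct, Fintype.sum_sum_type, ha, hb, hu]
      have hA : ∑ i, x i * (v i ⬝ᵥ a) ^ 2 = a ⬝ᵥ a := by
        have h := congrArg (fun A : Matrix (Fin n) (Fin n) ℝ => a ⬝ᵥ (A *ᵥ a)) hsum
        simp only [one_mulVec, sum_mulVec, dotProduct_sum, smul_mulVec, dotProduct_smul,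
          vecMulVec_mulVec, smul_eq_mul, MulOpposite.smul_eq_mul_unop] at h
        rw [← h]
        refine Finset.sum_congr rfl fun i _ => ?_
        simp [dotProduct_comm a (v i), pow_two]
      -- `(p + q)² ≤ 2 p² + 2 q²` splits off the extra coordinate, at the price of the factor `2`.
      calc ∑ i, x i * (u i ⬝ᵥ y) ^ 2
          ≤ ∑ i, (2 * (x i * (v i ⬝ᵥ a) ^ 2) + 2 * b ^ 2 * (x i * (c i / S))) := by
            refine Finset.sum_le_sum fun i _ => ?_
            have hsq := hcS i
            rw [huy]
            generalize √(c i / S) = s at hsq ⊢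
            rw [← hsq]
            nlinarith [mul_nonneg (hx i).1 (sq_nonneg (v i ⬝ᵥ a - s * b))]
        _ = 2 * (a ⬝ᵥ a) + 2 * b ^ 2 * ∑ i, x i * (c i / S) := by
            rw [Finset.sum_add_distrib, ← Finset.mul_sum, ← Finset.mul_sum, hA]
        _ ≤ 2 * (y ⬝ᵥ y) := by
            rw [hy]
            nlinarith [mul_le_mul_of_nonneg_left hcost (sq_nonneg b)]
    have hcov : ((2 : ℝ) • (1 : Matrix (Fin n ⊕ Unit) (Fin n ⊕ Unit) ℝ)
        - ∑ i, x i • rankOne ℝ (u i)).PosSemidef := by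
      refine PosSemidef.of_dotProduct_mulVec_nonneg ?_ fun y => ?_
      · refine (isHermitian_one.smul (IsSelfAdjoint.all _)).sub ?_
        exact (posSemidef_sum _ fun i _ => (posSemidef_rankOne (u i)).smul (hx i).1).isHermitian
      · have h := hquad y
        have e : star y ⬝ᵥ (((2 : ℝ) • (1 : Matrix (Fin n ⊕ Unit) (Fin n ⊕ Unit) ℝ)
            - ∑ i, x i • rankOne ℝ (u i)) *ᵥ y) =
            2 * (y ⬝ᵥ y) - ∑ i, x i * (u i ⬝ᵥ y) ^ 2 := by
          simp only [star_trivial, sub_mulVec, dotProduct_sub, smul_mulVec, one_mulVec, sum_mulVec,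
            dotProduct_sum, dotProduct_smul, rankOne_real, vecMulVec_mulVec, smul_eq_mul]
          congr 1
          refine Finset.sum_congr rfl fun i _ => ?_
          simp [dotProduct_comm y (u i), pow_two]
        rw [e]
        linarith
    obtain ⟨z, hz, hup, hlow⟩ := balanced_rounding hε0 (by linarith) x hx u hunorm hcov
    refine ⟨z, hz, ?_⟩
    -- The spectral bounds are read off the principal `Fin n` block, the cost bounds off the last
    -- diagonal entry.
    have hblock : (∑ i, (z i - x i) • rankOne ℝ (u i)).submatrix Sum.inl Sum.inl =
        ∑ i, z i • vecMulVec (v i) (v i) - 1 := by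
      rw [← hsum, ← Finset.sum_sub_distrib]
      ext a b
      simp [Matrix.sum_apply, rankOne_real, vecMulVec_apply, hu, sub_mul]
    have hone : (1 : Matrix (Fin n ⊕ Unit) (Fin n ⊕ Unit) ℝ).submatrix Sum.inl Sum.inl =
        (1 : Matrix (Fin n) (Fin n) ℝ) := submatrix_one _ Sum.inl_injective
    have hentry : (∑ i, (z i - x i) • rankOne ℝ (u i)) (Sum.inr ()) (Sum.inr ()) =
        (∑ i, c i * z i) / S - S / S := by
      rw [← sub_div, hS, ← Finset.sum_sub_distrib, Finset.sum_div]
      simp only [Matrix.sum_apply, rankOne_real, vecMulVec_apply, hu, Matrix.smul_apply,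
        Sum.elim_inr, smul_eq_mul]
      refine Finset.sum_congr rfl fun i _ => ?_
      rw [hcS]
      ring
    have hup1 := hup.submatrix (Sum.inl : Fin n → Fin n ⊕ Unit)
    have hlow1 := hlow.submatrix (Sum.inl : Fin n → Fin n ⊕ Unit)
    have hup2 := hup.diag_nonneg (i := Sum.inr ())
    have hlow2 := hlow.diag_nonneg (i := Sum.inr ())
    rw [submatrix_sub, submatrix_smul, Pi.sub_apply, Pi.sub_apply, hblock, Pi.smul_apply,
      Pi.smul_apply, hone] at hup1
    rw [submatrix_add, submatrix_smul, Pi.add_apply, Pi.add_apply, hblock, Pi.smul_apply,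
      Pi.smul_apply, hone] at hlow1
    rw [Matrix.sub_apply, hentry] at hup2
    rw [Matrix.add_apply, hentry] at hlow2
    simp only [Matrix.smul_apply, one_apply_eq, smul_eq_mul, mul_one] at hup2 hlow2
    refine ⟨?_, ?_, ?_⟩
    · convert hlow1 using 1
      rw [sub_smul, one_smul]; abel
    · convert hup1 using 1
      rw [add_smul, one_smul]; abel
    · rcases hS0.eq_or_lt with h0 | hpos
      · have hc0 : ∀ i, c i = 0 := fun i =>
          le_antisymm (by have := hcinf i; rw [← h0] at this; simpa using this) (hc i)
        simp [hc0, ← h0]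
      · rw [div_self hpos.ne'] at hup2 hlow2
        have h1 : (∑ i, c i * z i) / S ≤ 1 + 8 * ε := by linarith
        have h2 : 1 - 8 * ε ≤ (∑ i, c i * z i) / S := by linarith
        exact ⟨(le_div_iff₀ hpos).mp h2, (div_le_iff₀ hpos).mp h1⟩
end

section
/- Let v_1, …, v_m ∈ ℝ^n, x ∈ [0,1]^m, and c ∈ ℝ_+^m, and let λ > 0 and l > 0. Suppose ‖Σ_{i=1}^m x_i v_i v_iᵀ‖_op ≤ λ, that ‖v_i‖ ≤ l for all i ∈ [m], that c_∞ ≤ l²·⟨c, x⟩/λ, and that l ≤ √λ. Then there exists z ∈ {0,1}^m such that ‖Σ_{i=1}^m x_i v_i v_iᵀ − Σ_{i=1}^m z_i v_i v_iᵀ‖_op ≤ 8·l·√λ and |⟨c, x⟩ − ⟨c, z⟩| ≤ (8l/√λ)·⟨c, x⟩. -/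
/-!
The vectors are first extended by one coordinate `√(cᵢ λ / ⟨c, x⟩)`. The extended vectors satisfy
`|Vᵢ|² ≤ 2 l²` and `∑ xᵢ Vᵢ Vᵢᵀ ≤ 2 λ I`, and a two-sided bound for `∑ (xᵢ - zᵢ) Vᵢ Vᵢᵀ` contains
both the matrix bound (a diagonal block) and the cost bound (the last diagonal entry).

The bound itself comes from the method of interlacing polynomials. Let the `zᵢ` be independent with
mean `xᵢ`. For each outcome, `det (y + S) · det (y - S)` with `S = ∑ (xᵢ - zᵢ) Vᵢ Vᵢᵀ` is a value
of the polynomial `pairDet`, which is affine in each variable and stable, and averaging over one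
`zᵢ` preserves this (`Good.pairAvg`). Consequently all convex combinations occurring in the process
are real-rooted, and if the expected polynomial is positive on `[b, ∞)`, the same holds for some
outcome (`Good.exists_round`); then `-b I ≤ S ≤ b I` (`pencil_posSemidef`).

It remains to see that the expected polynomial is positive on `[b, ∞)`. For fixed real `y ≥ b` a
barrier argument runs over the coordinates (`Good.barrier`): the relative increment of the
polynomial in each direction stays below `φ = 2 A / b`, where `A` bounds the `|Vᵢ|²`, and
averaging over `zᵢ` costs a shift by `2 φ xᵢ` in the two copies of the variable `i`. The step
(`step_algebra`) rests on the Rayleigh inequality for real stable polynomials (`Good.rayleigh`).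
The total shift is at most `2 φ Λ I ≤ (b / 2) I`, where `∑ xᵢ Vᵢ Vᵢᵀ ≤ Λ I`, as soon as
`8 A Λ ≤ b²`.
-/

open Matrix BigOperators

/-- For a real symmetric `n × n` matrix `M`, `OpNormLE M t` expresses that the operator
norm of `M` (the largest absolute value of an eigenvalue) is at most `t`, via the
equivalent positive-semidefinite sandwich `-t Iₙ ⪯ M ⪯ t Iₙ`. -/
def OpNormLE {n : ℕ} (M : Matrix (Fin n) (Fin n) ℝ) (t : ℝ) : Prop :=
  (t • (1 : Matrix (Fin n) (Fin n) ℝ) - M).PosSemidef ∧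
  (M + t • (1 : Matrix (Fin n) (Fin n) ℝ)).PosSemidef

namespace SpectralRounding

/-! ### Bilinear forms and real-rooted polynomials -/

/-- If a bilinear form `g + τ B + υ C + τ υ D` does not vanish for `τ`, `υ` in the closed upper
half plane, then neither does `g - r D` for real `r ≥ 0`. This is what makes averaging over one
random choice preserve stability. -/
lemma bilinear_contract {g B C D : ℂ}
    (h : ∀ τ υ : ℂ, 0 ≤ τ.im → 0 ≤ υ.im → g + τ * B + υ * C + τ * υ * D ≠ 0)
    {r : ℝ} (hr : 0 ≤ r) : g - r * D ≠ 0 := by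
  intro h0
  have hg : g ≠ 0 := by simpa using h 0 0 (by simp) (by simp)
  have hg' : g = r * D := by linear_combination h0
  have hD : D ≠ 0 := by rintro rfl; simp [hg'] at hg
  have hr0 : (r : ℂ) ≠ 0 := by intro h'; simp [hg', h'] at hg
  have hrpos : 0 < r := lt_of_le_of_ne hr (fun hzero => hr0 (by simp [← hzero]))
  -- after division by `D`, the form is `r + b τ + c υ + τ υ`
  obtain ⟨b, rfl⟩ : ∃ b, B = b * D := ⟨B / D, by field_simp⟩
  obtain ⟨c, rfl⟩ : ∃ c, C = c * D := ⟨C / D, by field_simp⟩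
  have key : ∀ τ υ : ℂ, 0 ≤ τ.im → 0 ≤ υ.im → r + τ * b + υ * c + τ * υ ≠ 0 := by
    intro τ υ h1 h2 h3
    apply h τ υ h1 h2
    rw [hg']
    linear_combination D * h3
  clear h h0 hg hg' hD
  have aux : ∀ b c : ℂ, (∀ τ υ : ℂ, 0 ≤ τ.im → 0 ≤ υ.im → r + τ * b + υ * c + τ * υ ≠ 0) →
      b ≠ 0 → b.im < 0 := by
    intro b c key hb
    by_contra hneg
    push Not at hneg
    refine key (-r / b) 0 ?_ (by simp) ?_
    · have : (-r / b : ℂ).im = r * b.im / Complex.normSq b := by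
        simp [Complex.div_im, neg_div]
      rw [this]
      exact div_nonneg (mul_nonneg hr hneg) (Complex.normSq_nonneg _)
    · field_simp; ring
  have aux2 : ∀ b c : ℂ, (∀ τ υ : ℂ, 0 ≤ τ.im → 0 ≤ υ.im → r + τ * b + υ * c + τ * υ ≠ 0) →
      c.im ≤ 0 → b = 0 := by
    intro b c key hc
    by_contra hb
    have hbi := aux b c key hb
    -- solve `(τ + c) (υ + b) = w` with `τ + c` a large multiple of `i`
    set w : ℂ := b * c - r with hw
    by_cases hw0 : w = 0
    · refine key 0 (-b) (by simp) (by simpa using hbi.le) ?_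
      linear_combination -hw0 + hw
    have hT : 0 < ‖w‖ / (-b.im) := div_pos (norm_pos_iff.mpr hw0) (by linarith)
    set T : ℝ := ‖w‖ / (-b.im) with hTdef
    have hTc : (T : ℂ) ≠ 0 := by exact_mod_cast hT.ne'
    refine key (Complex.I * T - c) (-b + w / (Complex.I * T)) ?_ ?_ ?_
    · simp; linarith
    · have h1 : |(w / (Complex.I * T)).im| ≤ -b.im := by
        refine (Complex.abs_im_le_norm _).trans ?_
        rw [norm_div, norm_mul, Complex.norm_I, one_mul, Complex.norm_real, Real.norm_eq_abs,
          abs_of_pos hT, hTdef]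
        have : ‖w‖ ≠ 0 := by simpa using hw0
        have : b.im ≠ 0 := hbi.ne
        field_simp
        rfl
      have := (abs_le.mp h1).1
      simp only [Complex.add_im, Complex.neg_im]
      linarith
    · have hI := Complex.I_ne_zero
      have : Complex.I * T * (w / (Complex.I * T)) = w := by field_simp
      linear_combination this + hw
  have keysymm : ∀ τ υ : ℂ, 0 ≤ τ.im → 0 ≤ υ.im → r + τ * c + υ * b + τ * υ ≠ 0 := by
    intro τ υ h1 h2 h3
    exact key υ τ h2 h1 (by linear_combination h3)
  have hc' : c.im ≤ 0 := by
    by_cases hc : c = 0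
    · simp [hc]
    · exact (aux c b keysymm hc).le
  have hb0 := aux2 b c key hc'
  have hc0 := aux2 c b keysymm (by simp [hb0])
  refine key (Complex.I * Real.sqrt r) (Complex.I * Real.sqrt r) ?_ ?_ ?_
  · simp [Real.sqrt_nonneg]
  · simp [Real.sqrt_nonneg]
  · have h1 : ((Real.sqrt r : ℝ) : ℂ) * (Real.sqrt r : ℝ) = r := by
      rw [← Complex.ofReal_mul, Real.mul_self_sqrt hr]
    rw [hb0, hc0]
    linear_combination ((Real.sqrt r : ℝ) : ℂ) * (Real.sqrt r : ℝ) * Complex.I_mul_I - h1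

/-- The Rayleigh (negative dependence) inequality `g₀ D₀ ≤ B₀ C₀` for a real bilinear form that is a
limit of forms without zeros in the closed upper half planes. Otherwise, at `τ = i`, the root `υ` of
the limit form would lie strictly in the upper half plane, hence so would a root of a nearby form. -/
lemma rayleigh_of_limit (g B C D : ℝ → ℂ) (hg : Continuous g) (hB : Continuous B)
    (hC : Continuous C) (hD : Continuous D) (g0 B0 C0 D0 : ℝ) (eg : g 0 = g0) (eB : B 0 = B0)
    (eC : C 0 = C0) (eD : D 0 = D0)
    (h : ∀ ε : ℝ, 0 < ε → ∀ τ υ : ℂ, 0 ≤ τ.im → 0 ≤ υ.im →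
      g ε + τ * B ε + υ * C ε + τ * υ * D ε ≠ 0) :
    g0 * D0 ≤ B0 * C0 := by
  by_contra hlt
  push Not at hlt
  have hne : C 0 + Complex.I * D 0 ≠ 0 := by
    rw [eC, eD]
    intro h0
    have h1 := congrArg Complex.re h0
    have h2 := congrArg Complex.im h0
    simp at h1 h2
    simp [h1, h2] at hlt
  let υ : ℝ → ℂ := fun ε => -(g ε + Complex.I * B ε) / (C ε + Complex.I * D ε)
  have hcont : ContinuousAt υ 0 := by
    apply ContinuousAt.div
    · fun_prop
    · fun_prop
    · exact hne
  have him : 0 < (υ 0).im := by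
    have : (υ 0).im = (g0 * D0 - B0 * C0) / (C0 ^ 2 + D0 ^ 2) := by
      simp only [υ, eg, eB, eC, eD, Complex.div_im, Complex.normSq_apply]
      simp
      ring
    rw [this]
    apply div_pos (by linarith)
    by_contra hle
    have h1 : C0 = 0 := by nlinarith [sq_nonneg C0, sq_nonneg D0]
    have h2 : D0 = 0 := by nlinarith [sq_nonneg C0, sq_nonneg D0]
    simp [h1, h2] at hlt
  have e1 : ∀ᶠ ε in nhds (0:ℝ), 0 < (υ ε).im :=
    (Complex.continuous_im.continuousAt.comp hcont).eventually_const_lt him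
  have e2 : ∀ᶠ ε in nhds (0:ℝ), C ε + Complex.I * D ε ≠ 0 :=
    (by fun_prop : ContinuousAt (fun ε => C ε + Complex.I * D ε) 0).eventually_ne hne
  have e3 : ∃ᶠ ε in nhds (0:ℝ), 0 < ε := by
    have : ∃ᶠ ε in nhdsWithin (0:ℝ) (Set.Ioi 0), ε ∈ Set.Ioi (0:ℝ) :=
      eventually_mem_nhdsWithin.frequently
    exact this.filter_mono nhdsWithin_le_nhds
  obtain ⟨ε, hε, h1, h2⟩ := (e3.and_eventually (e1.and e2)).exists
  refine h ε hε Complex.I (υ ε) (by simp) h1.le ?_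
  have : υ ε * (C ε + Complex.I * D ε) = -(g ε + Complex.I * B ε) := by
    simp only [υ]; field_simp
  linear_combination this

open Polynomial in
/-- A monic real-rooted polynomial that is positive on `[b, R]` is quasiconcave there: it is
log-concave, because each factor `|y - ρ|` is concave on an interval that avoids the root `ρ`. -/
lemma quasiconcave_of_realRooted {P : ℝ[X]} (hm : P.Monic)
    (hP : ∀ y : ℂ, 0 < y.im → aeval y P ≠ 0) {b R : ℝ}
    (hpos : ∀ y, b ≤ y → y ≤ R → 0 < P.eval y) {δ : ℝ} (hδ : 0 < δ)
    (hb : δ ≤ P.eval b) (hR : δ ≤ P.eval R)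
    {y : ℝ} (h1 : b ≤ y) (h2 : y ≤ R) : δ ≤ P.eval y := by
  have hbR : b ≤ R := h1.trans h2
  obtain ⟨u, w, hu, hw, huw, hy⟩ : ∃ u w : ℝ, 0 ≤ u ∧ 0 ≤ w ∧ u + w = 1 ∧ y = u * b + w * R := by
    have hseg : y ∈ segment ℝ b R := by rw [segment_eq_Icc hbR]; exact ⟨h1, h2⟩
    obtain ⟨u, w, hu, hw, huw, h⟩ := hseg
    exact ⟨u, w, hu, hw, huw, by simpa using h.symm⟩
  have hroot : ∀ ρ ∈ P.aroots ℂ, ρ.im = 0 ∧ ¬ (b ≤ ρ.re ∧ ρ.re ≤ R) := by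
    intro ρ hρ
    have h0 : aeval ρ P = 0 := (mem_aroots.mp hρ).2
    have him : ρ.im = 0 := by
      rcases lt_trichotomy ρ.im 0 with h | h | h
      · refine absurd ?_ (hP (starRingEnd ℂ ρ) (by simpa using h))
        rw [aeval_conj, h0, map_zero]
      · exact h
      · exact absurd h0 (hP ρ h)
    refine ⟨him, fun hh => ?_⟩
    have hre : ρ = ((ρ.re : ℝ) : ℂ) := by apply Complex.ext <;> simp [him]
    rw [hre] at h0
    have h3 : (aeval ((ρ.re : ℝ) : ℂ) P) = ((P.eval ρ.re : ℝ) : ℂ) := by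
      simpa using (aeval_algebraMap_apply ℂ ρ.re P)
    rw [h3] at h0
    exact (hpos _ hh.1 hh.2).ne' (by exact_mod_cast h0)
  have hev : ∀ t : ℝ, b ≤ t → t ≤ R →
      P.eval t = ((P.aroots ℂ).map (fun ρ => |t - ρ.re|)).prod := by
    intro t ht1 ht2
    have h3 : (aeval ((t : ℝ) : ℂ) P) = ((P.eval t : ℝ) : ℂ) := by
      simpa using (aeval_algebraMap_apply ℂ t P)
    have h4 := (IsAlgClosed.splits (P.map (algebraMap ℝ ℂ))).aeval_eq_prod_aroots_of_monic hm (t : ℂ)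
    have h5 : P.eval t = ‖aeval (t : ℂ) P‖ := by
      rw [h3, Complex.norm_real, Real.norm_eq_abs, abs_of_pos (hpos t ht1 ht2)]
    rw [h5, h4]
    have h6 := map_multiset_prod (normHom : ℂ →*₀ ℝ) ((P.aroots ℂ).map (fun ρ => (t : ℂ) - ρ))
    simp only [normHom_apply, Multiset.map_map] at h6
    rw [h6]
    congr 1
    apply Multiset.map_congr rfl
    intro ρ hρ
    have hre : ρ = ((ρ.re : ℝ) : ℂ) := by apply Complex.ext <;> simp [(hroot ρ hρ).1]
    simp only [Function.comp]
    conv_lhs => rw [hre]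
    rw [← Complex.ofReal_sub, Complex.norm_real, Real.norm_eq_abs]
  have hind : ∀ s : Multiset ℂ, (∀ ρ ∈ s, ¬ (b ≤ ρ.re ∧ ρ.re ≤ R)) →
      ((s.map (fun ρ => |b - ρ.re|)).prod) ^ u * ((s.map (fun ρ => |R - ρ.re|)).prod) ^ w
        ≤ (s.map (fun ρ => |y - ρ.re|)).prod := by
    intro s
    induction s using Multiset.induction_on with
    | empty => intro _; simp
    | cons ρ s ih =>
      intro hs
      have ih' := ih (fun ρ' h => hs ρ' (Multiset.mem_cons_of_mem h))
      have hρ := hs ρ (Multiset.mem_cons_self _ _)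
      have nn : ∀ t : ℝ, 0 ≤ (s.map (fun ρ => |t - ρ.re|)).prod := fun t =>
        Multiset.prod_nonneg (by
          intro a ha
          obtain ⟨c, -, rfl⟩ := Multiset.mem_map.mp ha
          exact abs_nonneg _)
      simp only [Multiset.map_cons, Multiset.prod_cons]
      rw [Real.mul_rpow (abs_nonneg _) (nn b), Real.mul_rpow (abs_nonneg _) (nn R)]
      have hone : |b - ρ.re| ^ u * |R - ρ.re| ^ w ≤ |y - ρ.re| := by
        refine (Real.geom_mean_le_arith_mean2_weighted hu hw (abs_nonneg _) (abs_nonneg _)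
          huw).trans (le_of_eq ?_)
        have e : y - ρ.re = u * (b - ρ.re) + w * (R - ρ.re) := by
          rw [hy]; linear_combination (ρ.re) * huw
        rcases lt_or_ge ρ.re b with h | h
        · rw [abs_of_pos (by linarith : 0 < b - ρ.re), abs_of_pos (by linarith : 0 < R - ρ.re),
            abs_of_pos (by linarith : 0 < y - ρ.re), e]
        · have h' : R < ρ.re := by by_contra h''; exact hρ ⟨h, not_lt.mp h''⟩
          rw [abs_of_neg (by linarith : b - ρ.re < 0), abs_of_neg (by linarith : R - ρ.re < 0),
            abs_of_neg (by linarith : y - ρ.re < 0), e]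
          ring
      calc _ = (|b - ρ.re| ^ u * |R - ρ.re| ^ w) *
            (((s.map (fun ρ => |b - ρ.re|)).prod) ^ u * ((s.map (fun ρ => |R - ρ.re|)).prod) ^ w) := by
              ring
        _ ≤ _ := mul_le_mul hone ih' (mul_nonneg (Real.rpow_nonneg (nn b) _)
              (Real.rpow_nonneg (nn R) _)) (abs_nonneg _)
  have hfin := hind (P.aroots ℂ) (fun ρ hρ => (hroot ρ hρ).2)
  rw [← hev b le_rfl hbR, ← hev R hbR le_rfl, ← hev y h1 h2] at hfin
  refine le_trans ?_ hfin
  calc δ = δ ^ u * δ ^ w := by rw [← Real.rpow_add hδ, huw, Real.rpow_one]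
    _ ≤ _ := mul_le_mul (Real.rpow_le_rpow hδ.le hb hu) (Real.rpow_le_rpow hδ.le hR hw)
      (Real.rpow_nonneg hδ.le _) (Real.rpow_nonneg (hδ.le.trans hb) _)

open Polynomial in
lemma eventually_pos_of_monic {P : ℝ[X]} (hm : P.Monic) :
    ∃ R, ∀ y, R ≤ y → 0 < P.eval y := by
  by_cases hd : P.natDegree = 0
  · refine ⟨0, fun y _ => ?_⟩
    rw [hm.natDegree_eq_zero.mp hd]; simp
  · have h := P.tendsto_atTop_of_leadingCoeff_nonneg
      (natDegree_pos_iff_degree_pos.mp (Nat.pos_of_ne_zero hd)) (by rw [hm.leadingCoeff]; simp)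
    obtain ⟨R, hR⟩ := Filter.eventually_atTop.mp (h.eventually_gt_atTop 0)
    exact ⟨R, hR⟩

open Polynomial in
lemma monic_convexComb {P Q : ℝ[X]} {N : ℕ} (hPm : P.Monic) (hQm : Q.Monic)
    (hPd : P.natDegree = N) (hQd : Q.natDegree = N) (p : ℝ) :
    (C (1 - p) * P + C p * Q).Monic ∧ (C (1 - p) * P + C p * Q).natDegree = N := by
  have hle : (C (1 - p) * P + C p * Q).natDegree ≤ N := by
    refine (natDegree_add_le _ _).trans (max_le ?_ ?_)
    · exact (natDegree_C_mul_le _ _).trans hPd.le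
    · exact (natDegree_C_mul_le _ _).trans hQd.le
  have c1 : P.coeff N = 1 := by rw [← hPd]; exact hPm
  have c2 : Q.coeff N = 1 := by rw [← hQd]; exact hQm
  have hc : (C (1 - p) * P + C p * Q).coeff N = 1 := by
    rw [coeff_add, coeff_C_mul, coeff_C_mul, c1, c2]; ring
  exact ⟨monic_of_natDegree_le_of_coeff_eq_one N hle hc,
    natDegree_eq_of_le_of_coeff_ne_zero hle (by rw [hc]; simp)⟩

open Polynomial in
/-- If every convex combination of the monic polynomials `P`, `Q` is real-rooted, `P` is positive on
`[b, ∞)` and `Q b > 0`, then `Q` is positive on `[b, ∞)`. Along the segment from `P` to `Q`,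
positivity on `[b, R]` upgrades by quasiconcavity to a lower bound `δ` that does not depend on the
position, so it persists over steps of a fixed length. -/
lemma pos_propagates {P Q : ℝ[X]} (N : ℕ) (hPm : P.Monic) (hQm : Q.Monic)
    (hPd : P.natDegree = N) (hQd : Q.natDegree = N)
    (hreal : ∀ p : ℝ, 0 ≤ p → p ≤ 1 → ∀ y : ℂ, 0 < y.im →
      aeval y (C (1 - p) * P + C p * Q) ≠ 0) {b : ℝ}
    (hP : ∀ y, b ≤ y → 0 < P.eval y) (hQb : 0 < Q.eval b) :
    ∀ y, b ≤ y → 0 < Q.eval y := by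
  obtain ⟨R0, hR0⟩ := eventually_pos_of_monic hQm
  set R := max R0 b with hR
  have hbR : b ≤ R := le_max_right _ _
  have hQR : ∀ y, R ≤ y → 0 < Q.eval y := fun y hy => hR0 y ((le_max_left _ _).trans hy)
  set δ := min (min (P.eval b) (Q.eval b)) (min (P.eval R) (Q.eval R)) with hδdef
  have hδ : 0 < δ := lt_min (lt_min (hP b le_rfl) hQb) (lt_min (hP R hbR) (hQR R le_rfl))
  have d1 : δ ≤ P.eval b := (min_le_left _ _).trans (min_le_left _ _)
  have d2 : δ ≤ Q.eval b := (min_le_left _ _).trans (min_le_right _ _)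
  have d3 : δ ≤ P.eval R := (min_le_right _ _).trans (min_le_left _ _)
  have d4 : δ ≤ Q.eval R := (min_le_right _ _).trans (min_le_right _ _)
  have hlow : ∀ p : ℝ, 0 ≤ p → p ≤ 1 →
      (∀ y, b ≤ y → y ≤ R → 0 < (1 - p) * P.eval y + p * Q.eval y) →
      ∀ y, b ≤ y → y ≤ R → δ ≤ (1 - p) * P.eval y + p * Q.eval y := by
    intro p hp0 hp1 hpos y hy1 hy2
    have := quasiconcave_of_realRooted
      (monic_convexComb hPm hQm hPd hQd p).1 (hreal p hp0 hp1) (b := b) (R := R)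
      (by simpa using hpos) hδ
      (by simp; nlinarith) (by simp; nlinarith) hy1 hy2
    simpa using this
  obtain ⟨M, hM⟩ : ∃ M, ∀ y ∈ Set.Icc b R, ‖Q.eval y - P.eval y‖ ≤ M :=
    isCompact_Icc.exists_bound_of_continuousOn (by fun_prop)
  obtain ⟨k, hk⟩ := exists_nat_gt (M / δ)
  have hM0 : 0 ≤ M := (norm_nonneg _).trans (hM b ⟨le_rfl, hbR⟩)
  have hk0 : (0:ℝ) < k := (div_nonneg hM0 hδ.le).trans_lt hk
  have hMk : M < δ * k := by rw [div_lt_iff₀ hδ] at hk; linarith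
  have hstep : ∀ j : ℕ, j ≤ k → ∀ y, b ≤ y → y ≤ R →
      δ ≤ (1 - (j / k : ℝ)) * P.eval y + (j / k : ℝ) * Q.eval y := by
    intro j
    induction j with
    | zero =>
      intro _
      exact hlow _ (by simp) (by simp) (fun y h1 _ => by simpa using hP y h1)
    | succ j ih =>
      intro hj
      have ih' := ih (by omega)
      have hjk : ((j + 1 : ℕ) : ℝ) ≤ k := by exact_mod_cast hj
      refine hlow _ (by positivity) (by rw [div_le_one hk0]; exact hjk) ?_
      intro y h1 h2
      have h3 := ih' y h1 h2
      have h4 := (abs_le.mp (Real.norm_eq_abs _ ▸ hM y ⟨h1, h2⟩)).1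
      have h5 : (1 - (((j + 1 : ℕ) : ℝ) / k)) * P.eval y + (((j + 1 : ℕ) : ℝ) / k) * Q.eval y
          = ((1 - (j / k : ℝ)) * P.eval y + (j / k : ℝ) * Q.eval y)
            + (Q.eval y - P.eval y) / k := by
        push_cast; field_simp; ring
      rw [h5]
      have h6 : -δ < (Q.eval y - P.eval y) / k := by
        rw [lt_div_iff₀ hk0]; linarith
      linarith
  intro y hy
  rcases le_total y R with h | h
  · have := hstep k le_rfl y hy h
    rw [div_self hk0.ne'] at this
    simp at this
    linarith
  · exact hQR y h

open Polynomial in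
/-- The interlacing-families step: if every convex combination of `P`, `Q` is real-rooted and one of
them is positive on `[b, ∞)`, then `P` or `Q` is positive on `[b, ∞)`. -/
lemma exists_pos_endpoint {P Q : ℝ[X]} (N : ℕ) (hPm : P.Monic) (hQm : Q.Monic)
    (hPd : P.natDegree = N) (hQd : Q.natDegree = N)
    (hreal : ∀ p : ℝ, 0 ≤ p → p ≤ 1 → ∀ y : ℂ, 0 < y.im →
      aeval y (C (1 - p) * P + C p * Q) ≠ 0) {b q : ℝ} (hq0 : 0 ≤ q) (hq1 : q ≤ 1)
    (hpos : ∀ y, b ≤ y → 0 < (1 - q) * P.eval y + q * Q.eval y) :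
    (∀ y, b ≤ y → 0 < P.eval y) ∨ (∀ y, b ≤ y → 0 < Q.eval y) := by
  set F : ℝ[X] := C (1 - q) * P + C q * Q with hF
  obtain ⟨hFm, hFd⟩ := monic_convexComb hPm hQm hPd hQd q
  rw [← hF] at hFm hFd
  have hFpos : ∀ y, b ≤ y → 0 < F.eval y := by simpa [hF] using hpos
  by_cases hPb : 0 < P.eval b
  · left
    refine pos_propagates N hFm hPm hFd hPd ?_ hFpos hPb
    intro p hp0 hp1 y hy
    have := hreal ((1 - p) * q) (by nlinarith) (by nlinarith) y hy
    convert this using 2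
    simp only [hF, map_sub, map_mul, map_one]; ring
  · have hQb : 0 < Q.eval b := by
      have := hpos b le_rfl
      by_contra hh
      push Not at hPb hh
      nlinarith
    right
    refine pos_propagates N hFm hQm hFd hQd ?_ hFpos hQb
    intro p hp0 hp1 y hy
    have := hreal ((1 - p) * q + p) (by nlinarith) (by nlinarith) y hy
    convert this using 2
    simp only [hF, map_sub, map_mul, map_one, map_add]; ring

/-! ### Multi-affine stable polynomials and averaging -/

/-- The point `w + s e_a`. -/
def bump {κ R : Type*} [DecidableEq κ] [AddCommMonoid R] (w : κ → R) (a : κ) (s : R) : κ → R :=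
  fun b => w b + if b = a then s else 0

lemma bump_comm {κ R : Type*} [DecidableEq κ] [AddCommMonoid R] (w : κ → R) (a b : κ) (s t : R) :
    bump (bump w a s) b t = bump (bump w b t) a s := by
  funext c
  simp only [bump]
  exact add_right_comm _ _ _

lemma bump_bump {κ R : Type*} [DecidableEq κ] [AddCommMonoid R] (w : κ → R) (a : κ) (s t : R) :
    bump (bump w a s) a t = bump w a (s + t) := by
  funext c
  simp only [bump]
  split_ifs <;> simp [add_assoc]

/-- `F` is affine in each variable separately, the slope in the direction `a` being the unit
difference quotient `F (x + e_a) - F x`. -/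
def MultiAffine {κ R : Type*} [DecidableEq κ] [CommRing R] (F : (κ → R) → R) : Prop :=
  ∀ (x : κ → R) (a : κ) (s : R),
    F (bump x a s) = F x + s * (F (bump x a 1) - F x)

/-- The bilinear expansion in two coordinates. It also holds for `a = b`, where the mixed second
difference vanishes. -/
lemma MultiAffine.two {κ R : Type*} [DecidableEq κ] [CommRing R] {F : (κ → R) → R}
    (hF : MultiAffine F) (x : κ → R) (a b : κ) (s t : R) :
    F (bump (bump x a s) b t) = F x + s * (F (bump x a 1) - F x)
      + t * (F (bump x b 1) - F x)
      + s * t * (F (bump (bump x a 1) b 1) - F (bump x a 1)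
        - F (bump x b 1) + F x) := by
  rw [hF (bump x a s) b t, bump_comm x a b s 1, hF x a s, hF (bump x b 1) a s,
    bump_comm x b a 1 1]
  ring

/-- The average of `F` over a rounding of coordinate `i` of value `x`: with probability `p` the
value becomes `1`, otherwise `0`. The copy `inl i` of the variable is shifted by the rounding error
and the copy `inr i` by its negative. -/
def pairAvg {ι R : Type*} [DecidableEq ι] [CommRing R] (i : ι) (p x : R)
    (F : (ι ⊕ ι → R) → R) : (ι ⊕ ι → R) → R := fun w =>
  (1 - p) * F (bump (bump w (Sum.inl i) x) (Sum.inr i) (-x))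
    + p * F (bump (bump w (Sum.inl i) (x - 1)) (Sum.inr i) (1 - x))

lemma MultiAffine.pairAvg {ι R : Type*} [DecidableEq ι] [CommRing R] {F : (ι ⊕ ι → R) → R}
    (hF : MultiAffine F) (i : ι) (p x : R) : MultiAffine (pairAvg i p x F) := by
  intro w a s
  have h : ∀ u v : R, ∀ s : R, (bump (bump (bump w a s) (Sum.inl i) u) (Sum.inr i) v)
      = (bump (bump (bump w (Sum.inl i) u) (Sum.inr i) v) a s) := by
    intro u v s; rw [bump_comm w a, bump_comm _ a]
  simp only [SpectralRounding.pairAvg, h]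
  rw [hF _ a s, hF (bump (bump w (Sum.inl i) (x - 1)) (Sum.inr i) (1 - x)) a s]
  ring

/-- The properties of the polynomials in the argument: affine in each of the variables `w`, free of
zeros when `y` is in the open and all `w a` are in the closed upper half plane, and, for real `w`,
a monic real polynomial of degree `N` in `y`. -/
structure Good {ι : Type*} [DecidableEq ι] (N : ℕ) (f : ℂ → (ι ⊕ ι → ℂ) → ℂ) : Prop where
  ma : ∀ y, MultiAffine (f y)
  st : ∀ y w, 0 < y.im → (∀ a, 0 ≤ (w a).im) → f y w ≠ 0
  poly : ∀ w : ι ⊕ ι → ℝ, ∃ P : Polynomial ℝ, P.Monic ∧ P.natDegree = N ∧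
    ∀ y : ℂ, f y (fun a => (w a : ℂ)) = Polynomial.aeval y P

section
variable {ι : Type*} [DecidableEq ι]

lemma ofReal_add_single {κ : Type*} [DecidableEq κ] (w : κ → ℝ) (a : κ) (s : ℝ) :
    (bump (fun b => (w b : ℂ)) a (s : ℂ))
      = fun b => ((((bump w a s) : κ → ℝ) b : ℝ) : ℂ) := by
  funext b
  by_cases h : b = a <;> simp [bump, h]

lemma im_add_single_nonneg {κ : Type*} [DecidableEq κ] {w : κ → ℂ} (hw : ∀ a, 0 ≤ (w a).im)
    (a : κ) {s : ℂ} (hs : 0 ≤ s.im) : ∀ b, 0 ≤ (((bump w a s) : κ → ℂ) b).im := by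
  intro b
  by_cases h : b = a
  · simpa [bump, h] using add_nonneg (hw a) hs
  · simpa [bump, h] using hw b

/-- Around the mean `w'` of the shifted points, the average is the value of `F` minus the variance
`p (1 - p)` times the mixed second difference. -/
lemma pairAvg_center {R : Type*} [CommRing R] {F : (ι ⊕ ι → R) → R}
    (hF : MultiAffine F) (i : ι) (p x : R) (w : ι ⊕ ι → R) :
    ∀ w', w' = (bump (bump w (Sum.inl i) (x - p)) (Sum.inr i) (p - x)) →
    pairAvg i p x F w = F w' - p * (1 - p) * (F (bump (bump w' (Sum.inl i) 1) (Sum.inr i) 1) - F (bump w' (Sum.inl i) 1)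
        - F (bump w' (Sum.inr i) 1) + F w') := by
  intro w' hw'
  have h : ∀ u v : R, (bump (bump w (Sum.inl i) u) (Sum.inr i) v)
      = (bump (bump w' (Sum.inl i) (u - (x - p))) (Sum.inr i) (v - (p - x))) := by
    intro u v
    rw [hw', bump_comm (bump w (Sum.inl i) (x - p)), bump_bump, bump_bump]
    congr 2 <;> ring
  simp only [pairAvg]
  rw [h x (-x), h (x - 1) (1 - x), hF.two w' _ _ (x - (x - p)),
    hF.two w' _ _ (x - 1 - (x - p))]
  ring

lemma Good.pairAvg {N : ℕ} {f : ℂ → (ι ⊕ ι → ℂ) → ℂ} (hf : Good N f) (i : ι) {p x : ℝ}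
    (hp0 : 0 ≤ p) (hp1 : p ≤ 1) : Good N (fun y => pairAvg i (p : ℂ) (x : ℂ) (f y)) where
  ma y := (hf.ma y).pairAvg i _ _
  st y w hy hw := by
    rw [pairAvg_center (hf.ma y) i _ _ w _ rfl]
    set w' := (bump (bump w (Sum.inl i) ((x : ℂ) - p)) (Sum.inr i) ((p : ℂ) - x))
      with hw'
    have hw'im : ∀ a, 0 ≤ (w' a).im :=
      im_add_single_nonneg (im_add_single_nonneg hw _ (by simp)) _ (by simp)
    have := bilinear_contract (r := p * (1 - p)) (fun τ υ hτ hυ => by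
      have := hf.st y (bump (bump w' (Sum.inl i) τ) (Sum.inr i) υ) hy
        (im_add_single_nonneg (im_add_single_nonneg hw'im _ hτ) _ hυ)
      rwa [(hf.ma y).two] at this) (mul_nonneg hp0 (by linarith))
    simpa using this
  poly w := by
    obtain ⟨P, hPm, hPd, hP⟩ := hf.poly (bump (bump w (Sum.inl i) x) (Sum.inr i) (-x))
    obtain ⟨Q, hQm, hQd, hQ⟩ :=
      hf.poly (bump (bump w (Sum.inl i) (x - 1)) (Sum.inr i) (1 - x))
    obtain ⟨h1, h2⟩ := monic_convexComb hPm hQm hPd hQd p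
    refine ⟨_, h1, h2, fun y => ?_⟩
    simp only [← ofReal_add_single] at hP hQ
    push_cast at hP hQ
    simp only [SpectralRounding.pairAvg, hP, hQ]
    simp

/-- The restriction of `f` to real arguments, as a real-valued function (see `Good.ofReal_re`). -/
noncomputable def re (f : ℂ → (ι ⊕ ι → ℂ) → ℂ) (Y : ℝ) (w : ι ⊕ ι → ℝ) : ℝ :=
  (f (Y : ℂ) (fun a => (w a : ℂ))).re

lemma Good.ofReal_re {N : ℕ} {f : ℂ → (ι ⊕ ι → ℂ) → ℂ} (hf : Good N f) (Y : ℝ)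
    (w : ι ⊕ ι → ℝ) : f (Y : ℂ) (fun a => (w a : ℂ)) = (re f Y w : ℂ) := by
  obtain ⟨P, -, -, hP⟩ := hf.poly w
  have h3 : (Polynomial.aeval ((Y : ℝ) : ℂ) P) = ((P.eval Y : ℝ) : ℂ) := by
    simpa using (Polynomial.aeval_algebraMap_apply ℂ Y P)
  rw [re, hP, h3, Complex.ofReal_re]

lemma Good.re_multiAffine {N : ℕ} {f : ℂ → (ι ⊕ ι → ℂ) → ℂ} (hf : Good N f) (Y : ℝ) :
    MultiAffine (re f Y) := by
  intro w a s
  have h := hf.ma Y (fun b => (w b : ℂ)) a s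
  rw [ofReal_add_single, ← Complex.ofReal_one, ofReal_add_single, hf.ofReal_re, hf.ofReal_re,
    hf.ofReal_re] at h
  exact_mod_cast h

/-- The Rayleigh inequality `h · ∂ₐ∂_b h ≤ ∂ₐh · ∂_b h` for the restriction `h` of `f` to the reals. -/
lemma Good.rayleigh {N : ℕ} {f : ℂ → (ι ⊕ ι → ℂ) → ℂ} (hf : Good N f) (Y : ℝ)
    (w : ι ⊕ ι → ℝ) (a b : ι ⊕ ι) :
    re f Y w * (re f Y (bump (bump w a 1) b 1) - re f Y (bump w a 1)
      - re f Y (bump w b 1) + re f Y w)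
      ≤ (re f Y (bump w a 1) - re f Y w) * (re f Y (bump w b 1) - re f Y w) := by
  have hcont : ∀ w : ι ⊕ ι → ℝ,
      Continuous (fun ε : ℝ => f (Y + Complex.I * ε) (fun a => (w a : ℂ))) := by
    intro w
    obtain ⟨P, -, -, hP⟩ := hf.poly w
    simp only [hP]
    exact P.continuous_aeval.comp (by fun_prop)
  have hval : ∀ w : ι ⊕ ι → ℝ,
      f (Y + Complex.I * (0 : ℝ)) (fun a => (w a : ℂ)) = re f Y w := by
    intro w
    rw [← hf.ofReal_re]; simp
  have c0 := hcont w
  have c1 := hcont (bump w a 1)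
  have c2 := hcont (bump w b 1)
  have c3 := hcont (bump (bump w a 1) b 1)
  refine rayleigh_of_limit (fun ε => f (Y + Complex.I * ε) (fun a => (w a : ℂ)))
    (fun ε => f (Y + Complex.I * ε) (fun c => ((bump w a 1 c : ℝ) : ℂ))
      - f (Y + Complex.I * ε) (fun a => (w a : ℂ)))
    (fun ε => f (Y + Complex.I * ε) (fun c => ((bump w b 1 c : ℝ) : ℂ))
      - f (Y + Complex.I * ε) (fun a => (w a : ℂ)))
    (fun ε => f (Y + Complex.I * ε) (fun c => ((bump (bump w a 1) b 1 c : ℝ) : ℂ))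
      - f (Y + Complex.I * ε) (fun c => ((bump w a 1 c : ℝ) : ℂ))
      - f (Y + Complex.I * ε) (fun c => ((bump w b 1 c : ℝ) : ℂ))
      + f (Y + Complex.I * ε) (fun a => (w a : ℂ))) c0 (c1.sub c0) (c2.sub c0) (((c3.sub c1).sub c2).add c0)
    _ _ _ _ ?_ ?_ ?_ ?_ ?_
  · exact hval _
  · simp only [hval]; push_cast; rfl
  · simp only [hval]; push_cast; rfl
  · simp only [hval]; push_cast; rfl
  · intro ε hε τ υ hτ hυ
    have := hf.st (Y + Complex.I * ε)
      ((bump (bump (fun a => (w a : ℂ)) a τ) b υ)) (by simpa using hε)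
      (im_add_single_nonneg (im_add_single_nonneg (by simp) _ hτ) _ hυ)
    rw [(hf.ma _).two] at this
    simpa only [← ofReal_add_single, Complex.ofReal_one] using this

lemma re_pairAvg (f : ℂ → (ι ⊕ ι → ℂ) → ℂ) (i : ι) (p x Y : ℝ) (w : ι ⊕ ι → ℝ) :
    re (fun y => pairAvg i (p : ℂ) (x : ℂ) (f y)) Y w = pairAvg i p x (re f Y) w := by
  have h : ∀ u v : ℝ, (bump (bump (fun a => (w a : ℂ)) (Sum.inl i) (u : ℂ)) (Sum.inr i) (v : ℂ))
      = fun a => (((bump (bump w (Sum.inl i) u) (Sum.inr i) v) a : ℝ) : ℂ) := by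
    intro u v
    rw [ofReal_add_single, ofReal_add_single]
  have h1 := h x (-x)
  have h2 := h (x - 1) (1 - x)
  push_cast at h1 h2
  simp only [re, pairAvg, h1, h2, Complex.add_re]
  rw [← Complex.ofReal_one, ← Complex.ofReal_sub, Complex.re_ofReal_mul, Complex.re_ofReal_mul]

/-- The average of `f` over independent roundings of `x i` with probability `x i`, for `i ∈ L`. -/
noncomputable def listAvg (L : List ι) (x : ι → ℝ) (f : ℂ → (ι ⊕ ι → ℂ) → ℂ) :
    ℂ → (ι ⊕ ι → ℂ) → ℂ :=
  L.foldr (fun i g y => pairAvg i (x i : ℂ) (x i : ℂ) (g y)) f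

lemma Good.listAvg {N : ℕ} {f : ℂ → (ι ⊕ ι → ℂ) → ℂ} (hf : Good N f) (L : List ι) {x : ι → ℝ}
    (hx : ∀ i, 0 ≤ x i ∧ x i ≤ 1) : Good N (listAvg L x f) := by
  induction L with
  | nil => exact hf
  | cons i L ih => exact ih.pairAvg i (hx i).1 (hx i).2

/-- Derandomization: if the average over all roundings of the coordinates in `L` is positive on
`[b, ∞)`, then so is the polynomial of some rounding. -/
lemma Good.exists_round {N : ℕ} {f : ℂ → (ι ⊕ ι → ℂ) → ℂ} (hf : Good N f) {x : ι → ℝ}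
    (hx : ∀ i, 0 ≤ x i ∧ x i ≤ 1) {b : ℝ} (L : List ι) (hL : L.Nodup) (w : ι ⊕ ι → ℝ)
    (hpos : ∀ Y, b ≤ Y → 0 < re (SpectralRounding.listAvg L x f) Y w) :
    ∃ z : ι → ℝ, (∀ i, z i = 0 ∨ z i = 1) ∧ ∀ Y, b ≤ Y →
      0 < re f Y (fun a => w a + Sum.elim (fun i => if i ∈ L then x i - z i else 0)
        (fun i => if i ∈ L then z i - x i else 0) a) := by
  induction L generalizing w with
  | nil =>
    refine ⟨0, by simp, fun Y hY => ?_⟩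
    have : 0 < re f Y w := hpos Y hY
    simpa using this
  | cons i L ih =>
    have hg := hf.listAvg L hx
    set g := SpectralRounding.listAvg L x f with hgdef
    set w0 := (bump (bump w (Sum.inl i) (x i)) (Sum.inr i) (-x i)) with hw0
    set w1 := (bump (bump w (Sum.inl i) (x i - 1)) (Sum.inr i) (1 - x i)) with hw1
    obtain ⟨P, hPm, hPd, hP⟩ := hg.poly w0
    obtain ⟨Q, hQm, hQd, hQ⟩ := hg.poly w1
    have hev : ∀ (P : Polynomial ℝ) (Y : ℝ), (Polynomial.aeval (Y : ℂ) P) = ((P.eval Y : ℝ) : ℂ) :=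
      fun P Y => by simpa using (Polynomial.aeval_algebraMap_apply ℂ Y P)
    have hPr : ∀ Y : ℝ, re g Y w0 = P.eval Y := by
      intro Y; rw [re, hP, hev, Complex.ofReal_re]
    have hQr : ∀ Y : ℝ, re g Y w1 = Q.eval Y := by
      intro Y; rw [re, hQ, hev, Complex.ofReal_re]
    have hreal : ∀ p : ℝ, 0 ≤ p → p ≤ 1 → ∀ y : ℂ, 0 < y.im →
        Polynomial.aeval y (Polynomial.C (1 - p) * P + Polynomial.C p * Q) ≠ 0 := by
      intro p hp0 hp1 y hy
      have := (hg.pairAvg i (x := x i) hp0 hp1).st y (fun a => (w a : ℂ)) hy (by simp)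
      simp only [SpectralRounding.pairAvg] at this
      have e0 : (bump (bump (fun a => (w a : ℂ)) (Sum.inl i) (x i : ℂ)) (Sum.inr i) (-(x i) : ℂ)) = fun a => (w0 a : ℂ) := by
        rw [hw0, ← ofReal_add_single, ← ofReal_add_single]; push_cast; rfl
      have e1 : (bump (bump (fun a => (w a : ℂ)) (Sum.inl i) ((x i : ℂ) - 1)) (Sum.inr i) (1 - (x i) : ℂ)) = fun a => (w1 a : ℂ) := by
        rw [hw1, ← ofReal_add_single, ← ofReal_add_single]; push_cast; rfl
      rw [e0, e1, hP, hQ] at this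
      simpa using this
    have hcomb : ∀ Y, b ≤ Y → 0 < (1 - x i) * P.eval Y + x i * Q.eval Y := by
      intro Y hY
      have := hpos Y hY
      have e : re (SpectralRounding.listAvg (i :: L) x f) Y w
          = SpectralRounding.pairAvg i (x i) (x i) (re g Y) w := re_pairAvg g i (x i) (x i) Y w
      rw [e] at this
      simpa only [SpectralRounding.pairAvg, ← hw0, ← hw1, hPr, hQr] using this
    have hiL : i ∉ L := (List.nodup_cons.mp hL).1
    have hL' := (List.nodup_cons.mp hL).2
    -- the value `e` of `z i` shifts the two coordinates of `i` by `x i - e` and `e - x i`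
    have fin : ∀ e : ℝ, (e = 0 ∨ e = 1) →
        (∀ Y, b ≤ Y → 0 < re g Y (bump (bump w (Sum.inl i) (x i - e)) (Sum.inr i) (e - x i))) → ∃ z : ι → ℝ, (∀ i, z i = 0 ∨ z i = 1) ∧
          ∀ Y, b ≤ Y → 0 < re f Y (fun a => w a + Sum.elim
            (fun j => if j ∈ i :: L then x j - z j else 0)
            (fun j => if j ∈ i :: L then z j - x j else 0) a) := by
      intro e he hh
      obtain ⟨z, hz, hzp⟩ := ih hL' _ hh
      refine ⟨Function.update z i e, ?_, ?_⟩
      · intro j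
        by_cases hj : j = i
        · subst hj; simpa using he
        · simpa [hj] using hz j
      · intro Y hY
        convert hzp Y hY using 2
        funext a
        rcases a with j | j
        · by_cases hj : j = i
          · subst hj; simp [bump, hiL]
          · simp [bump, hj]
        · by_cases hj : j = i
          · subst hj; simp [bump, hiL]
          · simp [bump, hj]
    rcases exists_pos_endpoint N hPm hQm hPd hQd hreal (hx i).1 (hx i).2 hcomb with h | h
    · refine fin 0 (Or.inl rfl) (fun Y hY => ?_)
      have := h Y hY
      rw [← hPr, hw0] at this
      simpa using this
    · refine fin 1 (Or.inr rfl) (fun Y hY => ?_)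
      have := h Y hY
      rwa [← hQr, hw1] at this

end

/-! ### The barrier argument -/

lemma slope_nonneg {p q : ℝ} (h : ∀ s : ℝ, 0 ≤ s → 0 ≤ p + s * q) : 0 ≤ q := by
  by_contra hq
  push Not at hq
  have hp : 0 ≤ p := by simpa using h 0 le_rfl
  have h1 := h ((p + 1) / (-q)) (div_nonneg (by linarith) (by linarith))
  have : (p + 1) / (-q) * q = -(p + 1) := by
    rw [div_neg, neg_mul, div_mul_cancel₀ _ hq.ne]
  linarith

/-- The numerical core of the barrier argument. Here `α₀`, `S₀`, `D₀` are the value, the sum of the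
two first differences and the mixed second difference of a bi-affine function along a pair of
coordinates, and `α₁`, `S₁`, `D₁` are the increments of these quantities in a further direction.
If the increment of the value is at most `φ α₀`, the same bound holds after the averaging step,
provided that the base point moves up by `d ≥ 2 φ r`, where `r` is the variance. The hypothesis
`hq` is the sum of two Rayleigh inequalities along the diagonal. -/
lemma step_algebra {α₀ α₁ S₀ S₁ D₀ D₁ d r φ : ℝ} (hα : 0 < α₀) (hS : 0 ≤ S₀) (hD : 0 ≤ D₀)
    (hr : 0 ≤ r) (hφ : 0 ≤ φ) (hd : 2 * φ * r ≤ d) (hSφ : S₀ ≤ 2 * φ * α₀) (hα₁ : α₁ ≤ φ * α₀)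
    (hDS : α₀ * D₀ ≤ S₀ ^ 2 / 4)
    (hq : ∀ z : ℝ, 0 ≤ (S₀ * α₁ - α₀ * S₁) + 2 * z * (D₀ * α₁ - α₀ * D₁)
      + z ^ 2 * (D₀ * S₁ - S₀ * D₁)) :
    0 < α₀ + d * S₀ + (d ^ 2 - r) * D₀ ∧
      α₁ + d * S₁ + (d ^ 2 - r) * D₁ ≤ φ * (α₀ + d * S₀ + (d ^ 2 - r) * D₀) := by
  have hd0 : 0 ≤ d := le_trans (by positivity) hd
  have hg : 0 < α₀ + d * S₀ + (d ^ 2 - r) * D₀ := by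
    have h1 : D₀ ≤ S₀ * (φ / 2) := by
      have : α₀ * D₀ ≤ α₀ * (S₀ * (φ / 2)) := by nlinarith
      exact le_of_mul_le_mul_left this hα
    have h2 : r * D₀ ≤ d * S₀ := by
      calc r * D₀ ≤ r * (S₀ * (φ / 2)) := by gcongr
        _ = (2 * φ * r) * S₀ / 4 := by ring
        _ ≤ d * S₀ / 4 := by gcongr
        _ ≤ d * S₀ := by nlinarith [mul_nonneg hd0 hS]
    nlinarith [mul_nonneg (sq_nonneg d) hD]
  refine ⟨hg, ?_⟩
  set A := S₀ * α₁ - α₀ * S₁ with hA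
  set B := D₀ * α₁ - α₀ * D₁ with hB
  set C := D₀ * S₁ - S₀ * D₁ with hC
  have hrel : α₀ * C = S₀ * B - D₀ * A := by rw [hA, hB, hC]; ring
  have hA0 : 0 ≤ A := by simpa using hq 0
  have hC0 : 0 ≤ C := by
    by_contra hneg
    push Not at hneg
    have h1 := hq (Real.sqrt ((A + 1) / (-C)))
    have h2 := hq (-Real.sqrt ((A + 1) / (-C)))
    have h3 : Real.sqrt ((A + 1) / (-C)) ^ 2 = (A + 1) / (-C) :=
      Real.sq_sqrt (div_nonneg (by linarith) (by linarith))
    have h4 : (A + 1) / (-C) * C = -(A + 1) := by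
      rw [div_neg, neg_mul, div_mul_cancel₀ _ hneg.ne]
    rw [neg_sq] at h2
    rw [h3, h4] at h1 h2
    linarith
  have key : 0 ≤ d * A + (d ^ 2 - r) * B := by
    rcases hS.eq_or_lt with h0 | hpos
    · have hDA : D₀ * A = 0 := by
        have h1 : 0 ≤ α₀ * C := by positivity
        have h2 : 0 ≤ D₀ * A := by positivity
        rw [← h0] at hrel
        linarith
      have hC00 : C = 0 := by
        rw [← h0, hDA] at hrel
        have : α₀ * C = 0 := by linarith
        exact (mul_eq_zero.mp this).resolve_left hα.ne'
      have hB0 : B = 0 := by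
        rw [hC00] at hq
        have h1 : 0 ≤ B := slope_nonneg (p := A) fun s _ => by
          have := hq (s / 2); nlinarith
        have h2 : 0 ≤ -B := slope_nonneg (p := A) fun s _ => by
          have := hq (-s / 2); nlinarith
        linarith
      rw [hB0]
      nlinarith [mul_nonneg hd0 hA0]
    · have hB0 : 0 ≤ B := by
        have : 0 ≤ S₀ * B := by nlinarith [mul_nonneg hα.le hC0, mul_nonneg hD hA0]
        exact nonneg_of_mul_nonneg_right this hpos
      have hBA : α₀ * B ≤ S₀ * A := by
        -- At this point the quadratic in `hq` is a positive multiple of `S₀ A - α₀ B`, up to a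
        -- nonpositive term.
        have h1 := hq (-α₀ / S₀)
        have h2 : S₀ ^ 2 * (A + 2 * (-α₀ / S₀) * B + (-α₀ / S₀) ^ 2 * C)
            = S₀ ^ 2 * A - 2 * (α₀ * S₀) * B + α₀ * (α₀ * C) := by field_simp; try ring
        have h3 : 0 ≤ S₀ ^ 2 * A - 2 * (α₀ * S₀) * B + α₀ * (α₀ * C) := by
          rw [← h2]; positivity
        rw [hrel] at h3
        have h4 : S₀ * (α₀ * B) ≤ S₀ * (S₀ * A) := by
          nlinarith [mul_nonneg hα.le (mul_nonneg hD hA0)]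
        exact le_of_mul_le_mul_left h4 hpos
      have hB2 : B ≤ 2 * φ * A := by
        have : α₀ * B ≤ α₀ * (2 * φ * A) := by nlinarith
        exact le_of_mul_le_mul_left this hα
      have : r * B ≤ d * A := by
        calc r * B ≤ r * (2 * φ * A) := by gcongr
          _ = 2 * φ * r * A := by ring
          _ ≤ d * A := by gcongr
      nlinarith [mul_nonneg (sq_nonneg d) hB0]
  have h5 : α₀ * (α₁ + d * S₁ + (d ^ 2 - r) * D₁)
      = α₁ * (α₀ + d * S₀ + (d ^ 2 - r) * D₀) - (d * A + (d ^ 2 - r) * B) := by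
    rw [hA, hB]; ring
  have h6 : α₀ * (α₁ + d * S₁ + (d ^ 2 - r) * D₁)
      ≤ α₀ * (φ * (α₀ + d * S₀ + (d ^ 2 - r) * D₀)) := by
    rw [h5]
    nlinarith [mul_le_mul_of_nonneg_right hα₁ hg.le]
  exact le_of_mul_le_mul_left h6 hα

section
variable {ι : Type*} [DecidableEq ι]

/-- The average in terms of the differences of `F` at a base point `w₀` lying `d` below `w` in both
coordinates of `i`. -/
lemma pairAvg_from {R : Type*} [CommRing R] {F : (ι ⊕ ι → R) → R}
    (hF : MultiAffine F) (i : ι) (x d : R) (w w₀ : ι ⊕ ι → R)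
    (hw : w = bump (bump w₀ (Sum.inl i) d) (Sum.inr i) d) :
    pairAvg i x x F w = F w₀
      + d * ((F (bump w₀ (Sum.inl i) 1) - F w₀) + (F (bump w₀ (Sum.inr i) 1) - F w₀))
      + (d ^ 2 - x * (1 - x)) * (F (bump (bump w₀ (Sum.inl i) 1) (Sum.inr i) 1)
        - F (bump w₀ (Sum.inl i) 1) - F (bump w₀ (Sum.inr i) 1) + F w₀) := by
  have h : ∀ u v : R, bump (bump w (Sum.inl i) u) (Sum.inr i) v
      = bump (bump w₀ (Sum.inl i) (d + u)) (Sum.inr i) (d + v) := by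
    intro u v
    rw [hw, bump_comm (bump w₀ (Sum.inl i) d), bump_bump, bump_bump]
  simp only [pairAvg]
  rw [h x (-x), h (x - 1) (1 - x), hF.two w₀ _ _ (d + x), hF.two w₀ _ _ (d + (x - 1))]
  ring

/-- The element of `ι` that a coordinate of `ι ⊕ ι` belongs to. -/
def idx : ι ⊕ ι → ι := Sum.elim id id

/-- The barrier invariant. Before any averaging, the polynomial is positive and its relative
increments are at most `φ` on the region `w a ≥ -d`. Averaging over `i` costs the slack `d i` in the
two coordinates of `i`, and preserves both properties for the remaining directions. -/
lemma Good.barrier {N : ℕ} {f : ℂ → (ι ⊕ ι → ℂ) → ℂ} (hf : Good N f) {x : ι → ℝ}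
    (hx : ∀ i, 0 ≤ x i ∧ x i ≤ 1) {d : ι → ℝ} {φ Y : ℝ} (hφ : 0 ≤ φ)
    (hd : ∀ i, 2 * φ * (x i * (1 - x i)) ≤ d i)
    (base : ∀ w : ι ⊕ ι → ℝ, (∀ a, -d (idx a) ≤ w a) →
      0 < re f Y w ∧ ∀ a, re f Y (bump w a 1) - re f Y w ≤ φ * re f Y w)
    (L : List ι) (hL : L.Nodup) :
    ∀ w : ι ⊕ ι → ℝ, (∀ a, (if idx a ∈ L then 0 else -d (idx a)) ≤ w a) →
      0 < re (SpectralRounding.listAvg L x f) Y w ∧ ∀ a, idx a ∉ L →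
        re (SpectralRounding.listAvg L x f) Y (bump w a 1) - re (SpectralRounding.listAvg L x f) Y w
          ≤ φ * re (SpectralRounding.listAvg L x f) Y w := by
  induction L with
  | nil =>
    intro w hw
    obtain ⟨h1, h2⟩ := base w (by simpa using hw)
    exact ⟨h1, fun a _ => h2 a⟩
  | cons i L ih =>
    have hiL : i ∉ L := (List.nodup_cons.mp hL).1
    have hG := hf.listAvg L hx
    replace ih := ih (List.nodup_cons.mp hL).2
    have hrec : ∀ w, re (SpectralRounding.listAvg (i :: L) x f) Y w
        = SpectralRounding.pairAvg i (x i) (x i) (re (SpectralRounding.listAvg L x f) Y) w :=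
      fun w => re_pairAvg _ i (x i) (x i) Y w
    have hMA := hG.re_multiAffine Y
    have hRay := hG.rayleigh Y
    simp only [hrec]
    set h := re (SpectralRounding.listAvg L x f) Y with hh
    have hxi := hx i
    have hr : 0 ≤ x i * (1 - x i) := mul_nonneg hxi.1 (by linarith [hxi.2])
    intro w hw
    have hb0 : ∀ (u : ι ⊕ ι → ℝ) (a : ι ⊕ ι), bump u a 0 = u := fun u a => by
      funext c; simp [bump]
    have hwi : ∀ a, idx a = i → 0 ≤ w a := fun a ha => by simpa [ha] using hw a
    set w₀ := bump (bump w (Sum.inl i) (-d i)) (Sum.inr i) (-d i) with hw₀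
    have hww : w = bump (bump w₀ (Sum.inl i) (d i)) (Sum.inr i) (d i) := by
      rw [hw₀, bump_comm (bump w (Sum.inl i) (-d i)), bump_bump, bump_bump]
      simp [hb0]
    -- the region on which the induction hypothesis applies contains `w₀` and all points above it
    have hadm : ∀ s t : ℝ, 0 ≤ s → 0 ≤ t → ∀ a, (if idx a ∈ L then 0 else -d (idx a))
        ≤ bump (bump w₀ (Sum.inl i) s) (Sum.inr i) t a := by
      intro s t hs ht a
      rw [hw₀, bump_comm (bump w (Sum.inl i) (-d i)), bump_bump, bump_bump]
      rcases a with j | j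
      · by_cases hj : j = i
        · subst hj
          have := hwi (Sum.inl j) rfl
          simp [idx, hiL, bump]; linarith
        · have := hw (Sum.inl j)
          by_cases hjL : j ∈ L <;> simpa [idx, bump, hj, hjL] using this
      · by_cases hj : j = i
        · subst hj
          have := hwi (Sum.inr j) rfl
          simp [idx, hiL, bump]; linarith
        · have := hw (Sum.inr j)
          by_cases hjL : j ∈ L <;> simpa [idx, bump, hj, hjL] using this
    have hpos : ∀ s t : ℝ, 0 ≤ s → 0 ≤ t →
        0 < h (bump (bump w₀ (Sum.inl i) s) (Sum.inr i) t) :=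
      fun s t hs ht => (ih _ (hadm s t hs ht)).1
    obtain ⟨hα, hbar⟩ := ih w₀ (by simpa only [hb0] using hadm 0 0 le_rfl le_rfl)
    set α := h w₀ with hαdef
    set β := h (bump w₀ (Sum.inl i) 1) - α with hβdef
    set γ := h (bump w₀ (Sum.inr i) 1) - α with hγdef
    set δ := h (bump (bump w₀ (Sum.inl i) 1) (Sum.inr i) 1)
        - h (bump w₀ (Sum.inl i) 1) - h (bump w₀ (Sum.inr i) 1) + α with hδdef
    have hexp : ∀ s t : ℝ, h (bump (bump w₀ (Sum.inl i) s) (Sum.inr i) t)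
        = α + s * β + t * γ + s * t * δ := fun s t => hMA.two w₀ _ _ s t
    have hβ : 0 ≤ β := slope_nonneg (p := α) fun s hs => by
      have := hpos s 0 hs le_rfl
      rw [hexp] at this; linarith
    have hγ' : ∀ s, 0 ≤ s → 0 ≤ γ + s * δ := fun s hs =>
      slope_nonneg (p := α + s * β) fun t ht => by
        have := hpos s t hs ht
        rw [hexp] at this; linarith
    have hγ : 0 ≤ γ := by simpa using hγ' 0 le_rfl
    have hδ : 0 ≤ δ := slope_nonneg hγ'
    have hβφ : β ≤ φ * α := hbar (Sum.inl i) hiL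
    have hγφ : γ ≤ φ * α := hbar (Sum.inr i) hiL
    have hδ4 : α * δ ≤ (β + γ) ^ 2 / 4 := by
      have : α * δ ≤ β * γ := hRay w₀ (Sum.inl i) (Sum.inr i)
      nlinarith [sq_nonneg (β - γ)]
    have hg0 : SpectralRounding.pairAvg i (x i) (x i) h w
        = α + d i * (β + γ) + (d i ^ 2 - x i * (1 - x i)) * δ :=
      pairAvg_from hMA i (x i) (d i) w w₀ hww
    have hstep : ∀ {α₁ S₁ D₁ : ℝ}, α₁ ≤ φ * α →
        (∀ z : ℝ, 0 ≤ ((β + γ) * α₁ - α * S₁) + 2 * z * (δ * α₁ - α * D₁)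
          + z ^ 2 * (δ * S₁ - (β + γ) * D₁)) → _ := fun {α₁ S₁ D₁} h1 h2 =>
      step_algebra (d := d i) (r := x i * (1 - x i)) (φ := φ) hα (add_nonneg hβ hγ) hδ hr hφ
        (hd i) (by linarith) h1 hδ4 h2
    refine ⟨?_, fun a ha => ?_⟩
    · rw [hg0]
      exact (hstep (α₁ := 0) (S₁ := 0) (D₁ := 0) (by positivity) (by intro z; simp)).1
    · have hai : idx a ≠ i := fun h' => ha (by simp [h'])
      have haL : idx a ∉ L := fun h' => ha (by simp [h'])
      set w₁ := bump w₀ a 1 with hw₁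
      have hww₁ : bump w a 1 = bump (bump w₁ (Sum.inl i) (d i)) (Sum.inr i) (d i) := by
        rw [hw₁, bump_comm w₀ a, bump_comm _ a, ← hww]
      have hg1 := pairAvg_from hMA i (x i) (d i) _ w₁ hww₁
      set α' := h w₁ with hα'
      set β' := h (bump w₁ (Sum.inl i) 1) - α' with hβ'
      set γ'' := h (bump w₁ (Sum.inr i) 1) - α' with hγ''
      set δ' := h (bump (bump w₁ (Sum.inl i) 1) (Sum.inr i) 1)
        - h (bump w₁ (Sum.inl i) 1) - h (bump w₁ (Sum.inr i) 1) + α' with hδ'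
      have hexp' : ∀ s t : ℝ, h (bump (bump w₁ (Sum.inl i) s) (Sum.inr i) t)
        = α' + s * β' + t * γ'' + s * t * δ' := fun s t => hMA.two w₁ _ _ s t
      have := (hstep (α₁ := α' - α) (S₁ := (β' + γ'') - (β + γ)) (D₁ := δ' - δ)
        (hbar a haL) ?_).2
      · rw [hg0, hg1]; linarith
      intro z
      -- sum of the Rayleigh inequalities for the pairs `(inl i, a)` and `(inr i, a)`
      have r1 := hRay (bump (bump w₀ (Sum.inl i) z) (Sum.inr i) z) (Sum.inl i) a
      have r2 := hRay (bump (bump w₀ (Sum.inl i) z) (Sum.inr i) z) (Sum.inr i) a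
      have e1 : bump (bump (bump w₀ (Sum.inl i) z) (Sum.inr i) z) (Sum.inl i) 1
          = bump (bump w₀ (Sum.inl i) (z + 1)) (Sum.inr i) z := by
        rw [bump_comm _ (Sum.inr i), bump_bump]
      have e2 : bump (bump (bump w₀ (Sum.inl i) z) (Sum.inr i) z) (Sum.inr i) 1
          = bump (bump w₀ (Sum.inl i) z) (Sum.inr i) (z + 1) := by
        rw [bump_bump]
      have e3 : ∀ s t : ℝ, bump (bump (bump w₀ (Sum.inl i) s) (Sum.inr i) t) a 1
          = bump (bump w₁ (Sum.inl i) s) (Sum.inr i) t := by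
        intro s t
        rw [hw₁, bump_comm w₀ a, bump_comm _ a]
      simp only [e1, e2, e3, hexp, hexp'] at r1 r2
      linarith [r1, r2]

end

/-! ### The determinant polynomials -/

section
variable {ι : Type*} [DecidableEq ι]

lemma bump_inl_inl {R : Type*} [AddCommMonoid R] (w : ι ⊕ ι → R) (a : ι) (s : R) :
    bump w (Sum.inl a) s ∘ Sum.inl = bump (w ∘ Sum.inl) a s := by
  funext i; simp [bump]

lemma bump_inl_inr {R : Type*} [AddCommMonoid R] (w : ι ⊕ ι → R) (a : ι) (s : R) :
    bump w (Sum.inl a) s ∘ Sum.inr = w ∘ Sum.inr := by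
  funext i; simp [bump]

lemma bump_inr_inr {R : Type*} [AddCommMonoid R] (w : ι ⊕ ι → R) (a : ι) (s : R) :
    bump w (Sum.inr a) s ∘ Sum.inr = bump (w ∘ Sum.inr) a s := by
  funext i; simp [bump]

lemma bump_inr_inl {R : Type*} [AddCommMonoid R] (w : ι ⊕ ι → R) (a : ι) (s : R) :
    bump w (Sum.inr a) s ∘ Sum.inl = w ∘ Sum.inl := by
  funext i; simp [bump]

end

set_option linter.unusedSectionVars false

section
variable {ι ν : Type*} [Fintype ι] [DecidableEq ι] [Fintype ν] [DecidableEq ν]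

/-- The matrix `y I + ∑ tᵢ vᵢ vᵢᵀ`. -/
def pencil {R : Type*} [CommRing R] (v : ι → ν → R) (y : R) (t : ι → R) : Matrix ν ν R :=
  y • 1 + ∑ i, t i • vecMulVec (v i) (v i)

lemma dotProduct_pencil_mulVec {R : Type*} [CommRing R] (v : ι → ν → R) (y : R) (t : ι → R)
    (p u : ν → R) :
    p ⬝ᵥ (pencil v y t *ᵥ u) = y * (p ⬝ᵥ u) + ∑ i, t i * ((p ⬝ᵥ v i) * (v i ⬝ᵥ u)) := by
  rw [pencil, add_mulVec, dotProduct_add, smul_mulVec, one_mulVec, dotProduct_smul, sum_mulVec,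
    dotProduct_sum]
  simp [smul_mulVec, vecMulVec_mulVec, mul_comm]

lemma pencil_bump {R : Type*} [CommRing R] (v : ι → ν → R) (y : R) (t : ι → R) (a : ι) (s : R) :
    pencil v y (bump t a s) = pencil v y t + s • vecMulVec (v a) (v a) := by
  simp [pencil, bump, add_smul, Finset.sum_add_distrib, add_assoc, ite_smul]

/-- The determinant is affine in the coefficient of a rank-one update. -/
lemma det_add_smul_vecMulVec_s2 {R : Type*} [CommRing R] (M : Matrix ν ν R) (u w : ν → R) (s : R) :
    (M + s • vecMulVec u w).det = M.det + s * ((M + (1 : R) • vecMulVec u w).det - M.det) := by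
  -- Bordering `M` by the column `-s u` and the row `w` gives a matrix with the same determinant,
  -- in which `s` occurs in a single column.
  set E : Matrix (ν ⊕ Unit) (ν ⊕ Unit) R := fromBlocks M 0 (replicateRow Unit w) 0 with hE
  have key : ∀ s : R, (M + s • vecMulVec u w).det
      = (E.updateCol (Sum.inr ()) (Sum.elim 0 1)).det
        + s * (E.updateCol (Sum.inr ()) (Sum.elim (-u) 0)).det := by
    intro s
    have h1 : (M + s • vecMulVec u w).det
        = (fromBlocks M (replicateCol Unit (-(s • u))) (replicateRow Unit w) 1).det := by
      rw [det_fromBlocks_one₂₂]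
      congr 1
      ext i j
      simp [Matrix.mul_apply, vecMulVec_apply, mul_assoc]
    have h2 : fromBlocks M (replicateCol Unit (-(s • u))) (replicateRow Unit w) 1
        = E.updateCol (Sum.inr ())
          ((Sum.elim (0 : ν → R) (1 : Unit → R)) + s • (Sum.elim (-u) (0 : Unit → R))) := by
      ext i j
      rcases i with i | i <;> rcases j with j | j <;> simp [hE]
    rw [h1, h2, det_updateCol_add, det_updateCol_smul]
  have h0 := key 0
  rw [zero_smul, add_zero, zero_mul, add_zero] at h0
  rw [key s, key 1, h0]
  ring

lemma pencil_det_bump {R : Type*} [CommRing R] (v : ι → ν → R) (y : R) (t : ι → R) (a : ι)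
    (s : R) : (pencil v y (bump t a s)).det = (pencil v y t).det
      + s * ((pencil v y (bump t a 1)).det - (pencil v y t).det) := by
  rw [pencil_bump, pencil_bump, det_add_smul_vecMulVec_s2]

/-- For a kernel vector `u`, the quadratic form at `u` has imaginary part at least `Im y · |u|² > 0`. -/
lemma pencil_det_ne_zero (v : ι → ν → ℝ) {y : ℂ} (hy : 0 < y.im) {t : ι → ℂ}
    (ht : ∀ i, 0 ≤ (t i).im) : (pencil (fun i j => (v i j : ℂ)) y t).det ≠ 0 := by
  intro h
  obtain ⟨u, hu, h0⟩ := exists_mulVec_eq_zero_iff.mpr h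
  have h1 := dotProduct_pencil_mulVec (fun i j => (v i j : ℂ)) y t (star u) u
  rw [h0, dotProduct_zero] at h1
  have h2 : ∀ i, (star u ⬝ᵥ fun j => (v i j : ℂ)) * ((fun j => (v i j : ℂ)) ⬝ᵥ u)
      = (Complex.normSq ((fun j => (v i j : ℂ)) ⬝ᵥ u) : ℂ) := by
    intro i
    have : (star u ⬝ᵥ fun j => (v i j : ℂ)) = star ((fun j => (v i j : ℂ)) ⬝ᵥ u) := by
      simp [dotProduct, mul_comm]
    rw [this, Complex.normSq_eq_conj_mul_self]; rfl
  have h3 : star u ⬝ᵥ u = ((∑ j, Complex.normSq (u j) : ℝ) : ℂ) := by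
    simp [dotProduct, Complex.normSq_eq_conj_mul_self]
  have h4 : 0 < ∑ j, Complex.normSq (u j) := by
    obtain ⟨j, hj⟩ := Function.ne_iff.mp hu
    exact Finset.sum_pos' (fun j _ => Complex.normSq_nonneg _)
      ⟨j, Finset.mem_univ _, Complex.normSq_pos.mpr hj⟩
  simp only [h2, h3] at h1
  have h5 := congrArg Complex.im h1
  simp only [Complex.zero_im, Complex.add_im, Complex.im_sum, Complex.im_mul_ofReal] at h5
  have h6 : 0 ≤ ∑ i, (t i).im * Complex.normSq ((fun j => (v i j : ℂ)) ⬝ᵥ u) :=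
    Finset.sum_nonneg fun i _ => mul_nonneg (ht i) (Complex.normSq_nonneg _)
  nlinarith [mul_pos hy h4]

lemma pencil_poly (v : ι → ν → ℝ) (t : ι → ℝ) :
    ∃ P : Polynomial ℝ, P.Monic ∧ P.natDegree = Fintype.card ν ∧
      ∀ y : ℂ, (pencil (fun i j => (v i j : ℂ)) y (fun i => (t i : ℂ))).det
        = Polynomial.aeval y P := by
  refine ⟨(-∑ i, t i • vecMulVec (v i) (v i)).charpoly, charpoly_monic _,
    charpoly_natDegree_eq_dim _, fun y => ?_⟩
  have h : Polynomial.aeval y (-∑ i, t i • vecMulVec (v i) (v i)).charpoly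
      = ((-∑ i, t i • vecMulVec (v i) (v i)).map (algebraMap ℝ ℂ)).charpoly.eval y := by
    rw [charpoly_map, Polynomial.eval_map_algebraMap]
  rw [h, eval_charpoly]
  congr 1
  ext i j
  simp [pencil, Matrix.sum_apply, vecMulVec_apply, Matrix.one_apply, Matrix.diagonal_apply]

lemma pencil_ofReal (v : ι → ν → ℝ) (Y : ℝ) (t : ι → ℝ) :
    (pencil (fun i j => (v i j : ℂ)) (Y : ℂ) (fun i => (t i : ℂ))).det
      = ((pencil v Y t).det : ℂ) := by
  have : ((pencil v Y t).det : ℂ) = Complex.ofRealHom (pencil v Y t).det := rfl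
  rw [this, RingHom.map_det]
  congr 1
  ext i j
  simp [pencil, Matrix.sum_apply, vecMulVec_apply, Matrix.one_apply]
  split_ifs <;> simp

/-- The polynomial `det (y I + ∑ w (inl i) vᵢ vᵢᵀ) · det (y I + ∑ w (inr i) vᵢ vᵢᵀ)`, whose two
factors control the two one-sided bounds. -/
noncomputable def pairDet (v : ι → ν → ℝ) (y : ℂ) (w : ι ⊕ ι → ℂ) : ℂ :=
  (pencil (fun i j => (v i j : ℂ)) y (w ∘ Sum.inl)).det
    * (pencil (fun i j => (v i j : ℂ)) y (w ∘ Sum.inr)).det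

lemma pairDet_good (v : ι → ν → ℝ) :
    Good (Fintype.card ν + Fintype.card ν) (pairDet v) where
  ma y w a s := by
    rcases a with a | a
    · simp only [pairDet, bump_inl_inl, bump_inl_inr]
      rw [pencil_det_bump _ _ _ a s]; ring
    · simp only [pairDet, bump_inr_inl, bump_inr_inr]
      rw [pencil_det_bump _ _ _ a s]; ring
  st y w hy hw := mul_ne_zero (pencil_det_ne_zero v hy fun i => hw _)
    (pencil_det_ne_zero v hy fun i => hw _)
  poly w := by
    obtain ⟨P, hPm, hPd, hP⟩ := pencil_poly v (w ∘ Sum.inl)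
    obtain ⟨Q, hQm, hQd, hQ⟩ := pencil_poly v (w ∘ Sum.inr)
    refine ⟨P * Q, hPm.mul hQm, by rw [hPm.natDegree_mul hQm, hPd, hQd], fun y => ?_⟩
    rw [map_mul, ← hP, ← hQ]
    rfl

lemma re_pairDet (v : ι → ν → ℝ) (Y : ℝ) (w : ι ⊕ ι → ℝ) :
    re (pairDet v) Y w = (pencil v Y (w ∘ Sum.inl)).det * (pencil v Y (w ∘ Sum.inr)).det := by
  have h : pairDet v (Y : ℂ) (fun a => (w a : ℂ))
      = (((pencil v Y (w ∘ Sum.inl)).det * (pencil v Y (w ∘ Sum.inr)).det : ℝ) : ℂ) := by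
    push_cast
    rw [← pencil_ofReal, ← pencil_ofReal]
    rfl
  rw [re, h, Complex.ofReal_re]

lemma pencil_isHermitian (v : ι → ν → ℝ) (Y : ℝ) (t : ι → ℝ) : (pencil v Y t).IsHermitian := by
  ext i j
  simp [pencil, Matrix.sum_apply, vecMulVec_apply, Matrix.one_apply, eq_comm, mul_comm]

/-- If the matrix is at least `c I`, a rank-one update multiplies the determinant by
`1 + vᵀ M⁻¹ v ≤ 1 + A / c`. -/
lemma pencil_barrier (v : ι → ν → ℝ) {Y c A : ℝ} (hc : 0 < c) {t : ι → ℝ}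
    (hv : ∀ i, v i ⬝ᵥ v i ≤ A)
    (hM : ∀ u : ν → ℝ, c * (u ⬝ᵥ u) ≤ u ⬝ᵥ (pencil v Y t *ᵥ u)) :
    0 < (pencil v Y t).det ∧ ∀ a, (pencil v Y (bump t a 1)).det - (pencil v Y t).det
      ≤ A / c * (pencil v Y t).det := by
  have hpd : (pencil v Y t).PosDef := by
    refine .of_dotProduct_mulVec_pos (pencil_isHermitian v Y t) fun u hu => ?_
    rw [star_trivial]
    refine lt_of_lt_of_le ?_ (hM u)
    have : 0 < star u ⬝ᵥ u := dotProduct_star_self_pos_iff.mpr hu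
    rw [star_trivial] at this
    positivity
  have hdet := hpd.det_pos
  refine ⟨hdet, fun a => ?_⟩
  set M := pencil v Y t with hMdef
  set u := M⁻¹ *ᵥ v a with hu
  have hMu : M *ᵥ u = v a := by
    rw [hu, mulVec_mulVec, mul_nonsing_inv _ hdet.ne'.isUnit, one_mulVec]
  have h1 : (M + (1 : ℝ) • vecMulVec (v a) (v a)).det = M.det * (1 + v a ⬝ᵥ u) := by
    have e := det_add_replicateCol_mul_replicateRow (ι := Unit) (hdet.ne'.isUnit) (v a) (v a)
    have e2 : replicateCol Unit (v a) * replicateRow Unit (v a) = vecMulVec (v a) (v a) := by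
      ext i j; simp [Matrix.mul_apply, vecMulVec_apply]
    rw [one_smul, ← e2, e]
    congr 1
    rw [det_unique, Matrix.mul_assoc, ← replicateCol_mulVec]
    simp [hu, replicateRow_mul_replicateCol_apply]
  have h2 : v a ⬝ᵥ u ≤ A / c := by
    have h3 := hM u
    rw [hMu, dotProduct_comm u (v a)] at h3
    have h4 : (v a ⬝ᵥ u) ^ 2 ≤ (v a ⬝ᵥ v a) * (u ⬝ᵥ u) := by
      simpa [dotProduct, pow_two] using Finset.sum_mul_sq_le_sq_mul_sq Finset.univ (v a) u
    have h5 : 0 ≤ u ⬝ᵥ u := by simpa using dotProduct_star_self_nonneg u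
    have h6 := hv a
    rw [le_div_iff₀ hc]
    rcases (mul_nonneg hc.le h5 |>.trans h3).eq_or_lt with h7 | h7
    · rw [← h7]
      have : 0 ≤ v a ⬝ᵥ v a := by simpa using dotProduct_star_self_nonneg (v a)
      linarith
    · have h8 : (v a ⬝ᵥ u) * (v a ⬝ᵥ u * c) ≤ (v a ⬝ᵥ u) * A := by
        calc (v a ⬝ᵥ u) * (v a ⬝ᵥ u * c) = (v a ⬝ᵥ u) ^ 2 * c := by ring
          _ ≤ (v a ⬝ᵥ v a) * (u ⬝ᵥ u) * c := by gcongr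
          _ ≤ A * (u ⬝ᵥ u) * c := by gcongr
          _ = A * (c * (u ⬝ᵥ u)) := by ring
          _ ≤ A * (v a ⬝ᵥ u) := by
            have : 0 ≤ v a ⬝ᵥ v a := by simpa using dotProduct_star_self_nonneg (v a)
            have : 0 ≤ A := this.trans h6
            gcongr
          _ = (v a ⬝ᵥ u) * A := by ring
      exact le_of_mul_le_mul_left h8 h7
  rw [pencil_bump, h1]
  nlinarith

end

/-! ### Rounding with a two-sided matrix bound -/

section
variable {ι ν : Type*} [Fintype ι] [DecidableEq ι] [Fintype ν] [DecidableEq ν]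

/-- Barrier and derandomization combined, with barrier height `φ = 2 A / b` and slack `d i = 2 φ xᵢ`. -/
lemma exists_det_pos (v : ι → ν → ℝ) {x : ι → ℝ} (hx : ∀ i, 0 ≤ x i ∧ x i ≤ 1) {A Λ b : ℝ}
    (hb : 0 < b) (hA : 0 ≤ A) (hv : ∀ i, v i ⬝ᵥ v i ≤ A)
    (hΛ : ∀ u : ν → ℝ, ∑ i, x i * (v i ⬝ᵥ u) ^ 2 ≤ Λ * (u ⬝ᵥ u)) (hAΛ : 8 * A * Λ ≤ b ^ 2) :
    ∃ z : ι → ℝ, (∀ i, z i = 0 ∨ z i = 1) ∧ ∀ Y, b ≤ Y →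
      0 < (pencil v Y (fun i => x i - z i)).det * (pencil v Y (fun i => z i - x i)).det := by
  -- The slack uses up at most half of `b`, so that all matrices stay above `(b / 2) I`.
  set φ := A / (b / 2) with hφdef
  have hφ : 0 ≤ φ := by positivity
  have hφΛ : 2 * φ * Λ ≤ b / 2 := by
    have : 2 * φ * Λ = 4 * A * Λ / b := by rw [hφdef]; field_simp; ring
    rw [this, div_le_iff₀ hb]
    nlinarith
  have hquad : ∀ Y, b ≤ Y → ∀ t : ι → ℝ, (∀ i, -(2 * φ * x i) ≤ t i) → ∀ u : ν → ℝ,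
      b / 2 * (u ⬝ᵥ u) ≤ u ⬝ᵥ (pencil v Y t *ᵥ u) := by
    intro Y hY t ht u
    rw [dotProduct_pencil_mulVec]
    have h5 : 0 ≤ u ⬝ᵥ u := by simpa using dotProduct_star_self_nonneg u
    have h1 : -(2 * φ) * ∑ i, x i * (v i ⬝ᵥ u) ^ 2
        ≤ ∑ i, t i * ((u ⬝ᵥ v i) * (v i ⬝ᵥ u)) := by
      rw [Finset.mul_sum]
      refine Finset.sum_le_sum fun i _ => ?_
      rw [dotProduct_comm u (v i)]
      nlinarith [mul_le_mul_of_nonneg_right (ht i) (sq_nonneg (v i ⬝ᵥ u))]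
    have h2 := mul_le_mul_of_nonneg_left (hΛ u) (by positivity : 0 ≤ 2 * φ)
    have h3 := mul_le_mul_of_nonneg_right hφΛ h5
    have h4 := mul_le_mul_of_nonneg_right hY h5
    nlinarith
  have hpos : ∀ Y, b ≤ Y → 0 < re (listAvg Finset.univ.toList x (pairDet v)) Y 0 := by
    intro Y hY
    refine ((pairDet_good v).barrier hx (d := fun i => 2 * φ * x i) hφ ?_ ?_
      Finset.univ.toList (Finset.nodup_toList _) 0 ?_).1
    · intro i
      have := hx i
      have h1 : x i * (1 - x i) ≤ x i := by nlinarith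
      exact mul_le_mul_of_nonneg_left h1 (by positivity)
    · intro w hw
      obtain ⟨p1, q1⟩ := pencil_barrier v (half_pos hb) hv
        (hquad Y hY (w ∘ Sum.inl) fun i => hw (Sum.inl i))
      obtain ⟨p2, q2⟩ := pencil_barrier v (half_pos hb) hv
        (hquad Y hY (w ∘ Sum.inr) fun i => hw (Sum.inr i))
      simp only [re_pairDet]
      refine ⟨mul_pos p1 p2, fun a => ?_⟩
      rcases a with a | a
      · rw [bump_inl_inl, bump_inl_inr, ← sub_mul, ← mul_assoc]
        exact mul_le_mul_of_nonneg_right (q1 a) p2.le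
      · rw [bump_inr_inl, bump_inr_inr, ← mul_sub, mul_left_comm]
        exact mul_le_mul_of_nonneg_left (q2 a) p1.le
    · intro a
      simp
  obtain ⟨z, hz, h⟩ := (pairDet_good v).exists_round hx _ (Finset.nodup_toList _) 0 hpos
  refine ⟨z, hz, fun Y hY => ?_⟩
  have := h Y hY
  rw [re_pairDet] at this
  simpa [Function.comp_def] using this

/-- A negative eigenvalue `μ` at `b` would give a zero of the determinant at `b - μ > b`. -/
lemma pencil_posSemidef (v : ι → ν → ℝ) (t : ι → ℝ) {b : ℝ}
    (h : ∀ Y, b ≤ Y → (pencil v Y t).det ≠ 0) : (pencil v b t).PosSemidef := by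
  have hH := pencil_isHermitian v b t
  rw [hH.posSemidef_iff_eigenvalues_nonneg]
  intro i
  by_contra hneg
  have hneg : hH.eigenvalues i < 0 := by simpa using hneg
  refine h (b - hH.eigenvalues i) (by linarith)
    (exists_mulVec_eq_zero_iff.mp ⟨⇑(hH.eigenvectorBasis i), ?_, ?_⟩)
  · intro h0
    have h1 := hH.eigenvectorBasis.orthonormal.ne_zero i
    exact h1 (by ext j; exact congrFun h0 j)
  · have h1 := hH.mulVec_eigenvectorBasis i
    have h2 : pencil v (b - hH.eigenvalues i) t
        = pencil v b t - hH.eigenvalues i • (1 : Matrix ν ν ℝ) := by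
      simp only [pencil, sub_smul]; abel
    rw [h2, sub_mulVec, smul_mulVec, one_mulVec, h1, sub_self]

lemma exists_round_posSemidef (v : ι → ν → ℝ) {x : ι → ℝ} (hx : ∀ i, 0 ≤ x i ∧ x i ≤ 1)
    {A Λ b : ℝ} (hb : 0 < b) (hA : 0 ≤ A) (hv : ∀ i, v i ⬝ᵥ v i ≤ A)
    (hΛ : ∀ u : ν → ℝ, ∑ i, x i * (v i ⬝ᵥ u) ^ 2 ≤ Λ * (u ⬝ᵥ u)) (hAΛ : 8 * A * Λ ≤ b ^ 2) :
    ∃ z : ι → ℝ, (∀ i, z i = 0 ∨ z i = 1) ∧ (pencil v b (fun i => x i - z i)).PosSemidef ∧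
      (pencil v b (fun i => z i - x i)).PosSemidef := by
  obtain ⟨z, hz, h⟩ := exists_det_pos v hx hb hA hv hΛ hAΛ
  exact ⟨z, hz, pencil_posSemidef v _ fun Y hY => left_ne_zero_of_mul (h Y hY).ne',
    pencil_posSemidef v _ fun Y hY => right_ne_zero_of_mul (h Y hY).ne'⟩

end

end SpectralRounding

/-- **Two-sided spectral rounding with a linear constraint, general scaling.**
If `‖∑ xᵢ vᵢ vᵢᵀ‖_op ≤ λ`, `‖vᵢ‖ ≤ l` for all `i`, `c_∞ ≤ l² ⟨c, x⟩ / λ`, and `l ≤ √λ`,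
then there is `z ∈ {0,1}^m` with `‖∑ xᵢ vᵢ vᵢᵀ - ∑ zᵢ vᵢ vᵢᵀ‖_op ≤ 8 l √λ` and
`|⟨c, x⟩ - ⟨c, z⟩| ≤ (8 l / √λ) ⟨c, x⟩`. -/
theorem two_sided_spectral_rounding_general {n m : ℕ} (v : Fin m → Fin n → ℝ)
    (x c : Fin m → ℝ) (lam l : ℝ)
    (hx : ∀ i, 0 ≤ x i ∧ x i ≤ 1)
    (hc : ∀ i, 0 ≤ c i)
    (hlam : 0 < lam) (hl : 0 < l)
    (hop : OpNormLE (∑ i, x i • vecMulVec (v i) (v i)) lam)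
    (hv : ∀ i, Real.sqrt (∑ j, v i j ^ 2) ≤ l)
    (hcinf : ∀ i, c i ≤ l^2 * (∑ j, c j * x j) / lam)
    (hllam : l ≤ Real.sqrt lam) :
    ∃ z : Fin m → ℝ, (∀ i, z i = 0 ∨ z i = 1) ∧
      OpNormLE ((∑ i, x i • vecMulVec (v i) (v i)) - ∑ i, z i • vecMulVec (v i) (v i))
        (8 * l * Real.sqrt lam) ∧
      |(∑ i, c i * x i) - ∑ i, c i * z i| ≤ (8 * l / Real.sqrt lam) * ∑ i, c i * x i := by
  set T := ∑ j, c j * x j with hT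
  have hT0 : 0 ≤ T := Finset.sum_nonneg fun j _ => mul_nonneg (hc j) (hx j).1
  -- `k` is the factor turning the cost into an extra squared coordinate; `T = 0` forces `c = 0`
  set k := lam / T with hk
  have hk0 : 0 ≤ k := by positivity
  have hkc0 : ∀ i, 0 ≤ c i * k := fun i => mul_nonneg (hc i) hk0
  have hkc : ∀ i, c i * k ≤ l ^ 2 := by
    intro i
    rcases hT0.eq_or_lt with h0 | hpos
    · rw [hk, ← h0]; simp; positivity
    · have := hcinf i
      rw [le_div_iff₀ hlam] at this
      rw [hk, mul_div_assoc', div_le_iff₀ hpos]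
      exact this
  have hkT : T * k ≤ lam := by
    rcases hT0.eq_or_lt with h0 | hpos
    · rw [← h0]; simp; positivity
    · rw [hk]; field_simp; rfl
  set s := Real.sqrt lam with hs
  have hs2 : s ^ 2 = lam := Real.sq_sqrt hlam.le
  have hs0 : 0 < s := Real.sqrt_pos.mpr hlam
  let V : Fin m → (Fin n ⊕ Unit) → ℝ := fun i => Sum.elim (v i) (fun _ => Real.sqrt (c i * k))
  have hVsq : ∀ i, Real.sqrt (c i * k) * Real.sqrt (c i * k) = c i * k := fun i =>
    Real.mul_self_sqrt (hkc0 i)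
  have hV : ∀ i, V i ⬝ᵥ V i ≤ 2 * l ^ 2 := by
    intro i
    have h1 : ∑ j, v i j ^ 2 ≤ l ^ 2 := (Real.sqrt_le_left hl.le).mp (hv i)
    have h2 := hkc i
    have h3 : V i ⬝ᵥ V i = ∑ j, v i j ^ 2 + c i * k := by
      simp [V, dotProduct, hVsq, pow_two]
    linarith
  have hVΛ : ∀ u, ∑ i, x i * (V i ⬝ᵥ u) ^ 2 ≤ 2 * lam * (u ⬝ᵥ u) := by
    intro u
    have h1 := hop.1.dotProduct_mulVec_nonneg (u ∘ Sum.inl)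
    have h2 : star (u ∘ Sum.inl) ⬝ᵥ ((lam • 1 - ∑ i, x i • vecMulVec (v i) (v i)) *ᵥ (u ∘ Sum.inl))
        = lam * ((u ∘ Sum.inl) ⬝ᵥ (u ∘ Sum.inl)) - ∑ i, x i * (v i ⬝ᵥ (u ∘ Sum.inl)) ^ 2 := by
      have e : lam • (1 : Matrix (Fin n) (Fin n) ℝ) - ∑ i, x i • vecMulVec (v i) (v i)
          = SpectralRounding.pencil v lam (fun i => -x i) := by simp [SpectralRounding.pencil, sub_eq_add_neg]
      rw [e, star_trivial, SpectralRounding.dotProduct_pencil_mulVec, sub_eq_add_neg, ← Finset.sum_neg_distrib]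
      congr 1
      refine Finset.sum_congr rfl fun i _ => ?_
      rw [dotProduct_comm _ (v i)]; ring
    rw [h2] at h1
    have h3 : u ⬝ᵥ u = (u ∘ Sum.inl) ⬝ᵥ (u ∘ Sum.inl) + u (Sum.inr ()) ^ 2 := by
      simp [dotProduct, pow_two]
    have h4 : ∀ i, V i ⬝ᵥ u = v i ⬝ᵥ (u ∘ Sum.inl) + Real.sqrt (c i * k) * u (Sum.inr ()) := by
      intro i; simp [V, dotProduct]
    have h5 : ∑ i, x i * (V i ⬝ᵥ u) ^ 2 ≤ ∑ i, (2 * (x i * (v i ⬝ᵥ (u ∘ Sum.inl)) ^ 2)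
        + 2 * (c i * x i * (k * u (Sum.inr ()) ^ 2))) := by
      refine Finset.sum_le_sum fun i _ => ?_
      rw [h4]
      have e : 2 * (x i * (v i ⬝ᵥ (u ∘ Sum.inl)) ^ 2) + 2 * (c i * x i * (k * u (Sum.inr ()) ^ 2))
          = x i * (2 * (v i ⬝ᵥ (u ∘ Sum.inl)) ^ 2
            + 2 * (Real.sqrt (c i * k) * u (Sum.inr ())) ^ 2) := by
        rw [mul_pow, pow_two (Real.sqrt _), hVsq]; ring
      rw [e]
      refine mul_le_mul_of_nonneg_left ?_ (hx i).1
      nlinarith [sq_nonneg (v i ⬝ᵥ (u ∘ Sum.inl) - Real.sqrt (c i * k) * u (Sum.inr ()))]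
    rw [Finset.sum_add_distrib, ← Finset.mul_sum, ← Finset.mul_sum, ← Finset.sum_mul, ← hT] at h5
    have h6 := mul_le_mul_of_nonneg_right hkT (sq_nonneg (u (Sum.inr ())))
    rw [h3]
    nlinarith
  have hb : 8 * (2 * l ^ 2) * (2 * lam) ≤ (8 * l * s) ^ 2 := by
    have : (8 * l * s) ^ 2 = 64 * l ^ 2 * lam := by rw [← hs2]; ring
    rw [this]
    nlinarith [mul_pos (pow_pos hl 2) hlam]
  obtain ⟨z, hz, hp, hq⟩ := SpectralRounding.exists_round_posSemidef V hx
    (by positivity : 0 < 8 * l * s) (by positivity) hV hVΛ hb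
  refine ⟨z, hz, ⟨?_, ?_⟩, ?_⟩
  · convert hq.submatrix Sum.inl using 1
    ext i j
    simp [SpectralRounding.pencil, V, Matrix.sum_apply, vecMulVec_apply, Matrix.one_apply, sub_mul]
    ring
  · convert hp.submatrix Sum.inl using 1
    ext i j
    simp [SpectralRounding.pencil, V, Matrix.sum_apply, vecMulVec_apply, Matrix.one_apply, sub_mul]
    ring
  · have h1 := hp.diag_nonneg (i := Sum.inr ())
    have h2 := hq.diag_nonneg (i := Sum.inr ())
    simp only [SpectralRounding.pencil, V, Matrix.add_apply, Matrix.smul_apply, Matrix.one_apply_eq, smul_eq_mul,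
      mul_one, Matrix.sum_apply, vecMulVec_apply, Sum.elim_inr, hVsq] at h1 h2
    have h3 : ∑ i, (x i - z i) * (c i * k) = (T - ∑ i, c i * z i) * k := by
      rw [hT, ← Finset.sum_sub_distrib, Finset.sum_mul]
      exact Finset.sum_congr rfl fun i _ => by ring
    have h4 : ∑ i, (z i - x i) * (c i * k) = -((T - ∑ i, c i * z i) * k) := by
      rw [← h3, ← Finset.sum_neg_distrib]
      exact Finset.sum_congr rfl fun i _ => by ring
    rw [h3] at h1
    rw [h4] at h2
    rcases hT0.eq_or_lt with h0 | hpos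
    · have hc0 : ∀ i, c i = 0 := fun i => le_antisymm (by simpa [← h0] using hcinf i) (hc i)
      rw [← h0]; simp [hc0]
    · have habs : |T - ∑ i, c i * z i| * k ≤ 8 * l * s := by
        have e := abs_mul (T - ∑ i, c i * z i) k
        rw [abs_of_nonneg hk0] at e
        rw [← e, abs_le]
        constructor <;> linarith
      have hkpos : 0 < k := div_pos hlam hpos
      have e : 8 * l / s * T = 8 * l * s / k := by
        rw [hk, ← hs2]; field_simp
      rw [e, le_div_iff₀ hkpos]
      exact habs
end
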